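/- arXiv:math/0610820 — 2 statements merged into one kernel-verified Lean document; each statement's English description precedes it below -/
import Mathlib

section
/- If a compact topological space K admits a topological embedding into a surface F, then K admits a topological embedding into some compact surface (a compact topological 2-manifold without boundary). -/
open Topology

/-- A surface: a nonempty Hausdorff, second-countable space in which every point
has an open neighborhood homeomorphic to an open subset of ℝ². -/
def IsSurface (F : Type*) [TopologicalSpace F] : Prop :=
  Nonempty F ∧ T2Space F ∧ SecondCountableTopology F ∧
    ∀ x : F, ∃ (U : Set F) (V : Set (EuclideanSpace ℝ (Fin 2))),
      IsOpen U ∧ x ∈ U ∧ IsOpen V ∧ Nonempty (↥U ≃ₜ ↥V)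

/-!
A compact set `N` with locally flat frontier is enlarged, one chart at a time, until its interior
contains the image of `K`. Doubling `N` along its frontier then gives a compact surface
containing `K`.

Inside a chart, `N` is a closed planar set `A` with flat frontier, and it is enlarged to
`A ∪ {v ≤ 0}`, where `v < 0` on the disc to be engulfed and `v > 0` outside a larger disc. Off `A`
the new frontier is flat because `v` is `C²` with nonvanishing gradient on its zero set, which a
small perturbation in the style of Sard's theorem arranges. The delicate points are the finitely
many frontier points of `A` at which `{v = 0}` meets `A`. There the Riemann mapping theorem,
extended to the boundary by the length–area method (so without the Schoenflies theorem), gives a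
chart which flattens `A` and is conformal off `A`; with `±v` its real part, the curve `{v = 0}`
meets the frontier of `A` in a corner, which topologically is a half-plane again.

The double of `N` is realized as `{(y, t) | |t| = g y} ⊆ N × ℝ`, for a continuous `g ≥ 0`
vanishing exactly on the frontier.
-/

open Set Filter Metric Complex ComplexConjugate MeasureTheory

/-! ### Univalent functions and the Riemann mapping theorem -/

section Univalent

variable {U : Set ℂ} {f g : ℂ → ℂ} {a b w z z₀ : ℂ}

theorem nhds_le_map_nhds_of_injOn (hU : IsOpen U) (hf : DifferentiableOn ℂ f U)
    (hinj : InjOn f U) (hz : z ∈ U) : 𝓝 (f z) ≤ map f (𝓝 z) := by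
  refine (hf.analyticOnNhd hU z hz).eventually_constant_or_nhds_le_map_nhds.resolve_left
    fun hconst ↦ ?_
  have hne : ∃ᶠ y in 𝓝[≠] z, f y = f z ∧ y ∈ U :=
    ((hconst.and (hU.mem_nhds hz)).filter_mono nhdsWithin_le_nhds).frequently
  obtain ⟨y, ⟨hyz, hyU⟩, hy⟩ := (hne.and_eventually self_mem_nhdsWithin).exists
  exact hy (hinj hyU hz hyz)

theorem exists_openPartialHomeomorph_of_injOn (hU : IsOpen U) (hf : DifferentiableOn ℂ f U)
    (hinj : InjOn f U) :
    ∃ e : OpenPartialHomeomorph ℂ ℂ, e.source = U ∧ e.target = f '' U ∧ ⇑e = f := by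
  refine ⟨.ofContinuousOpenRestrict (hinj.toPartialEquiv f U) hf.continuousOn ?_ hU, rfl, rfl, rfl⟩
  refine IsOpenMap.of_nhds_le fun ⟨z, hz⟩ ↦ ?_
  refine (nhds_le_map_nhds_of_injOn hU hf hinj hz).trans_eq ?_
  rw [← map_nhds_subtype_coe_eq_nhds hz (hU.mem_nhds hz), map_map]
  rfl

theorem differentiableOn_symm_of_differentiableOn (e : OpenPartialHomeomorph ℂ ℂ)
    (he : DifferentiableOn ℂ e e.source) : DifferentiableOn ℂ e.symm e.target := by
  intro w hw
  have hsource := e.map_target hw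
  have hcont : ContinuousAt e.symm w := e.continuousAt_symm hw
  have hdiff : ∀ y ∈ e.target, deriv e (e.symm y) ≠ 0 → DifferentiableAt ℂ e.symm y :=
    fun y hy hne ↦ (e.hasDerivAt_symm hy hne
      (he.differentiableAt (e.open_source.mem_nhds (e.map_target hy))).hasDerivAt).differentiableAt
  have hne : ∀ᶠ z in 𝓝[≠] e.symm w, deriv e z ≠ 0 := by
    refine (he.analyticOnNhd e.open_source _ hsource).deriv.eventually_eq_zero_or_eventually_ne_zero
      |>.resolve_left fun hzero ↦ ?_
    obtain ⟨r, hr, hball⟩ := Metric.eventually_nhds_iff_ball.1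
      (hzero.and (e.open_source.mem_nhds hsource))
    have hconst : ∀ᶠ z in 𝓝 (e.symm w), e z = e (e.symm w) := by
      filter_upwards [ball_mem_nhds _ hr] with z hz
      exact isOpen_ball.is_const_of_deriv_eq_zero (convex_ball _ r).isPreconnected
        (he.mono fun y hy ↦ (hball y hy).2) (fun y hy ↦ (hball y hy).1) hz (mem_ball_self hr)
    have := ((hconst.and (e.open_source.mem_nhds hsource)).filter_mono
      (nhdsWithin_le_nhds (s := {e.symm w}ᶜ))).and self_mem_nhdsWithin
    obtain ⟨z, ⟨hz, hzs⟩, hne⟩ := this.exists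
    exact hne (e.injOn hzs hsource hz)
  have hnhds : ∀ᶠ y in 𝓝 w, y ∈ e.target ∧ (y ≠ w → deriv e (e.symm y) ≠ 0) := by
    filter_upwards [e.open_target.mem_nhds hw,
      hcont.eventually (eventually_nhdsWithin_iff.1 hne)] with y hy hyne
    exact ⟨hy, fun h ↦ hyne fun heq ↦ h (e.symm.injOn hy hw heq)⟩
  refine ((Complex.differentiableOn_compl_singleton_and_continuousAt_iff hnhds).1
    ⟨?_, hcont⟩ |>.differentiableAt hnhds).differentiableWithinAt
  exact fun y ⟨⟨hy, hyne⟩, hyw⟩ ↦ (hdiff y hy (hyne hyw)).differentiableWithinAt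

theorem deriv_ne_zero_of_injOn (hU : IsOpen U) (hf : DifferentiableOn ℂ f U) (hinj : InjOn f U)
    (hz : z ∈ U) : deriv f z ≠ 0 := by
  obtain ⟨e, rfl, -, rfl⟩ := exists_openPartialHomeomorph_of_injOn hU hf hinj
  have hsymm : DifferentiableAt ℂ e.symm (e z) :=
    (differentiableOn_symm_of_differentiableOn e hf).differentiableAt
      (e.open_target.mem_nhds (e.map_source hz))
  have hcomp := hsymm.hasDerivAt.comp z (hf.differentiableAt (e.open_source.mem_nhds hz)).hasDerivAt
  have hid : e.symm ∘ e =ᶠ[𝓝 z] id := e.eventually_left_inverse hz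
  exact right_ne_zero_of_mul_eq_one
    ((hcomp.congr_of_eventuallyEq hid.symm).unique (hasDerivAt_id z))

theorem exists_tendstoLocallyUniformlyOn_of_norm_le {ι : Type*} (l : Ultrafilter ι)
    {F : ι → ℂ → ℂ} {C : ℝ} (hU : IsOpen U) (hd : ∀ i, DifferentiableOn ℂ (F i) U)
    (hb : ∀ i, ∀ z ∈ U, ‖F i z‖ ≤ C) : ∃ g : ℂ → ℂ, TendstoLocallyUniformlyOn F g l U := by
  have hlim : ∀ z, ∃ w, z ∈ U → Tendsto (F · z) l (𝓝 w) := by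
    intro z
    by_cases hz : z ∈ U
    · obtain ⟨w, -, hw⟩ := (isCompact_closedBall (0 : ℂ) C).ultrafilter_le_nhds (l.map (F · z))
        (le_principal_iff.2 (mem_map.2 (univ_mem' fun i ↦ by simpa using hb i z hz)))
      exact ⟨w, fun _ ↦ hw⟩
    · exact ⟨0, fun h ↦ absurd h hz⟩
  choose g hg using hlim
  have hequi : ∀ z ∈ U, EquicontinuousAt F z := by
    intro z hz
    obtain ⟨r, hr, hrU⟩ := Metric.isOpen_iff.1 hU z hz
    refine Metric.equicontinuousAt_of_continuity_modulus (fun y ↦ (C + C) / r * dist y z)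
      ?_ F ?_
    · have : Continuous fun y ↦ (C + C) / r * dist y z := by fun_prop
      simpa using this.tendsto z
    · filter_upwards [ball_mem_nhds z hr] with y hy i
      rw [dist_comm]
      refine Complex.dist_le_div_mul_dist_of_mapsTo_ball ((hd i).mono hrU) (fun x hx ↦ ?_) hy
      rw [mem_closedBall, dist_eq_norm]
      exact (norm_sub_le _ _).trans (add_le_add (hb i x (hrU hx)) (hb i z hz))
  refine ⟨g, (tendstoLocallyUniformlyOn_iff_forall_isCompact hU).2 fun K hKU hK ↦ ?_⟩
  have hK𝔖 : ∀ S ∈ ({K} : Set (Set ℂ)), IsCompact S := by simpa using hK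
  have hequiK : ∀ S ∈ ({K} : Set (Set ℂ)), EquicontinuousOn F S := by
    rintro S rfl z hz
    exact (hequi z (hKU hz)).equicontinuousWithinAt S
  refine UniformOnFun.tendsto_iff_tendstoUniformlyOn.1
    ((EquicontinuousOn.tendsto_uniformOnFun_iff_pi' hK𝔖 hequiK l g).2 ?_) K rfl
  refine tendsto_pi_nhds.2 fun ⟨z, hz⟩ ↦ hg z (hKU ?_)
  simpa using hz

theorem hurwitz_forall_ne_zero {ι : Type*} {l : Filter ι} [NeBot l] {F : ι → ℂ → ℂ}
    (hU : IsOpen U) (hF : TendstoLocallyUniformlyOn F g l U)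
    (hd : ∀ i, DifferentiableOn ℂ (F i) U) (hne : ∀ i, ∀ z ∈ U, F i z ≠ 0) (hb : b ∈ U)
    (hg : ∀ᶠ z in 𝓝[≠] b, g z ≠ 0) : g b ≠ 0 := by
  obtain ⟨R, hR, hRU⟩ := Metric.eventually_nhds_iff_ball.1
    ((hU.eventually_mem hb).and (eventually_nhdsWithin_iff.1 hg))
  obtain ⟨r, hr, hrR⟩ := exists_between hR
  have hsub : closedBall b r ⊆ U := fun z hz ↦ (hRU z (closedBall_subset_ball hrR hz)).1
  have hsphere : sphere b r ⊆ U := sphere_subset_closedBall.trans hsub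
  have hgc : ContinuousOn g U :=
    hF.continuousOn (Frequently.of_forall fun i ↦ (hd i).continuousOn)
  have hpos : ∀ z ∈ sphere b r, 0 < ‖g z‖ := fun z hz ↦ norm_pos_iff.2 <|
    (hRU z (closedBall_subset_ball hrR (sphere_subset_closedBall hz))).2
      (ne_of_mem_sphere hz hr.ne')
  obtain ⟨m, hm, hmg⟩ := (isCompact_sphere b r).exists_forall_le' (hgc.mono hsphere).norm hpos
  have hunif := Metric.tendstoUniformlyOn_iff.1
    ((tendstoLocallyUniformlyOn_iff_forall_isCompact hU).1 hF _ hsphere (isCompact_sphere b r))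
    (m / 2) (half_pos hm)
  -- On the sphere `‖F i‖ ≥ m / 2`, so the maximum principle applies to `1 / F i`.
  have hlower : ∀ᶠ i in l, m / 2 ≤ ‖F i b‖ := by
    filter_upwards [hunif] with i hi
    have hmax := Complex.norm_le_of_forall_mem_frontier_norm_le (f := fun z ↦ (F i z)⁻¹)
      (U := ball b r) isBounded_ball (C := (m / 2)⁻¹) ?_ ?_ (subset_closure (mem_ball_self hr))
    · rw [norm_inv] at hmax
      exact (inv_le_inv₀ (norm_pos_iff.2 (hne i b hb)) (half_pos hm)).1 hmax
    · refine DifferentiableOn.diffContOnCl ?_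
      rw [closure_ball b hr.ne']
      exact ((hd i).mono hsub).inv fun z hz ↦ hne i z (hsub hz)
    · intro z hz
      rw [frontier_ball b hr.ne'] at hz
      rw [norm_inv]
      refine inv_anti₀ (half_pos hm) ?_
      have := (norm_sub_norm_le (g z) (F i z)).trans_lt ((dist_eq_norm _ _).symm.trans_lt (hi z hz))
      linarith [hmg z hz]
  exact norm_pos_iff.1 ((half_pos hm).trans_le (ge_of_tendsto (hF.tendsto_at hb).norm hlower))

theorem hurwitz_injOn {ι : Type*} {l : Filter ι} [NeBot l] {F : ι → ℂ → ℂ}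
    (hU : IsOpen U) (hc : IsPreconnected U) (hF : TendstoLocallyUniformlyOn F g l U)
    (hd : ∀ i, DifferentiableOn ℂ (F i) U) (hinj : ∀ i, InjOn (F i) U)
    (hg : ∃ z ∈ U, deriv g z ≠ 0) : InjOn g U := by
  intro a ha b hb hab
  by_contra hne
  have hgd : AnalyticOnNhd ℂ (fun z ↦ g z - g a) U :=
    ((hF.differentiableOn (.of_forall hd) hU).sub_const (g a)).analyticOnNhd hU
  rcases (hgd b hb).eventually_eq_zero_or_eventually_ne_zero with hzero | hnonzero
  · obtain ⟨z, hz, hgz⟩ := hg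
    have heq := hgd.eqOn_zero_of_preconnected_of_eventuallyEq_zero hc hb hzero
    have : (fun z ↦ g z - g a) =ᶠ[𝓝 z] 0 := heq.eventuallyEq_of_mem (hU.mem_nhds hz)
    exact hgz (by simpa using this.deriv_eq)
  · have hV : IsOpen (U \ {a}) := hU.sdiff isClosed_singleton
    have hFa : TendstoLocallyUniformlyOn (fun i z ↦ F i z - F i a) (fun z ↦ g z - g a) l
        (U \ {a}) :=
      (hF.mono sdiff_subset).sub
        ((hF.tendsto_at ha).tendstoUniformlyOn_const _).tendstoLocallyUniformlyOn
    refine hurwitz_forall_ne_zero hV hFa (fun i ↦ ((hd i).mono sdiff_subset).sub_const _)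
      (fun i z hz h ↦ hz.2 (hinj i hz.1 ha (sub_eq_zero.1 h))) ⟨hb, Ne.symm hne⟩ hnonzero ?_
    rw [hab, sub_self]

/-- The automorphism `z ↦ (z - a) / (1 - ā z)` of the unit disc, which sends `a` to `0`. -/
noncomputable def mobius (a z : ℂ) : ℂ := (z - a) / (1 - conj a * z)

theorem one_sub_conj_mul_ne_zero (ha : ‖a‖ < 1) (hz : ‖z‖ < 1) : 1 - conj a * z ≠ 0 := by
  intro h
  have hone : ‖conj a * z‖ = 1 := by rw [← sub_eq_zero.1 h, norm_one]
  rw [norm_mul, RCLike.norm_conj] at hone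
  nlinarith [norm_nonneg a, norm_nonneg z]

theorem norm_mobius_lt_one (ha : ‖a‖ < 1) (hz : ‖z‖ < 1) : ‖mobius a z‖ < 1 := by
  rw [mobius, norm_div, div_lt_one (norm_pos_iff.2 (one_sub_conj_mul_ne_zero ha hz))]
  have hsq : ‖1 - conj a * z‖ ^ 2 - ‖z - a‖ ^ 2 = (1 - ‖a‖ ^ 2) * (1 - ‖z‖ ^ 2) := by
    simp only [← normSq_eq_norm_sq, normSq_apply, sub_re, sub_im, mul_re, mul_im, conj_re,
      conj_im, one_re, one_im]
    ring
  have ha2 : ‖a‖ ^ 2 < 1 := by nlinarith [norm_nonneg a]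
  have hz2 : ‖z‖ ^ 2 < 1 := by nlinarith [norm_nonneg z]
  refine lt_of_pow_lt_pow_left₀ 2 (norm_nonneg _) ?_
  nlinarith [mul_pos (sub_pos.2 ha2) (sub_pos.2 hz2)]

theorem mobius_neg_mobius (ha : ‖a‖ < 1) (hz : ‖z‖ < 1) : mobius (-a) (mobius a z) = z := by
  have hz0 := one_sub_conj_mul_ne_zero ha hz
  have ha0 := one_sub_conj_mul_ne_zero ha ha
  have hden : 1 - conj (-a) * mobius a z = (1 - conj a * a) / (1 - conj a * z) := by
    rw [mobius, map_neg, eq_div_iff hz0, sub_mul, mul_assoc, div_mul_cancel₀ _ hz0]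
    ring
  rw [mobius, hden, mobius, div_eq_iff (div_ne_zero ha0 hz0), sub_neg_eq_add, mul_div_assoc',
    eq_div_iff hz0, add_mul, div_mul_cancel₀ _ hz0]
  ring

theorem hasDerivAt_mobius (ha : ‖a‖ < 1) (hz : ‖z‖ < 1) :
    HasDerivAt (mobius a) ((1 - conj a * a) / (1 - conj a * z) ^ 2) z := by
  refine (((hasDerivAt_id z).sub_const a).fun_div
    (((hasDerivAt_id z).const_mul (conj a)).const_sub 1)
    (one_sub_conj_mul_ne_zero ha hz)).congr_deriv ?_
  simp only [id]
  ring

theorem exists_differentiableOn_sq_eq (hU : IsOpen U) (hs : IsSimplyConnected U)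
    (hf : DifferentiableOn ℂ f U) (hne : ∀ z ∈ U, f z ≠ 0) :
    ∃ k : ℂ → ℂ, DifferentiableOn ℂ k U ∧ ∀ z, k z ^ 2 = f z := by
  obtain ⟨k, hkc, hk⟩ := exists_continuousOn_pow_eq hs hU hf.continuousOn
    (by rintro ⟨z, hz, h⟩; exact hne z hz h) two_ne_zero
  refine ⟨k, fun z hz ↦ DifferentiableAt.differentiableWithinAt ?_, hk⟩
  have hkz : (2 : ℂ) * k z ≠ 0 := mul_ne_zero two_ne_zero fun h ↦ hne z hz (by simp [← hk, h])
  exact (HasDerivAt.of_comp_left (f := (· ^ 2)) (hkc.continuousAt (hU.mem_nhds hz))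
    (by simpa using hasDerivAt_pow 2 (k z)) (hf.differentiableAt (hU.mem_nhds hz)).hasDerivAt hkz
    (.of_forall hk)).differentiableAt

/-- The univalent functions from `U` to the unit disc that vanish at `z₀`: the family whose
extremal member is the Riemann map. -/
def discEmbeddings (U : Set ℂ) (z₀ : ℂ) : Set (ℂ → ℂ) :=
  {f | DifferentiableOn ℂ f U ∧ InjOn f U ∧ MapsTo f U (ball 0 1) ∧ f z₀ = 0}

theorem mobius_comp_mem_discEmbeddings (hz₀ : z₀ ∈ U) (hU : IsOpen U)
    (hf : DifferentiableOn ℂ f U) (hinj : InjOn f U) (hmaps : MapsTo f U (ball 0 1)) :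
    mobius (f z₀) ∘ f ∈ discEmbeddings U z₀ := by
  have hlt : ∀ z ∈ U, ‖f z‖ < 1 := fun z hz ↦ mem_ball_zero_iff.1 (hmaps hz)
  refine ⟨fun z hz ↦ ?_, fun x hx y hy hxy ↦ hinj hx hy ?_, fun z hz ↦ ?_, by simp [mobius]⟩
  · exact ((hasDerivAt_mobius (hlt _ hz₀) (hlt z hz)).differentiableAt.comp z
      (hf.differentiableAt (hU.mem_nhds hz))).differentiableWithinAt
  · rw [← mobius_neg_mobius (hlt _ hz₀) (hlt x hx), ← mobius_neg_mobius (hlt _ hz₀) (hlt y hy)]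
    exact congrArg _ hxy
  · exact mem_ball_zero_iff.2 (norm_mobius_lt_one (hlt _ hz₀) (hlt z hz))

theorem discEmbeddings_nonempty (hU : IsOpen U) (hs : IsSimplyConnected U) (hne : U ≠ univ)
    (hz₀ : z₀ ∈ U) : (discEmbeddings U z₀).Nonempty := by
  obtain ⟨a, ha⟩ := (ne_univ_iff_exists_notMem U).1 hne
  have hsub : ∀ z ∈ U, z - a ≠ 0 := fun z hz h ↦ ha (sub_eq_zero.1 h ▸ hz)
  obtain ⟨k, hkd, hk⟩ := exists_differentiableOn_sq_eq hU hs (f := (· - a)) (by fun_prop) hsub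
  have hk_eq : ∀ x y, k x ^ 2 = k y ^ 2 → x = y := fun x y h ↦ by simpa [hk] using h
  have himage : k '' U ∈ 𝓝 (k z₀) := nhds_le_map_nhds_of_injOn hU hkd
    (fun x _ y _ h ↦ hk_eq x y (by rw [h])) hz₀ (image_mem_map (hU.mem_nhds hz₀))
  obtain ⟨r, hr, hball⟩ := Metric.mem_nhds_iff.1 himage
  -- `k '' U` contains the ball around `k z₀`, hence misses the ball around `-k z₀`.
  have hfar : ∀ z ∈ U, r < 2 * ‖k z + k z₀‖ := by
    intro z hz
    by_contra! hle
    obtain ⟨y, hy, hyz⟩ := hball (show -k z ∈ ball (k z₀) r by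
      rw [mem_ball, dist_eq_norm, ← norm_neg]; ring_nf; linarith)
    obtain rfl : y = z := hk_eq _ _ (by rw [hyz, neg_sq])
    exact hsub y hy (by rw [← hk, CharZero.eq_neg_self_iff.1 hyz, zero_pow two_ne_zero])
  have hne0 : ∀ z ∈ U, k z + k z₀ ≠ 0 := fun z hz h ↦ by
    have := hfar z hz
    rw [h, norm_zero] at this
    linarith
  refine ⟨_, mobius_comp_mem_discEmbeddings (f := fun z ↦ (r / 2 : ℝ) / (k z + k z₀)) hz₀ hU
    ((differentiableOn_const _).div (hkd.add_const _) hne0) (fun x hx y hy hxy ↦ ?_)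
    fun z hz ↦ ?_⟩
  · have hr2 : ((r / 2 : ℝ) : ℂ) ≠ 0 := by exact_mod_cast (half_pos hr).ne'
    have hxy' := (div_eq_div_iff (hne0 x hx) (hne0 y hy)).1 hxy
    exact hk_eq x y (by rw [add_right_cancel (mul_left_cancel₀ hr2 hxy')])
  · rw [mem_ball_zero_iff, norm_div, norm_real, Real.norm_of_nonneg (half_pos hr).le,
      div_lt_one (norm_pos_iff.2 (hne0 z hz))]
    linarith [hfar z hz]

theorem exists_forall_norm_deriv_le (hU : IsOpen U) (hc : IsPreconnected U) (hz₀ : z₀ ∈ U)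
    (hne : (discEmbeddings U z₀).Nonempty) :
    ∃ g ∈ discEmbeddings U z₀, ∀ f ∈ discEmbeddings U z₀, ‖deriv f z₀‖ ≤ ‖deriv g z₀‖ := by
  obtain ⟨r, hr, hrU⟩ := Metric.isOpen_iff.1 hU z₀ hz₀
  have hbdd : BddAbove ((‖deriv · z₀‖) '' discEmbeddings U z₀) := by
    refine ⟨1 / r, ?_⟩
    rintro _ ⟨f, ⟨hfd, -, hfm, hf0⟩, rfl⟩
    refine norm_deriv_le_div_of_mapsTo_ball (hfd.mono hrU) (fun z hz ↦ ?_) hr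
    rw [hf0]
    exact ball_subset_closedBall (hfm (hrU hz))
  obtain ⟨u, -, hu, huF⟩ := exists_seq_tendsto_sSup (hne.image _) hbdd
  choose F hF hFu using huF
  obtain ⟨g, hg⟩ := exists_tendstoLocallyUniformlyOn_of_norm_le (hyperfilter ℕ) hU
    (fun n ↦ (hF n).1) (C := 1) fun n z hz ↦ (mem_ball_zero_iff.1 ((hF n).2.2.1 hz)).le
  have hgd : DifferentiableOn ℂ g U := hg.differentiableOn (.of_forall fun n ↦ (hF n).1) hU
  have hderiv : ‖deriv g z₀‖ = sSup ((‖deriv · z₀‖) '' discEmbeddings U z₀) :=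
    tendsto_nhds_unique ((hg.deriv (.of_forall fun n ↦ (hF n).1) hU).tendsto_at hz₀).norm
      ((hu.mono_left Nat.hyperfilter_le_atTop).congr fun n ↦ (hFu n).symm)
  have hle : ∀ f ∈ discEmbeddings U z₀, ‖deriv f z₀‖ ≤ ‖deriv g z₀‖ :=
    fun f hf ↦ hderiv ▸ le_csSup hbdd (mem_image_of_mem _ hf)
  have hderiv_ne : deriv g z₀ ≠ 0 := by
    obtain ⟨f, hf⟩ := hne
    exact norm_pos_iff.1
      ((norm_pos_iff.2 (deriv_ne_zero_of_injOn hU hf.1 hf.2.1 hz₀)).trans_le (hle f hf))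
  have hginj : InjOn g U :=
    hurwitz_injOn hU hc hg (fun n ↦ (hF n).1) (fun n ↦ (hF n).2.1) ⟨z₀, hz₀, hderiv_ne⟩
  refine ⟨g, ⟨hgd, hginj, fun z hz ↦ ?_, ?_⟩, hle⟩
  · have hclosed : MapsTo g U (closedBall 0 1) := fun y hy ↦ mem_closedBall_zero_iff.2 <|
      le_of_tendsto (hg.tendsto_at hy).norm
        (.of_forall fun n ↦ (mem_ball_zero_iff.1 ((hF n).2.2.1 hy)).le)
    rw [← interior_closedBall (0 : ℂ) one_ne_zero, mem_interior_iff_mem_nhds]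
    exact nhds_le_map_nhds_of_injOn hU hgd hginj hz
      (mem_of_superset (image_mem_map (hU.mem_nhds hz)) hclosed.image_subset)
  · exact tendsto_nhds_unique (hg.tendsto_at hz₀)
      (tendsto_const_nhds.congr fun n ↦ ((hF n).2.2.2).symm)

theorem hasDerivAt_mobius_sq_mobius_norm_lt_one {v : ℂ} (hv : ‖v‖ < 1) :
    ∃ d : ℂ, HasDerivAt (fun z ↦ mobius (v ^ 2) (mobius (-v) z ^ 2)) d 0 ∧ ‖d‖ < 1 := by
  have hv2 : ‖v ^ 2‖ < 1 := by rw [norm_pow]; exact pow_lt_one₀ (norm_nonneg v) hv two_ne_zero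
  have hconj : ∀ c : ℂ, 1 - conj c * c = ((1 - ‖c‖ ^ 2 : ℝ) : ℂ) := fun c ↦ by
    rw [conj_mul']; push_cast; ring
  have hzero : mobius (-v) 0 = v := by simp [mobius]
  have hinner := (hasDerivAt_mobius (by rwa [norm_neg]) (by simp) : HasDerivAt (mobius (-v)) _ 0)
  have houter := hasDerivAt_mobius hv2 (z := mobius (-v) 0 ^ 2) (by rwa [hzero])
  refine ⟨_, houter.comp (h := fun z ↦ mobius (-v) z ^ 2) 0 (hinner.fun_pow 2), ?_⟩
  have hpos : 0 < 1 - ‖v‖ ^ 2 := by nlinarith [norm_nonneg v]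
  have hpos' : 0 < 1 - (‖v‖ ^ 2) ^ 2 := by nlinarith [norm_nonneg v]
  have hfactor : 1 - (‖v‖ ^ 2) ^ 2 = (1 - ‖v‖ ^ 2) * (1 + ‖v‖ ^ 2) := by ring
  simp only [hzero, hconj, norm_mul, norm_div, norm_pow, norm_real, Real.norm_of_nonneg hpos.le,
    Real.norm_of_nonneg hpos'.le, norm_neg, mul_zero, sub_zero, one_pow, div_one,
    Nat.cast_ofNat, norm_ofNat, Nat.add_one_sub_one, pow_one]
  rw [show (1 - (‖v‖ ^ 2) ^ 2) / (1 - (‖v‖ ^ 2) ^ 2) ^ 2 * (2 * ‖v‖ * (1 - ‖v‖ ^ 2))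
      = 2 * ‖v‖ / (1 + ‖v‖ ^ 2) by rw [hfactor]; field_simp, div_lt_one (by positivity)]
  nlinarith [sq_pos_of_pos (sub_pos.2 hv)]

-- Koebe's trick: `g = φ ∘ F` with `φ` a two-to-one self-map of the disc, so that `‖φ'(0)‖ < 1`.
theorem exists_norm_deriv_lt_of_notMem_image (hU : IsOpen U) (hs : IsSimplyConnected U)
    (hz₀ : z₀ ∈ U) (hg : g ∈ discEmbeddings U z₀) (hw : ‖w‖ < 1) (hwg : w ∉ g '' U) :
    ∃ F ∈ discEmbeddings U z₀, ‖deriv g z₀‖ < ‖deriv F z₀‖ := by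
  obtain ⟨hgd, hginj, hgm, hg0⟩ := hg
  have hglt : ∀ z ∈ U, ‖g z‖ < 1 := fun z hz ↦ mem_ball_zero_iff.1 (hgm hz)
  obtain ⟨k, hkd, hk⟩ := exists_differentiableOn_sq_eq hU hs (f := mobius w ∘ g)
    (fun z hz ↦ ((hasDerivAt_mobius hw (hglt z hz)).differentiableAt.comp z
      (hgd.differentiableAt (hU.mem_nhds hz))).differentiableWithinAt)
    (fun z hz h ↦ hwg ⟨z, hz, sub_eq_zero.1 <| (div_eq_zero_iff.1 h).resolve_right
      (one_sub_conj_mul_ne_zero hw (hglt z hz))⟩)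
  have hklt : ∀ z ∈ U, ‖k z‖ < 1 := fun z hz ↦ by
    rw [← pow_lt_one_iff_of_nonneg (norm_nonneg _) two_ne_zero, ← norm_pow, hk]
    exact norm_mobius_lt_one hw (hglt z hz)
  have hkinj : InjOn k U := fun x hx y hy hxy ↦ hginj hx hy <| by
    rw [← mobius_neg_mobius hw (hglt x hx), ← mobius_neg_mobius hw (hglt y hy)]
    exact congrArg _ ((hk x).symm.trans (by rw [hxy, hk]; rfl))
  have hF := mobius_comp_mem_discEmbeddings hz₀ hU hkd hkinj
    fun z hz ↦ mem_ball_zero_iff.2 (hklt z hz)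
  have hF_deriv : HasDerivAt (mobius (k z₀) ∘ k) (deriv (mobius (k z₀) ∘ k) z₀) z₀ :=
    (hF.1.differentiableAt (hU.mem_nhds hz₀)).hasDerivAt
  obtain ⟨d, hd, hd1⟩ := hasDerivAt_mobius_sq_mobius_norm_lt_one (hklt z₀ hz₀)
  rw [← hF.2.2.2] at hd
  have hw_eq : k z₀ ^ 2 = -w := by rw [hk]; simp [mobius, hg0]
  rw [hw_eq] at hd
  have hcomp : (fun z ↦ mobius (-w) (mobius (-k z₀) z ^ 2)) ∘ (mobius (k z₀) ∘ k) =ᶠ[𝓝 z₀] g := by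
    filter_upwards [hU.mem_nhds hz₀] with z hz
    simp only [Function.comp_apply]
    rw [mobius_neg_mobius (hklt _ hz₀) (hklt z hz), hk]
    exact mobius_neg_mobius hw (hglt z hz)
  have hg_deriv : deriv g z₀ = d * deriv (mobius (k z₀) ∘ k) z₀ :=
    ((hd.comp z₀ hF_deriv).congr_of_eventuallyEq hcomp.symm).deriv
  refine ⟨_, hF, ?_⟩
  rw [hg_deriv, norm_mul]
  exact mul_lt_of_lt_one_left (norm_pos_iff.2 (deriv_ne_zero_of_injOn hU hF.1 hF.2.1 hz₀)) hd1

theorem riemann_mapping (hU : IsOpen U) (hs : IsSimplyConnected U) (hne : U ≠ univ) :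
    ∃ e : OpenPartialHomeomorph ℂ ℂ, e.source = U ∧ e.target = ball 0 1 ∧
      DifferentiableOn ℂ e U := by
  obtain ⟨z₀, hz₀⟩ := hs.isPathConnected.nonempty
  obtain ⟨g, hg, hmax⟩ := exists_forall_norm_deriv_le hU
    hs.isPathConnected.isConnected.isPreconnected hz₀ (discEmbeddings_nonempty hU hs hne hz₀)
  have hsurj : g '' U = ball 0 1 := hg.2.2.1.image_subset.antisymm fun w hw ↦ by
    by_contra hwg
    obtain ⟨F, hF, hlt⟩ := exists_norm_deriv_lt_of_notMem_image hU hs hz₀ hg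
      (mem_ball_zero_iff.1 hw) hwg
    exact hlt.not_ge (hmax F hF)
  obtain ⟨e, he, het, rfl⟩ := exists_openPartialHomeomorph_of_injOn hU hg.1 hg.2.1
  exact ⟨e, he, het.trans hsurj, hg.1⟩

end Univalent

/-! ### The length–area method -/

section LengthArea

variable {g : ℂ → ℂ} {a b r δ ε : ℝ} {ζ : ℂ}

theorem sq_intervalIntegral_le {f : ℝ → ℝ} (hab : a ≤ b) (hf : IntervalIntegrable f volume a b)
    (hf2 : IntervalIntegrable (fun θ ↦ f θ ^ 2) volume a b) :
    (∫ θ in a..b, f θ) ^ 2 ≤ (b - a) * ∫ θ in a..b, f θ ^ 2 := by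
  have hnonneg (m : ℝ) :
      0 ≤ (∫ θ in a..b, f θ ^ 2) - 2 * m * (∫ θ in a..b, f θ) + (b - a) * m ^ 2 :=
    calc 0 ≤ ∫ θ in a..b, (f θ - m) ^ 2 :=
          intervalIntegral.integral_nonneg hab fun _ _ ↦ sq_nonneg _
      _ = ∫ θ in a..b, (f θ ^ 2 - 2 * m * f θ + m ^ 2) := by
          congr with θ
          ring
      _ = _ := by
          rw [intervalIntegral.integral_add (hf2.sub (hf.const_mul _)) intervalIntegrable_const,
            intervalIntegral.integral_sub hf2 (hf.const_mul _),
            intervalIntegral.integral_const_mul, intervalIntegral.integral_const, smul_eq_mul]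
  rcases hab.eq_or_lt with rfl | hlt
  · simp
  have hba : 0 < b - a := sub_pos.2 hlt
  have := mul_nonneg hba.le (hnonneg ((∫ θ in a..b, f θ) / (b - a)))
  field_simp at this
  linarith

theorem lintegral_norm_deriv_sq_lt_top {U : Set ℂ} (hU : IsOpen U)
    (hg : DifferentiableOn ℂ g U) (hinj : InjOn g U) (hb : Bornology.IsBounded (g '' U)) :
    ∫⁻ z in U, ENNReal.ofReal (‖deriv g z‖ ^ 2) < ⊤ := by
  have hderiv : ∀ z ∈ U, HasFDerivWithinAt g (deriv g z • (1 : ℂ →L[ℝ] ℂ)) U z := fun z hz ↦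
    (hg.differentiableAt (hU.mem_nhds hz)).hasDerivAt.complexToReal_fderiv.hasFDerivWithinAt
  have hdet (c : ℂ) : |(c • (1 : ℂ →L[ℝ] ℂ)).det| = ‖c‖ ^ 2 := by
    rw [show (c • (1 : ℂ →L[ℝ] ℂ)).det = Algebra.norm ℝ c from (Algebra.norm_apply ℝ c).symm,
      Algebra.norm_complex_apply, normSq_eq_norm_sq, abs_of_nonneg (sq_nonneg _)]
  have harea := lintegral_abs_det_fderiv_eq_addHaar_image volume hU.measurableSet hderiv hinj
  simp only [hdet] at harea
  exact harea.trans_lt hb.measure_lt_top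

theorem lintegral_ofReal_inv_Ioo_eq_top (hδ : 0 < δ) :
    ∫⁻ r in Ioo 0 δ, ENNReal.ofReal r⁻¹ = ⊤ := by
  by_contra hfin
  have hintegrable : IntegrableOn (fun r : ℝ ↦ r⁻¹) (Ioo 0 δ) := by
    refine ⟨measurable_inv.aestronglyMeasurable, ?_⟩
    rw [hasFiniteIntegral_iff_ofReal]
    · exact lt_top_iff_ne_top.2 hfin
    · filter_upwards [ae_restrict_mem measurableSet_Ioo] with r hr
      exact inv_nonneg.2 hr.1.le
  rw [← intervalIntegrable_iff_integrableOn_Ioo_of_le hδ.le,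
    intervalIntegrable_inv_iff] at hintegrable
  exact hintegrable.elim hδ.ne fun h ↦ h left_mem_uIcc

theorem exists_lintegral_circleMap_le {F : ℂ → ENNReal} (hF : Measurable F)
    (hfin : ∫⁻ z, F z < ⊤) (ζ : ℂ) (hδ : 0 < δ) {c : ℝ} (hc : 0 < c) :
    ∃ r ∈ Ioo 0 δ, ENNReal.ofReal (r ^ 2) *
      ∫⁻ θ in Ioo (-Real.pi) Real.pi, F (circleMap ζ r θ) ≤ ENNReal.ofReal c := by
  by_contra! hlt
  have hpolar : ∫⁻ r in Ioi (0 : ℝ), ∫⁻ θ in Ioo (-Real.pi) Real.pi,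
      ENNReal.ofReal r * F (circleMap ζ r θ) = ∫⁻ z, F z := by
    have hmeas : Measurable fun p : ℝ × ℝ ↦ ENNReal.ofReal p.1 * F (circleMap ζ p.1 p.2) :=
      (by fun_prop : Measurable fun p : ℝ × ℝ ↦ ENNReal.ofReal p.1).mul
        (hF.comp (by unfold circleMap; fun_prop))
    rw [← lintegral_add_left_eq_self F ζ, ← Complex.lintegral_comp_polarCoord_symm,
      show polarCoord.target = Ioi (0 : ℝ) ×ˢ Ioo (-Real.pi) Real.pi from rfl,
      Measure.volume_eq_prod, ← Measure.prod_restrict, ← lintegral_prod _ hmeas.aemeasurable]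
    simp only [Complex.polarCoord_symm_apply, circleMap, exp_mul_I, ofReal_cos, ofReal_sin,
      smul_eq_mul]
  have hinner : ∀ r ∈ Ioo 0 δ, ENNReal.ofReal c * ENNReal.ofReal r⁻¹ ≤
      ∫⁻ θ in Ioo (-Real.pi) Real.pi, ENNReal.ofReal r * F (circleMap ζ r θ) := by
    intro r hr
    rw [lintegral_const_mul' _ _ ENNReal.ofReal_ne_top, ENNReal.ofReal_inv_of_pos hr.1,
      ← div_eq_mul_inv]
    refine ENNReal.div_le_of_le_mul ((hlt r hr).le.trans_eq ?_)
    rw [ENNReal.ofReal_pow hr.1.le]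
    ring
  refine hfin.ne (top_unique ?_)
  calc (⊤ : ENNReal) = ∫⁻ r in Ioo 0 δ, ENNReal.ofReal c * ENNReal.ofReal r⁻¹ := by
        rw [lintegral_const_mul _ (by fun_prop), lintegral_ofReal_inv_Ioo_eq_top hδ,
          ENNReal.mul_top (ENNReal.ofReal_pos.2 hc).ne']
    _ ≤ ∫⁻ r in Ioo 0 δ, ∫⁻ θ in Ioo (-Real.pi) Real.pi,
          ENNReal.ofReal r * F (circleMap ζ r θ) := setLIntegral_mono' measurableSet_Ioo hinner
    _ ≤ _ := lintegral_mono_set Ioo_subset_Ioi_self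
    _ = ∫⁻ z, F z := hpolar

theorem ofReal_norm_sub_sq_le_lintegral_circleMap {U : Set ℂ} (hU : IsOpen U)
    (hg : DifferentiableOn ℂ g U) (hab : a ≤ b) (harc : MapsTo (circleMap ζ r) (Icc a b) U) :
    ENNReal.ofReal (‖g (circleMap ζ r b) - g (circleMap ζ r a)‖ ^ 2) ≤
      ENNReal.ofReal (b - a) * (ENNReal.ofReal (r ^ 2) *
        ∫⁻ θ in Icc a b, ENNReal.ofReal (‖deriv g (circleMap ζ r θ)‖ ^ 2)) := by
  have harc' : MapsTo (circleMap ζ r) (uIcc a b) U := by rwa [uIcc_of_le hab]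
  have hcont : ContinuousOn (fun θ ↦ deriv g (circleMap ζ r θ)) (uIcc a b) :=
    (hg.deriv hU).continuousOn.comp (continuous_circleMap ζ r).continuousOn harc'
  have hintegrable : IntervalIntegrable (fun θ ↦ ‖deriv g (circleMap ζ r θ)‖ ^ 2) volume a b :=
    (hcont.norm.pow 2).intervalIntegrable
  have hlength : ‖g (circleMap ζ r b) - g (circleMap ζ r a)‖ ≤
      ∫ θ in a..b, |r| * ‖deriv g (circleMap ζ r θ)‖ := by
    have hcont' := hcont.mul ((continuous_circleMap 0 r).mul_const I).continuousOn
    rw [← intervalIntegral.integral_eq_sub_of_hasDerivAt (f := fun θ ↦ g (circleMap ζ r θ))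
      (fun θ hθ ↦ (hg.differentiableAt (hU.mem_nhds (harc' hθ))).hasDerivAt.comp θ
        (hasDerivAt_circleMap ζ r θ)) hcont'.intervalIntegrable]
    refine (intervalIntegral.norm_integral_le_integral_norm hab).trans_eq ?_
    simp only [norm_mul, norm_circleMap_zero, norm_I, mul_one, mul_comm]
  have hreal : ‖g (circleMap ζ r b) - g (circleMap ζ r a)‖ ^ 2 ≤
      (b - a) * (r ^ 2 * ∫ θ in a..b, ‖deriv g (circleMap ζ r θ)‖ ^ 2) := by
    refine (pow_le_pow_left₀ (norm_nonneg _) hlength 2).trans ?_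
    refine (sq_intervalIntegral_le hab (hcont.norm.const_mul |r|).intervalIntegrable
      ((hcont.norm.const_mul |r|).pow 2).intervalIntegrable).trans_eq ?_
    simp only [mul_pow, sq_abs, intervalIntegral.integral_const_mul]
  refine (ENNReal.ofReal_le_ofReal hreal).trans_eq ?_
  rw [ENNReal.ofReal_mul (sub_nonneg.2 hab), ENNReal.ofReal_mul (sq_nonneg r),
    intervalIntegral.integral_of_le hab, ← integral_Icc_eq_integral_Ioc,
    ofReal_integral_eq_lintegral_ofReal
      ((intervalIntegrable_iff_integrableOn_Icc_of_le hab).1 hintegrable)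
      (.of_forall fun _ ↦ sq_nonneg _)]

theorem circleMap_neg_one_mem_ball_iff (hr : 0 < r) (θ : ℝ) :
    circleMap (-1) r θ ∈ ball 0 1 ↔ r / 2 < Real.cos θ := by
  have hsq : ‖circleMap (-1) r θ‖ ^ 2 = 1 - 2 * r * Real.cos θ + r ^ 2 := by
    rw [← normSq_eq_norm_sq, circleMap, exp_mul_I, ← ofReal_cos, ← ofReal_sin, normSq_apply]
    simp only [add_re, neg_re, one_re, mul_re, ofReal_re, I_re, mul_zero, ofReal_im, I_im,
      mul_one, sub_self, add_zero, add_im, mul_im, zero_add, zero_mul, sub_zero, neg_im, one_im,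
      neg_zero]
    linear_combination r ^ 2 * Real.sin_sq_add_cos_sq θ
  rw [mem_ball_zero_iff, ← sq_lt_one_iff₀ (norm_nonneg _), hsq]
  constructor <;> intro h <;> nlinarith

theorem exists_circleMap_neg_one_eq {z : ℂ} (hr : 0 < r) (hz : z ∈ ball 0 1 ∩ sphere (-1) r) :
    ∃ θ, (θ ∈ Ioo (-Real.pi) Real.pi ∧ r / 2 < Real.cos θ) ∧ circleMap (-1) r θ = z := by
  have hnorm : ‖z + 1‖ = r := by simpa [dist_eq_norm] using hz.2
  have hcircle : circleMap (-1) r (arg (z + 1)) = z := by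
    rw [circleMap, ← hnorm, norm_mul_exp_arg_mul_I]
    ring
  have hcos := (circleMap_neg_one_mem_ball_iff hr _).1 (hcircle.symm ▸ hz.1)
  refine ⟨_, ⟨⟨neg_pi_lt_arg _, (arg_le_pi _).lt_of_ne fun h ↦ ?_⟩, hcos⟩, hcircle⟩
  rw [h, Real.cos_pi] at hcos
  linarith

theorem ordConnected_lt_cos (c : ℝ) :
    OrdConnected {θ | θ ∈ Ioo (-Real.pi) Real.pi ∧ c < Real.cos θ} := by
  refine ordConnected_iff.2 fun a ha b hb _ θ hθ ↦
    ⟨⟨ha.1.1.trans_le hθ.1, hθ.2.trans_lt hb.1.2⟩, ?_⟩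
  rcases le_total 0 θ with h0 | h0
  · exact hb.2.trans_le (Real.cos_le_cos_of_nonneg_of_le_pi h0 hb.1.2.le hθ.2)
  · rw [← Real.cos_neg θ]
    refine ha.2.trans_le ?_
    rw [← Real.cos_neg a]
    exact Real.cos_le_cos_of_nonneg_of_le_pi (neg_nonneg.2 h0) (neg_le.1 ha.1.1.le)
      (neg_le_neg hθ.1)

/-- Around every point of the unit circle there are arbitrarily small crosscuts of the unit disc
(arcs `ball 0 1 ∩ sphere ζ r`) whose image under `h` has arbitrarily small diameter. -/
def HasSmallCrosscuts (h : ℂ → ℂ) : Prop :=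
  ∀ ζ ∈ sphere (0 : ℂ) 1, ∀ δ > 0, ∀ ε > 0, ∃ r ∈ Ioo 0 δ,
    ∀ z ∈ ball 0 1 ∩ sphere ζ r, ∀ z' ∈ ball 0 1 ∩ sphere ζ r, dist (h z) (h z') ≤ ε

theorem exists_crosscut_neg_one (hg : DifferentiableOn ℂ g (ball 0 1)) (hinj : InjOn g (ball 0 1))
    (hb : Bornology.IsBounded (g '' ball 0 1)) (hδ : 0 < δ) (hε : 0 < ε) :
    ∃ r ∈ Ioo 0 δ, ∀ z ∈ ball 0 1 ∩ sphere (-1) r, ∀ z' ∈ ball 0 1 ∩ sphere (-1) r,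
      dist (g z) (g z') ≤ ε := by
  set F : ℂ → ENNReal := (ball 0 1).indicator fun z ↦ ENNReal.ofReal (‖deriv g z‖ ^ 2) with hF
  have hFm : Measurable F :=
    ((measurable_deriv g).norm.pow_const 2).ennreal_ofReal.indicator measurableSet_ball
  have hFfin : ∫⁻ z, F z < ⊤ := by
    rw [lintegral_indicator measurableSet_ball]
    exact lintegral_norm_deriv_sq_lt_top isOpen_ball hg hinj hb
  obtain ⟨r, hr, hrF⟩ := exists_lintegral_circleMap_le hFm hFfin (-1) hδ
    (c := ε ^ 2 / (2 * Real.pi)) (by positivity)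
  refine ⟨r, hr, fun z hz z' hz' ↦ ?_⟩
  obtain ⟨a, ha, rfl⟩ := exists_circleMap_neg_one_eq hr.1 hz
  obtain ⟨b, hb, rfl⟩ := exists_circleMap_neg_one_eq hr.1 hz'
  clear hz hz'
  wlog hab : a ≤ b generalizing a b
  · rw [dist_comm]
    exact this b hb a ha (le_of_not_ge hab)
  have hIcc := (ordConnected_lt_cos (r / 2)).out ha hb
  have harc : MapsTo (circleMap (-1) r) (Icc a b) (ball 0 1) := fun θ hθ ↦
    (circleMap_neg_one_mem_ball_iff hr.1 θ).2 (hIcc hθ).2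
  have hF_arc : ∫⁻ θ in Icc a b, ENNReal.ofReal (‖deriv g (circleMap (-1) r θ)‖ ^ 2) ≤
      ∫⁻ θ in Ioo (-Real.pi) Real.pi, F (circleMap (-1) r θ) := by
    refine (setLIntegral_congr_fun measurableSet_Icc fun θ hθ ↦ ?_).trans_le
      (lintegral_mono_set fun θ hθ ↦ (hIcc hθ).1)
    rw [hF, indicator_of_mem (harc hθ)]
  have hlen : b - a ≤ 2 * Real.pi := by linarith [ha.1.1, hb.1.2]
  rw [dist_comm, dist_eq_norm, ← sq_le_sq₀ (norm_nonneg _) hε.le,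
    ← ENNReal.ofReal_le_ofReal_iff (by positivity)]
  calc _ ≤ ENNReal.ofReal (b - a) * (ENNReal.ofReal (r ^ 2) *
          ∫⁻ θ in Icc a b, ENNReal.ofReal (‖deriv g (circleMap (-1) r θ)‖ ^ 2)) :=
        ofReal_norm_sub_sq_le_lintegral_circleMap isOpen_ball hg hab harc
    _ ≤ ENNReal.ofReal (2 * Real.pi) * ENNReal.ofReal (ε ^ 2 / (2 * Real.pi)) := by
        gcongr
        exact (mul_le_mul_right hF_arc _).trans hrF
    _ = ENNReal.ofReal (ε ^ 2) := by
        rw [← ENNReal.ofReal_mul Real.two_pi_pos.le, mul_div_cancel₀ _ Real.two_pi_pos.ne']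

theorem hasSmallCrosscuts_of_injOn (hg : DifferentiableOn ℂ g (ball 0 1))
    (hinj : InjOn g (ball 0 1)) (hb : Bornology.IsBounded (g '' ball 0 1)) :
    HasSmallCrosscuts g := by
  intro ζ hζ δ hδ ε hε
  have hζ1 : ‖ζ‖ = 1 := mem_sphere_zero_iff_norm.1 hζ
  have hζ0 : -ζ ≠ 0 := neg_ne_zero.2 (ne_zero_of_mem_unit_sphere ⟨ζ, hζ⟩)
  have hmaps : MapsTo (-ζ * ·) (ball 0 1) (ball 0 1) := fun z hz ↦ by simpa [hζ1] using hz
  obtain ⟨r, hr, h⟩ := exists_crosscut_neg_one (g := fun z ↦ g (-ζ * z))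
    (hg.comp (by fun_prop) hmaps)
    (fun x hx y hy hxy ↦ mul_left_cancel₀ hζ0 (hinj (hmaps hx) (hmaps hy) hxy))
    (hb.subset (by rintro _ ⟨z, hz, rfl⟩; exact mem_image_of_mem g (hmaps hz))) hδ hε
  have hrot : ∀ z ∈ ball 0 1 ∩ sphere ζ r, (-ζ)⁻¹ * z ∈ ball 0 1 ∩ sphere (-1) r := by
    rintro z ⟨hz, hzr⟩
    refine ⟨by simpa [hζ1] using hz, ?_⟩
    rw [mem_sphere, dist_eq_norm, show (-ζ)⁻¹ * z - -1 = (-ζ)⁻¹ * (z - ζ) by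
      rw [mul_sub, inv_neg, neg_mul, neg_mul, inv_mul_cancel₀ (neg_ne_zero.1 hζ0)],
     
      norm_mul, norm_inv, norm_neg, hζ1, inv_one, one_mul, ← dist_eq_norm]
    exact hzr
  refine ⟨r, hr, fun z hz z' hz' ↦ ?_⟩
  simpa only [mul_inv_cancel_left₀ hζ0] using h _ (hrot z hz) _ (hrot z' hz')

theorem HasSmallCrosscuts.comp {ψ : ℂ → ℂ} {S : Set ℂ} (hg : HasSmallCrosscuts g)
    (hmaps : MapsTo g (ball 0 1) S) (hψ : UniformContinuousOn ψ S) :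
    HasSmallCrosscuts (ψ ∘ g) := by
  intro ζ hζ δ hδ ε hε
  obtain ⟨η, hη, hψη⟩ := Metric.uniformContinuousOn_iff.1 hψ ε hε
  obtain ⟨r, hr, h⟩ := hg ζ hζ δ hδ (η / 2) (half_pos hη)
  exact ⟨r, hr, fun z hz z' hz' ↦ (hψη _ (hmaps hz.1) _ (hmaps hz'.1)
    ((h z hz z' hz').trans_lt (half_lt_self hη))).le⟩

end LengthArea

/-! ### Boundary extension of conformal maps -/

section DiscHomeomorph

open scoped RealInnerProductSpace

variable {h : OpenPartialHomeomorph ℂ ℂ} {H Φ : ℂ → ℂ} {ζ q : ℂ} {ρ : ℝ}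

theorem exists_radius_forall_lt_norm (hs : h.source = ball 0 1) (ht : h.target = ball 0 1)
    (hζ : ζ ∈ sphere 0 1) (hρ : ρ < 1) : ∃ r > 0, ∀ z ∈ ball 0 1 ∩ ball ζ r, ρ < ‖h z‖ := by
  have hsub : closedBall 0 ρ ⊆ h.target := ht ▸ closedBall_subset_ball hρ
  have hcompact : IsCompact (h.symm '' closedBall 0 ρ) :=
    (isCompact_closedBall _ _).image_of_continuousOn (h.continuousOn_symm.mono hsub)
  have hζ_notMem : ζ ∉ h.symm '' closedBall 0 ρ := by
    rintro ⟨w, hw, rfl⟩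
    have := hs ▸ h.map_target (hsub hw)
    exact (mem_ball.1 this).ne hζ
  obtain ⟨r, hr, hball⟩ := Metric.isOpen_iff.1 hcompact.isClosed.isOpen_compl ζ hζ_notMem
  refine ⟨r, hr, fun z hz ↦ ?_⟩
  by_contra! hle
  exact hball hz.2 ⟨h z, mem_closedBall_zero_iff.2 hle, h.left_inv (hs ▸ hz.1)⟩

theorem ball_inter_sphere_nonempty (hζ : ζ ∈ sphere (0 : ℂ) 1) {r : ℝ} (hr : r ∈ Ioo 0 1) :
    (ball (0 : ℂ) 1 ∩ sphere ζ r).Nonempty := by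
  rw [mem_sphere_zero_iff_norm] at hζ
  refine ⟨((1 - r : ℝ) : ℂ) * ζ, ?_, ?_⟩
  · rw [mem_ball_zero_iff, norm_mul, hζ, norm_real, mul_one, Real.norm_eq_abs, abs_lt]
    constructor <;> linarith [hr.1, hr.2]
  · rw [mem_sphere, dist_eq_norm, show ((1 - r : ℝ) : ℂ) * ζ - ζ = ((-r : ℝ) : ℂ) * ζ by
      push_cast; ring, norm_mul, hζ, norm_real, norm_neg, Real.norm_of_nonneg hr.1.le, mul_one]

-- The image of a small crosscut lies beyond a chord; the disc on the other side of the chord is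
-- connected and contains `0`, so the image of the cap cut off by the crosscut lies beyond it too.
theorem exists_crosscut_forall_lt_inner (hs : h.source = ball 0 1) (ht : h.target = ball 0 1)
    (hc : HasSmallCrosscuts h) (hζ : ζ ∈ sphere 0 1) {δ : ℝ} (hδ : 0 < δ) (hρ : ρ < 1)
    (hρ0 : 0 ≤ ρ) :
    ∃ r ∈ Ioo 0 δ, ∃ v : ℂ, ‖v‖ = 1 ∧ ∀ z ∈ ball 0 1 ∩ sphere ζ r, ρ < ⟪v, h z⟫ := by
  obtain ⟨δ', hδ', hnear⟩ := exists_radius_forall_lt_norm hs ht hζ (ρ := (1 + ρ) / 2) (by linarith)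
  obtain ⟨r, hr, hcut⟩ := hc ζ hζ (min (min δ' δ) 1) (by positivity) ((1 - ρ) / 4) (by linarith)
  simp only [mem_Ioo, lt_min_iff] at hr
  obtain ⟨z₀, hz₀⟩ := ball_inter_sphere_nonempty hζ ⟨hr.1, hr.2.2⟩
  have hy : (1 + ρ) / 2 < ‖h z₀‖ := hnear z₀ ⟨hz₀.1, sphere_subset_ball hr.2.1.1 hz₀.2⟩
  have hy0 : ‖h z₀‖ ≠ 0 := by linarith
  set v : ℂ := ‖h z₀‖⁻¹ • h z₀
  have hv : ‖v‖ = 1 := by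
    rw [norm_smul, norm_inv, norm_norm, inv_mul_cancel₀ hy0]
  have hvy : ⟪v, h z₀⟫ = ‖h z₀‖ := by
    rw [real_inner_smul_left, real_inner_self_eq_norm_sq]
    field_simp
  refine ⟨r, ⟨hr.1, hr.2.1.2⟩, v, hv, fun z hz ↦ ?_⟩
  have hle : ⟪v, h z₀ - h z⟫ ≤ dist (h z₀) (h z) := by
    simpa [hv, dist_eq_norm] using real_inner_le_norm v (h z₀ - h z)
  rw [inner_sub_right, hvy] at hle
  linarith [hcut z₀ hz₀ z hz]

theorem exists_cap_forall_lt_inner (hs : h.source = ball 0 1) (ht : h.target = ball 0 1)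
    (hc : HasSmallCrosscuts h) (hζ : ζ ∈ sphere 0 1) (hρ : ρ < 1) (hρ0 : 0 ≤ ρ) :
    ∃ r > 0, ∃ v : ℂ, ‖v‖ = 1 ∧ ∀ z ∈ ball 0 1 ∩ ball ζ r, ρ < ⟪v, h z⟫ := by
  obtain ⟨δ, hδ, hnear⟩ := exists_radius_forall_lt_norm hs ht hζ zero_lt_one
  obtain ⟨r, hr, v, hv, hchord⟩ := exists_crosscut_forall_lt_inner hs ht hc hζ hδ hρ hρ0
  set E : Set ℂ := ball 0 1 ∩ {w | ⟪v, w⟫ ≤ ρ}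
  have hEt : E ⊆ h.target := ht ▸ inter_subset_left
  have hE : IsPreconnected (h.symm '' E) :=
    ((convex_ball 0 1).inter (convex_halfSpace_le (innerₗ ℂ v).isLinear ρ)).isPreconnected.image _
      (h.continuousOn_symm.mono hEt)
  have h0E : (0 : ℂ) ∈ E := ⟨mem_ball_self one_pos, by simpa using hρ0⟩
  have hE_sides : h.symm '' E ⊆ (closedBall ζ r)ᶜ ∪ ball ζ r := by
    rintro _ ⟨w, hw, rfl⟩
    rcases lt_trichotomy (dist (h.symm w) ζ) r with hlt | heq | hgt
    · exact .inr hlt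
    · have := hchord (h.symm w) ⟨hs ▸ h.map_target (hEt hw), heq⟩
      rw [h.right_inv (hEt hw)] at this
      exact absurd hw.2 this.not_ge
    · exact .inl (by simpa using hgt)
  have h0_far : h.symm 0 ∉ ball ζ r := fun hmem ↦ by
    have := hnear _ ⟨hs ▸ h.map_target (hEt h0E), ball_subset_ball hr.2.le hmem⟩
    rw [h.right_inv (hEt h0E), norm_zero] at this
    exact this.false
  have hE_far : h.symm '' E ⊆ (closedBall ζ r)ᶜ :=
    (hE.subset_or_subset isClosed_closedBall.isOpen_compl isOpen_ball
      (disjoint_compl_left_iff_subset.2 ball_subset_closedBall) hE_sides).resolve_right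
      fun hsub ↦ h0_far (hsub (mem_image_of_mem _ h0E))
  refine ⟨r, hr.1, v, hv, fun z hz ↦ ?_⟩
  by_contra! hle
  have hzs : z ∈ h.source := hs ▸ hz.1
  exact hE_far ⟨h z, ⟨ht ▸ h.map_source hzs, hle⟩, h.left_inv hzs⟩ (ball_subset_closedBall hz.2)

theorem exists_tendsto_of_hasSmallCrosscuts (hs : h.source = ball 0 1) (ht : h.target = ball 0 1)
    (hc : HasSmallCrosscuts h) (hζ : ζ ∈ sphere 0 1) :
    ∃ y ∈ sphere (0 : ℂ) 1, Tendsto h (𝓝[ball 0 1] ζ) (𝓝 y) := by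
  have hne : NeBot (𝓝[ball 0 1] ζ) := mem_closure_iff_nhdsWithin_neBot.1 <| by
    rw [closure_ball _ one_ne_zero]
    exact sphere_subset_closedBall hζ
  have hmem (r : ℝ) (hr : 0 < r) : ball 0 1 ∩ ball ζ r ∈ 𝓝[ball 0 1] ζ :=
    inter_mem_nhdsWithin _ (ball_mem_nhds ζ hr)
  have hlt : ∀ z ∈ ball 0 1, ‖h z‖ < 1 := fun z hz ↦
    mem_ball_zero_iff.1 (ht ▸ h.map_source (hs ▸ hz))
  have hcauchy : Cauchy (map h (𝓝[ball 0 1] ζ)) := by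
    refine Metric.cauchy_iff.2 ⟨inferInstance, fun ε hε ↦ ?_⟩
    obtain ⟨r, hr, v, hv, hcap⟩ := exists_cap_forall_lt_inner hs ht hc hζ
      (max_lt one_pos (sub_lt_self 1 (by positivity))) (le_max_left 0 (1 - ε ^ 2 / 8))
    have hnear : ∀ z ∈ ball 0 1 ∩ ball ζ r, dist (h z) v < ε / 2 := fun z hz ↦ by
      rw [dist_comm, dist_eq_norm, ← sq_lt_sq₀ (norm_nonneg _) (half_pos hε).le,
        norm_sub_sq_real, hv]
      have hsq := pow_lt_one₀ (norm_nonneg _) (hlt z hz.1) two_ne_zero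
      linarith [(le_max_right _ _).trans_lt (hcap z hz)]
    refine ⟨h '' (ball 0 1 ∩ ball ζ r), image_mem_map (hmem r hr), ?_⟩
    rintro _ ⟨z, hz, rfl⟩ _ ⟨z', hz', rfl⟩
    exact (dist_triangle_right _ _ v).trans_lt
      ((add_lt_add (hnear z hz) (hnear z' hz')).trans_eq (add_halves ε))
  obtain ⟨y, hy⟩ := cauchy_map_iff_exists_tendsto.1 hcauchy
  refine ⟨y, mem_sphere_zero_iff_norm.2 (le_antisymm ?_ ?_), hy⟩
  · refine le_of_tendsto hy.norm ?_
    filter_upwards [self_mem_nhdsWithin] with z hz using (hlt z hz).le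
  · refine le_of_forall_lt fun ρ hρ ↦ ?_
    obtain ⟨ρ', hρρ', hρ'⟩ := exists_between hρ
    obtain ⟨r, hr, hnear⟩ := exists_radius_forall_lt_norm hs ht hζ hρ'
    refine hρρ'.trans_le (ge_of_tendsto hy.norm ?_)
    filter_upwards [hmem r hr] with z hz using (hnear z hz).le

theorem exists_continuousOn_closedBall_extension (hs : h.source = ball 0 1)
    (ht : h.target = ball 0 1) (hc : HasSmallCrosscuts h) :
    ∃ H : ℂ → ℂ, ContinuousOn H (closedBall 0 1) ∧ EqOn H h (ball 0 1) ∧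
      MapsTo H (sphere 0 1) (sphere 0 1) := by
  have hclosure : closure (ball (0 : ℂ) 1) = closedBall 0 1 := closure_ball _ one_ne_zero
  have hh : ContinuousOn h (ball 0 1) := hs ▸ h.continuousOn
  refine ⟨extendFrom (ball 0 1) h, continuousOn_extendFrom hclosure.ge fun z hz ↦ ?_,
    fun z hz ↦ extendFrom_extends hh z hz, fun z hz ↦ ?_⟩
  · rw [← ball_union_sphere] at hz
    rcases hz with hz | hz
    · exact ⟨h z, hh z hz⟩
    · exact (exists_tendsto_of_hasSmallCrosscuts hs ht hc hz).imp fun y hy ↦ hy.2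
  · obtain ⟨y, hy, hlim⟩ := exists_tendsto_of_hasSmallCrosscuts hs ht hc hz
    rwa [extendFrom_eq (hclosure.ge (sphere_subset_closedBall hz)) hlim]

theorem isPreconnected_of_forall_isOpen_superset {X : Type*} [TopologicalSpace X] [T2Space X]
    {S : Set X} (hS : IsCompact S)
    (hW : ∀ V, IsOpen V → S ⊆ V → ∃ W ⊆ V, IsPreconnected W ∧ S ⊆ closure W) :
    IsPreconnected S := by
  refine isPreconnected_closed_iff.2 fun t t' ht ht' hsub ⟨x, hx, hxt⟩ ⟨x', hx', hxt'⟩ ↦ ?_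
  by_contra hempty
  have hdisj : Disjoint (S ∩ t) (S ∩ t') :=
    Set.disjoint_left.2 fun y hy hy' ↦ hempty ⟨y, hy.1, hy.2, hy'.2⟩
  obtain ⟨u, v, hu, hv, hut, hvt, huv⟩ :=
    SeparatedNhds.of_isCompact_isCompact (hS.inter_right ht) (hS.inter_right ht') hdisj
  obtain ⟨W, hWuv, hWc, hSW⟩ := hW (u ∪ v) (hu.union hv) fun y hy ↦
    (hsub hy).imp (fun h ↦ hut ⟨hy, h⟩) fun h ↦ hvt ⟨hy, h⟩
  rcases hWc.subset_or_subset hu hv huv hWuv with h | h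
  · exact ((huv.closure_left hv).mono_left (closure_mono h)).le_bot ⟨hSW hx', hvt ⟨hx', hxt'⟩⟩
  · exact ((huv.symm.closure_left hu).mono_left (closure_mono h)).le_bot ⟨hSW hx, hut ⟨hx, hxt⟩⟩

theorem isPreconnected_sphere_inter_preimage (hs : h.source = ball 0 1) (ht : h.target = ball 0 1)
    (hH : ContinuousOn H (closedBall 0 1)) (hHh : EqOn H h (ball 0 1)) (hq : q ∈ sphere 0 1) :
    IsPreconnected (sphere 0 1 ∩ H ⁻¹' {q}) := by
  refine isPreconnected_of_forall_isOpen_superset ((isCompact_sphere 0 1).of_isClosed_subset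
    ((hH.mono sphere_subset_closedBall).preimage_isClosed_of_isClosed isClosed_sphere
      isClosed_singleton) inter_subset_left) fun V hV hSV ↦ ?_
  have hcompact : IsCompact (H '' (closedBall 0 1 \ V)) :=
    ((isCompact_closedBall 0 1).diff hV).image_of_continuousOn (hH.mono sdiff_subset)
  have hq_notMem : q ∉ H '' (closedBall 0 1 \ V) := by
    rintro ⟨z, ⟨hz, hzV⟩, hzq⟩
    rw [← ball_union_sphere] at hz
    rcases hz with hz | hz
    · have := ht ▸ h.map_source (hs ▸ hz)
      rw [← hHh hz, hzq] at this
      exact (mem_ball.1 this).ne hq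
    · exact hzV (hSV ⟨hz, hzq⟩)
  obtain ⟨ε, hε, hball⟩ := Metric.isOpen_iff.1 hcompact.isClosed.isOpen_compl q hq_notMem
  have htarget : ball 0 1 ∩ ball q ε ⊆ h.target := ht ▸ inter_subset_left
  refine ⟨h.symm '' (ball 0 1 ∩ ball q ε), ?_,
    ((convex_ball 0 1).inter (convex_ball q ε)).isPreconnected.image _
      (h.continuousOn_symm.mono htarget), fun x hx ↦ mem_closure_iff_nhds.2 fun O hO ↦ ?_⟩
  · rintro _ ⟨w, hw, rfl⟩
    have hw' : h.symm w ∈ ball 0 1 := hs ▸ h.map_target (htarget hw)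
    by_contra hV'
    refine hball hw.2 ⟨h.symm w, ⟨ball_subset_closedBall hw', hV'⟩, ?_⟩
    rw [hHh hw', h.right_inv (htarget hw)]
  · have hx' : x ∈ closedBall (0 : ℂ) 1 := sphere_subset_closedBall hx.1
    have hne : NeBot (𝓝[ball 0 1] x) := mem_closure_iff_nhdsWithin_neBot.1 <| by
      rwa [closure_ball _ one_ne_zero]
    have hlim : Tendsto H (𝓝[ball 0 1] x) (𝓝 q) :=
      (show H x = q from hx.2) ▸ (hH x hx').mono ball_subset_closedBall
    obtain ⟨z, hzq, hz, hzO⟩ := ((hlim.eventually (ball_mem_nhds q hε)).and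
      (eventually_mem_nhdsWithin.and (mem_nhdsWithin_of_mem_nhds hO))).exists
    rw [hHh hz] at hzq
    have hzs : z ∈ h.source := hs ▸ hz
    exact ⟨z, hzO, h z, ⟨ht ▸ h.map_source hzs, hzq⟩, h.left_inv hzs⟩

theorem exists_Icc_mul_exp_mem_of_isPreconnected {S : Set ℂ} (hS : IsPreconnected S)
    (hsub : S ⊆ sphere 0 1) (hnt : S.Nontrivial) :
    ∃ c : ℂ, ‖c‖ = 1 ∧ ∃ α β : ℝ, α < β ∧ ∀ θ ∈ Icc α β, c * exp (θ * I) ∈ S := by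
  by_cases hall : sphere (0 : ℂ) 1 ⊆ S
  · exact ⟨1, norm_one, 0, 1, one_pos, fun θ _ ↦ hall (by simp [norm_exp_ofReal_mul_I])⟩
  obtain ⟨p, hp, hpS⟩ := not_subset.1 hall
  have hp1 : ‖-p‖ = 1 := by simpa using hp
  have hp0 : -p ≠ 0 := norm_ne_zero_iff.1 (hp1 ▸ one_ne_zero)
  have hnorm : ∀ z ∈ S, ‖z / -p‖ = 1 := fun z hz ↦ by
    rw [norm_div, hp1, mem_sphere_zero_iff_norm.1 (hsub hz), div_one]
  have hexp : ∀ z ∈ S, -p * exp (arg (z / -p) * I) = z := fun z hz ↦ by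
    have := norm_mul_exp_arg_mul_I (z / -p)
    rw [hnorm z hz, ofReal_one, one_mul] at this
    rw [this, mul_div_cancel₀ _ hp0]
  have hcont : ContinuousOn (fun z ↦ arg (z / -p)) S := fun z hz ↦ by
    refine (ContinuousAt.comp (f := (· / -p)) (continuousAt_arg ?_)
      (by fun_prop)).continuousWithinAt
    refine mem_slitPlane_iff_arg.2
      ⟨fun harg ↦ hpS ?_, norm_ne_zero_iff.1 (hnorm z hz ▸ one_ne_zero)⟩
    have := hexp z hz
    rw [harg, exp_pi_mul_I, mul_neg_one, neg_neg] at this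
    exact this ▸ hz
  obtain ⟨x, hx, y, hy, hxy⟩ := hnt
  wlog hlt : arg (x / -p) < arg (y / -p) generalizing x y
  · refine this y hy x hx hxy.symm ((not_lt.1 hlt).lt_of_ne fun harg ↦ hxy ?_)
    rw [← hexp x hx, ← hexp y hy, harg]
  refine ⟨-p, hp1, _, _, hlt, fun θ hθ ↦ ?_⟩
  obtain ⟨z, hz, rfl⟩ := (hS.image _ hcont).Icc_subset (mem_image_of_mem _ hx)
    (mem_image_of_mem _ hy) hθ
  exact (hexp z hz).symm ▸ hz

theorem exists_mem_Ico_mul_exp_eq {c z : ℂ} (hc : ‖c‖ = 1) (hz : ‖z‖ = 1) (α : ℝ) :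
    ∃ θ ∈ Ico α (α + 2 * Real.pi), c * exp (θ * I) = z := by
  refine ⟨_, toIcoMod_mem_Ico Real.two_pi_pos α (arg (z / c)), ?_⟩
  have hzc := norm_mul_exp_arg_mul_I (z / c)
  rw [norm_div, hz, hc, div_one, ofReal_one, one_mul] at hzc
  have hc0 : c ≠ 0 := norm_ne_zero_iff.1 (hc ▸ one_ne_zero)
  have hper : exp (toIcoMod Real.two_pi_pos α (arg (z / c)) * I) = exp (arg (z / c) * I) := by
    rw [toIcoMod, exp_eq_exp_iff_exists_int]
    refine ⟨-toIcoDiv Real.two_pi_pos α (arg (z / c)), ?_⟩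
    push_cast [zsmul_eq_mul]
    ring
  rw [hper, hzc, mul_div_cancel₀ _ hc0]

-- A finite product of rotates of `Φ` vanishes on the whole circle.
theorem eq_zero_of_forall_arc_eq_zero (hΦ : DiffContOnCl ℂ Φ (ball 0 1)) {c : ℂ} (hc : ‖c‖ = 1)
    {α β : ℝ} (hαβ : α < β) (hzero : ∀ θ ∈ Icc α β, Φ (c * exp (θ * I)) = 0) : Φ 0 = 0 := by
  have hβα : 0 < β - α := sub_pos.2 hαβ
  obtain ⟨n, hn⟩ := exists_nat_gt (2 * Real.pi / (β - α))
  set ω : ℕ → ℂ := fun j ↦ exp ((-(j * (β - α)) : ℝ) * I)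
  have hω : ∀ j, ‖ω j‖ = 1 := fun j ↦ norm_exp_ofReal_mul_I _
  have hprod : DiffContOnCl ℂ (fun z ↦ ∏ j ∈ Finset.range n, Φ (ω j * z)) (ball 0 1) := by
    refine ⟨DifferentiableOn.fun_finsetProd fun j _ ↦ ?_, continuousOn_finsetProd _ fun j _ ↦ ?_⟩
    · exact hΦ.differentiableOn.comp (by fun_prop) fun z hz ↦ by simpa [hω] using hz
    · refine hΦ.continuousOn.comp (by fun_prop) fun z hz ↦ ?_
      rw [closure_ball _ one_ne_zero] at hz ⊢
      simpa [hω] using hz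
  have hvanish : ∀ z ∈ frontier (ball (0 : ℂ) 1),
      ‖∏ j ∈ Finset.range n, Φ (ω j * z)‖ ≤ 0 := by
    intro z hz
    rw [frontier_ball _ one_ne_zero, mem_sphere_zero_iff_norm] at hz
    obtain ⟨θ, hθ, rfl⟩ := exists_mem_Ico_mul_exp_eq hc hz α
    set j := ⌊(θ - α) / (β - α)⌋₊
    have hj0 : 0 ≤ (θ - α) / (β - α) := div_nonneg (sub_nonneg.2 hθ.1) hβα.le
    have hj_le : j * (β - α) ≤ θ - α := (le_div_iff₀ hβα).1 (Nat.floor_le hj0)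
    have hj_lt : θ - α < (j + 1) * (β - α) := (div_lt_iff₀ hβα).1 (Nat.lt_floor_add_one _)
    have hjn : j < n := by
      refine (Nat.floor_lt hj0).2 (lt_of_le_of_lt ?_ hn)
      exact div_le_div_of_nonneg_right (by linarith [hθ.2]) hβα.le
    rw [Finset.prod_eq_zero (Finset.mem_range.2 hjn), norm_zero]
    have hrot : ω j * (c * exp (θ * I)) = c * exp ((θ - j * (β - α) : ℝ) * I) := by
      rw [mul_left_comm, ← exp_add]
      push_cast
      ring_nf
    rw [hrot]
    exact hzero _ ⟨by linarith, by linarith⟩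
  have hcenter := norm_le_of_forall_mem_frontier_norm_le isBounded_ball hprod hvanish
    (subset_closure (mem_ball_self one_pos))
  simp only [mul_zero] at hcenter
  exact (Finset.prod_eq_zero_iff.1 (norm_le_zero_iff.1 hcenter)).choose_spec.2

end DiscHomeomorph

section RadialExtension

variable {E : Type*} [NormedAddCommGroup E] [NormedSpace ℝ E]

theorem inv_max_one_norm_smul_mem_closedBall (z : E) :
    (max 1 ‖z‖)⁻¹ • z ∈ closedBall (0 : E) 1 := by
  have hpos : 0 < max 1 ‖z‖ := by positivity
  rw [mem_closedBall_zero_iff, norm_smul, norm_inv, Real.norm_of_nonneg hpos.le,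
    inv_mul_le_one₀ hpos]
  exact le_max_right _ _

/-- The extension of a self-homeomorphism of the closed unit ball to the whole space which is
positively homogeneous outside the ball. -/
noncomputable def radialExtension (e : closedBall (0 : E) 1 ≃ₜ closedBall (0 : E) 1) (z : E) : E :=
  max 1 ‖z‖ • (e ⟨(max 1 ‖z‖)⁻¹ • z, inv_max_one_norm_smul_mem_closedBall z⟩ : E)

namespace radialExtension

variable {e : closedBall (0 : E) 1 ≃ₜ closedBall (0 : E) 1}

theorem eq_of_mem (z : closedBall (0 : E) 1) : radialExtension e z = e z := by
  simp only [radialExtension, max_eq_left (mem_closedBall_zero_iff.1 z.2), inv_one, one_smul]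

protected theorem continuous : Continuous (radialExtension e) := by
  unfold radialExtension
  have hne (z : E) : max 1 ‖z‖ ≠ 0 := by positivity
  fun_prop (disch := assumption)

theorem max_one_norm (he : ∀ z, ‖(e z : E)‖ = 1 ↔ ‖(z : E)‖ = 1) (z : E) :
    max 1 ‖radialExtension e z‖ = max 1 ‖z‖ := by
  rcases le_total ‖z‖ 1 with hz | hz
  · rw [eq_of_mem ⟨z, mem_closedBall_zero_iff.2 hz⟩, max_eq_left hz]
    exact max_eq_left (mem_closedBall_zero_iff.1 (e _).2)
  · have hpos : 0 < ‖z‖ := one_pos.trans_le hz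
    have hnorm : ‖radialExtension e z‖ = ‖z‖ := by
      rw [radialExtension, norm_smul, (he _).2, mul_one]
      · simp [hz]
      · simp [max_eq_right hz, norm_smul, hpos.ne']
    rw [hnorm]

theorem symm_apply_apply (he : ∀ z, ‖(e z : E)‖ = 1 ↔ ‖(z : E)‖ = 1) (z : E) :
    radialExtension e.symm (radialExtension e z) = z := by
  have hne : max 1 ‖z‖ ≠ 0 := by positivity
  rw [radialExtension]
  simp only [max_one_norm he]
  simp only [radialExtension, smul_smul, inv_mul_cancel₀ hne, one_smul, Subtype.coe_eta,
    Homeomorph.symm_apply_apply, mul_inv_cancel₀ hne]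

end radialExtension

theorem exists_homeomorph_eqOn_closedBall (e : closedBall (0 : E) 1 ≃ₜ closedBall (0 : E) 1)
    (he : ∀ z, ‖(e z : E)‖ = 1 ↔ ‖(z : E)‖ = 1) :
    ∃ m : E ≃ₜ E, (∀ z : closedBall (0 : E) 1, m z = e z) ∧
      (∀ z, ‖m z‖ < 1 ↔ ‖z‖ < 1) ∧ ∀ z, ‖m z‖ ≤ 1 ↔ ‖z‖ ≤ 1 := by
  have he_symm (z) : ‖(e.symm z : E)‖ = 1 ↔ ‖(z : E)‖ = 1 := by
    rw [← he (e.symm z), e.apply_symm_apply]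
  let m : E ≃ₜ E :=
    { toFun := radialExtension e
      invFun := radialExtension e.symm
      left_inv := radialExtension.symm_apply_apply he
      right_inv := radialExtension.symm_apply_apply he_symm
      continuous_toFun := radialExtension.continuous
      continuous_invFun := radialExtension.continuous }
  have hle (z : E) : ‖m z‖ ≤ 1 ↔ ‖z‖ ≤ 1 := by
    rw [← max_eq_left_iff, ← max_eq_left_iff (b := ‖z‖)]
    exact Eq.congr_left (radialExtension.max_one_norm he z)
  refine ⟨m, radialExtension.eq_of_mem, fun z ↦ ?_, hle⟩
  rw [lt_iff_le_and_ne, lt_iff_le_and_ne, hle]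
  refine and_congr_right fun hz ↦ not_congr ?_
  have heq : m z = _ := radialExtension.eq_of_mem ⟨z, mem_closedBall_zero_iff.2 hz⟩
  rw [heq]
  exact he _

end RadialExtension

section ConformalOnDisc

variable {φ H : ℂ → ℂ} {h : OpenPartialHomeomorph ℂ ℂ}

theorem eq_of_conformal_of_mem_sphere (hφ : Function.Injective φ) (hφc : Continuous φ)
    (hs : h.source = ball 0 1) (ht : h.target = ball 0 1)
    (hd : DifferentiableOn ℂ (φ ∘ h) (ball 0 1))
    (hH : ContinuousOn H (closedBall 0 1)) (hHh : EqOn H h (ball 0 1)) {a b : ℂ}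
    (ha : a ∈ sphere 0 1) (hb : b ∈ sphere 0 1) (hHa : H a ∈ sphere 0 1) (hab : H a = H b) :
    a = b := by
  by_contra hne
  obtain ⟨c, hc, α, β, hαβ, harc⟩ := exists_Icc_mul_exp_mem_of_isPreconnected
    (isPreconnected_sphere_inter_preimage hs ht hH hHh hHa) inter_subset_left
    ⟨a, ⟨ha, rfl⟩, b, ⟨hb, hab.symm⟩, hne⟩
  have hΦ : DiffContOnCl ℂ (fun z ↦ φ (H z) - φ (H a)) (ball 0 1) := by
    refine ⟨(hd.congr fun z hz ↦ ?_).sub_const _, ?_⟩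
    · rw [Function.comp_apply, hHh hz]
    · rw [closure_ball _ one_ne_zero]
      exact (hφc.comp_continuousOn hH).sub continuousOn_const
  have h0 : H 0 = H a := hφ <| sub_eq_zero.1 <|
    eq_zero_of_forall_arc_eq_zero hΦ hc hαβ fun θ hθ ↦ by
      rw [show H _ = H a from (harc θ hθ).2, sub_self]
  have h0_mem : h 0 ∈ ball 0 1 := ht ▸ h.map_source (hs ▸ mem_ball_self one_pos)
  rw [← hHh (mem_ball_self one_pos), h0] at h0_mem
  exact (mem_ball.1 h0_mem).ne hHa

theorem exists_homeomorph_eqOn_ball_of_conformal (hφ : Function.Injective φ) (hφc : Continuous φ)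
    (hs : h.source = ball 0 1) (ht : h.target = ball 0 1)
    (hd : DifferentiableOn ℂ (φ ∘ h) (ball 0 1))
    (hc : HasSmallCrosscuts h) :
    ∃ m : ℂ ≃ₜ ℂ, EqOn m h (ball 0 1) ∧
      (∀ z, ‖m z‖ < 1 ↔ ‖z‖ < 1) ∧ ∀ z, ‖m z‖ ≤ 1 ↔ ‖z‖ ≤ 1 := by
  obtain ⟨H, hH, hHh, hHs⟩ := exists_continuousOn_closedBall_extension hs ht hc
  have hHb : MapsTo H (ball 0 1) (ball 0 1) := fun z hz ↦
    hHh hz ▸ ht ▸ h.map_source (hs ▸ hz)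
  have hmaps : MapsTo H (closedBall 0 1) (closedBall 0 1) :=
    ball_union_sphere (x := (0 : ℂ)) (ε := 1) ▸ hHb.union_union hHs
  have hnorm (z : ℂ) (hz : z ∈ closedBall 0 1) : ‖H z‖ = 1 ↔ ‖z‖ = 1 := by
    refine ⟨fun hHz ↦ ?_, fun hz ↦ mem_sphere_zero_iff_norm.1 (hHs (by simpa using hz))⟩
    by_contra hne
    have := hHb (mem_ball_zero_iff.2 ((mem_closedBall_zero_iff.1 hz).lt_of_ne hne))
    exact (mem_ball_zero_iff.1 this).ne hHz
  have hinj : InjOn H (closedBall 0 1) := fun a ha b hb hab ↦ by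
    by_cases ha1 : ‖a‖ = 1
    · have hHa := (hnorm a ha).2 ha1
      exact eq_of_conformal_of_mem_sphere hφ hφc hs ht hd hH hHh (by simpa using ha1)
        (by simpa using (hnorm b hb).1 (hab ▸ hHa)) (by simpa using hHa) hab
    · have hb1 : ‖b‖ ≠ 1 := fun hb1 ↦ ha1 ((hnorm a ha).1 (hab ▸ (hnorm b hb).2 hb1))
      have ha' := mem_ball_zero_iff.2 ((mem_closedBall_zero_iff.1 ha).lt_of_ne ha1)
      have hb' := mem_ball_zero_iff.2 ((mem_closedBall_zero_iff.1 hb).lt_of_ne hb1)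
      exact h.injOn (hs ▸ ha') (hs ▸ hb') (hHh ha' ▸ hHh hb' ▸ hab)
  have hsurj : SurjOn H (closedBall 0 1) (closedBall 0 1) := by
    rw [SurjOn, ← closure_ball _ one_ne_zero]
    refine closure_minimal (fun w hw ↦ ⟨h.symm w, subset_closure ?_, ?_⟩) ?_
    · exact hs ▸ h.map_target (ht ▸ hw)
    · rw [hHh (hs ▸ h.map_target (ht ▸ hw)), h.right_inv (ht ▸ hw)]
    · rw [closure_ball _ one_ne_zero]
      exact ((isCompact_closedBall _ _).image_of_continuousOn hH).isClosed
  have : CompactSpace (closedBall (0 : ℂ) 1) :=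
    isCompact_iff_compactSpace.1 (isCompact_closedBall 0 1)
  let e : closedBall (0 : ℂ) 1 ≃ₜ closedBall (0 : ℂ) 1 :=
    Continuous.homeoOfEquivCompactToT2 (f := BijOn.equiv H ⟨hmaps, hinj, hsurj⟩)
      (hH.mapsToRestrict hmaps)
  obtain ⟨m, hme, hlt, hle⟩ := exists_homeomorph_eqOn_closedBall e fun z ↦ hnorm z z.2
  exact ⟨m, fun z hz ↦ (hme ⟨z, ball_subset_closedBall hz⟩).trans (hHh hz), hlt, hle⟩

end ConformalOnDisc

theorem exists_openPartialHomeomorph_differentiableOn_symm_image_ball {φ : ℂ → ℂ}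
    (hφ : IsOpenEmbedding φ) :
    ∃ e : OpenPartialHomeomorph ℂ ℂ, e.source = φ '' ball 0 1 ∧ e.target = ball 0 1 ∧
      DifferentiableOn ℂ e.symm (ball 0 1) := by
  have hbdd : Bornology.IsBounded (φ '' ball 0 1) :=
    ((isCompact_closedBall 0 1).image hφ.continuous).isBounded.subset
      (image_mono ball_subset_closedBall)
  have hsc : IsSimplyConnected (φ '' ball 0 1) := by
    rw [hφ.isEmbedding.isSimplyConnected_image]
    have := (convex_ball (0 : ℂ) 1).contractibleSpace ⟨0, mem_ball_self one_pos⟩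
    exact inferInstanceAs (SimplyConnectedSpace (ball (0 : ℂ) 1))
  obtain ⟨e, hes, het, hed⟩ := riemann_mapping (hφ.isOpenMap _ isOpen_ball) hsc
    fun huniv ↦ NormedSpace.unbounded_univ ℂ ℂ (huniv ▸ hbdd)
  exact ⟨e, hes, het, het ▸ differentiableOn_symm_of_differentiableOn e (hes ▸ hed)⟩

-- Carathéodory: the inverse of the Riemann map of `φ '' ball 0 1`, read through `φ`, extends to
-- the closed disc, hence radially to the plane.
theorem exists_homeomorph_differentiableOn_comp {φ : ℂ → ℂ} (hφ : IsOpenEmbedding φ) :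
    ∃ m : ℂ ≃ₜ ℂ, (∀ z, ‖m z‖ < 1 ↔ ‖z‖ < 1) ∧ (∀ z, ‖m z‖ ≤ 1 ↔ ‖z‖ ≤ 1) ∧
      DifferentiableOn ℂ (φ ∘ m) (ball 0 1) := by
  obtain ⟨e, hes, het, hsymm⟩ := exists_openPartialHomeomorph_differentiableOn_symm_image_ball hφ
  have hcompact : IsCompact (φ '' closedBall 0 1) := (isCompact_closedBall 0 1).image hφ.continuous
  have himage : e.symm '' ball 0 1 = φ '' ball 0 1 :=
    (congrArg _ het.symm).trans (e.symm_image_target_eq_source.trans hes)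
  have hsymm_mem : MapsTo e.symm (ball 0 1) (φ '' ball 0 1) := himage ▸ mapsTo_image _ _
  let φ' : OpenPartialHomeomorph ℂ ℂ := hφ.toOpenPartialHomeomorph φ
  have hφ'_target : φ'.target = range φ := image_univ
  let h := e.symm.trans φ'.symm
  have hs : h.source = ball 0 1 := by
    refine (OpenPartialHomeomorph.trans_source ..).trans ?_
    rw [e.symm_source, φ'.symm_source, het, hφ'_target, inter_eq_left]
    exact fun z hz ↦ image_subset_range _ _ (hsymm_mem hz)
  have ht : h.target = ball 0 1 := by
    refine (OpenPartialHomeomorph.trans_target ..).trans ?_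
    rw [φ'.symm_target, φ'.symm_symm, e.symm_target, hes]
    exact (univ_inter _).trans (preimage_image_eq _ hφ.injective)
  have hφh : EqOn (φ ∘ h) e.symm (ball 0 1) := fun z hz ↦
    φ'.right_inv (hφ'_target ▸ image_subset_range _ _ (hsymm_mem hz))
  have hφ'_unif : UniformContinuousOn φ'.symm (φ '' closedBall 0 1) :=
    hcompact.uniformContinuousOn_of_continuous
      (φ'.continuousOn_symm.mono (hφ'_target ▸ image_subset_range _ _))
  have hcrosscuts : HasSmallCrosscuts e.symm :=
    hasSmallCrosscuts_of_injOn hsymm (het ▸ e.symm.injOn)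
      (himage.symm ▸ hcompact.isBounded.subset (image_mono ball_subset_closedBall))
  obtain ⟨m, hmh, hlt, hle⟩ := exists_homeomorph_eqOn_ball_of_conformal hφ.injective hφ.continuous
    hs ht (hsymm.congr hφh) (hcrosscuts.comp
      (hsymm_mem.mono_right (image_mono ball_subset_closedBall)) hφ'_unif)
  exact ⟨m, hlt, hle, hsymm.congr fun z hz ↦ (congrArg φ (hmh hz)).trans (hφh hz)⟩

/-! ### Locally flat sets -/

section FlatAt

open OpenPartialHomeomorph

variable {X Y : Type*} [TopologicalSpace X] [TopologicalSpace Y] {A B W : Set X} {x : X}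

/-- The set `A` is locally flat at `x` if some chart around `x` takes it to a half-plane. -/
def FlatAt (A : Set X) (x : X) : Prop :=
  ∃ e : OpenPartialHomeomorph X ℂ, x ∈ e.source ∧ e.IsImage A {z | z.im ≤ 0}

/-- A closed set which is locally flat at each of its frontier points: an embedded surface with
boundary, of codimension zero. -/
structure HasFlatFrontier (A : Set X) : Prop where
  isClosed : IsClosed A
  flatAt : ∀ x ∈ frontier A, FlatAt A x

theorem FlatAt.congr (h : FlatAt A x) (hAB : ∀ᶠ y in 𝓝 x, y ∈ A ↔ y ∈ B) : FlatAt B x := by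
  obtain ⟨e, hx, he⟩ := h
  obtain ⟨s, hs, hso, hxs⟩ := eventually_nhds_iff.1 hAB
  exact ⟨e.restrOpen s hso, ⟨hx, hxs⟩, fun y hy ↦ (he hy.1).trans (hs y hy.2)⟩

theorem mem_frontier_congr (hAB : ∀ᶠ y in 𝓝 x, y ∈ A ↔ y ∈ B) :
    x ∈ frontier A ↔ x ∈ frontier B := by
  simp only [frontier_eq_closure_inter_closure, mem_inter_iff, mem_closure_iff_frequently,
    mem_compl_iff, frequently_congr hAB, frequently_congr (hAB.mono fun _ ↦ Iff.not)]

theorem HasFlatFrontier.flatAt_of_eventually (h : HasFlatFrontier A)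
    (hAB : ∀ᶠ y in 𝓝 x, y ∈ A ↔ y ∈ B) (hx : x ∈ frontier B) : FlatAt B x :=
  (h.flatAt x ((mem_frontier_congr hAB).2 hx)).congr hAB

theorem FlatAt.of_isImage {e : OpenPartialHomeomorph Y X} {C : Set Y} (he : e.IsImage C A) {y : Y}
    (hy : y ∈ e.source) (h : FlatAt A (e y)) : FlatAt C y := by
  obtain ⟨e', hx, he'⟩ := h
  exact ⟨e.trans e', e.trans_source e' ▸ ⟨hy, hx⟩, fun z hz ↦
    (he' (e.trans_source e' ▸ hz).2).trans (he (e.trans_source e' ▸ hz).1)⟩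

theorem FlatAt.preimage {j : Y → X} (hj : IsOpenEmbedding j) {y : Y} (h : FlatAt A (j y)) :
    FlatAt (j ⁻¹' A) y :=
  have : Nonempty Y := ⟨y⟩
  h.of_isImage (e := hj.toOpenPartialHomeomorph j) (fun _ _ ↦ Iff.rfl) (mem_univ y)

theorem FlatAt.of_preimage {j : Y → X} (hj : IsOpenEmbedding j) {y : Y} (h : FlatAt (j ⁻¹' A) y) :
    FlatAt A (j y) := by
  have : Nonempty Y := ⟨y⟩
  let j' := hj.toOpenPartialHomeomorph j
  have hy : j'.symm (j y) = y := j'.left_inv (mem_univ y)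
  have hj' : j'.IsImage (j ⁻¹' A) A := fun _ _ ↦ Iff.rfl
  exact FlatAt.of_isImage hj'.symm (j'.map_source (mem_univ y)) (hy.symm ▸ h)

theorem HasFlatFrontier.preimage {j : Y → X} (hj : IsOpenEmbedding j) (h : HasFlatFrontier A) :
    HasFlatFrontier (j ⁻¹' A) where
  isClosed := h.isClosed.preimage hj.continuous
  flatAt y hy := (h.flatAt (j y)
    (by rwa [← hj.isOpenMap.preimage_frontier_eq_frontier_preimage hj.continuous] at hy)).preimage
      hj

theorem mem_frontier_iff_im_eq_zero {e : OpenPartialHomeomorph X ℂ}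
    (he : e.IsImage A {z | z.im ≤ 0}) (hx : x ∈ e.source) : x ∈ frontier A ↔ (e x).im = 0 := by
  rw [← he.frontier hx, frontier_setOfPred_im_le]
  rfl

theorem exists_isOpenEmbedding_eq_univBall (e : OpenPartialHomeomorph X ℂ) (hx : x ∈ e.source)
    (hW : W ∈ 𝓝 x) :
    ∃ δ > 0, ∃ Ψ : ℂ → X, IsOpenEmbedding Ψ ∧ Ψ 0 = x ∧ range Ψ ⊆ e.source ∩ W ∧
      ∀ z, e (Ψ z) = univBall (e x) δ z := by
  have hnhds : e.target ∩ e.symm ⁻¹' W ∈ 𝓝 (e x) :=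
    inter_mem (e.open_target.mem_nhds (e.map_source hx))
      ((e.continuousAt_symm (e.map_source hx)).preimage_mem_nhds (by rwa [e.left_inv hx]))
  obtain ⟨δ, hδ, hball⟩ := Metric.mem_nhds_iff.1 hnhds
  have hmem (z : ℂ) : univBall (e x) δ z ∈ e.target ∩ e.symm ⁻¹' W :=
    hball (univBall_target (e x) hδ ▸ (univBall (e x) δ).map_source (by simp))
  have hsource : ((univBall (e x) δ).trans e.symm).source = univ :=
    eq_univ_of_forall fun z ↦ ⟨by simp, (hmem z).1⟩
  refine ⟨δ, hδ, _, isOpenEmbedding _ hsource, ?_, ?_, fun z ↦ e.right_inv (hmem z).1⟩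
  · exact (congrArg e.symm (univBall_apply_zero _ _)).trans (e.left_inv hx)
  · rintro _ ⟨z, rfl⟩
    exact ⟨e.map_target (hmem z).1, (hmem z).2⟩

theorem univBall_im_le_zero_iff {c : ℂ} {r : ℝ} (hr : 0 < r) (hc : c.im = 0) (z : ℂ) :
    (univBall c r z).im ≤ 0 ↔ z.im ≤ 0 := by
  have him : (univBall c r z).im = r * (√(1 + ‖z‖ ^ 2))⁻¹ * z.im := by
    rw [univBall, dif_pos hr]
    change (r • univUnitBall z +ᵥ c).im = _
    simp [univUnitBall_apply, hc, mul_assoc]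
  rw [him]
  exact ⟨fun h ↦ nonpos_of_mul_nonpos_right h (by positivity),
    mul_nonpos_of_nonneg_of_nonpos (by positivity)⟩

theorem FlatAt.exists_isOpenEmbedding (hx : x ∈ frontier A) (h : FlatAt A x) (hW : W ∈ 𝓝 x) :
    ∃ Ψ : ℂ → X, IsOpenEmbedding Ψ ∧ Ψ 0 = x ∧ range Ψ ⊆ W ∧ ∀ z, Ψ z ∈ A ↔ z.im ≤ 0 := by
  obtain ⟨e, hxe, he⟩ := h
  obtain ⟨δ, hδ, Ψ, hΨ, hΨ0, hrange, heΨ⟩ := exists_isOpenEmbedding_eq_univBall e hxe hW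
  refine ⟨Ψ, hΨ, hΨ0, hrange.trans inter_subset_right, fun z ↦ ?_⟩
  rw [← he (hrange (mem_range_self z)).1, heΨ]
  exact univBall_im_le_zero_iff hδ ((mem_frontier_iff_im_eq_zero he hxe).1 hx) z

end FlatAt

theorem exists_homeomorph_norm_lt_one_iff_im_pos :
    ∃ k : ℂ ≃ₜ ℂ, ‖k 0‖ = 1 ∧ ∀ᶠ z in 𝓝 (0 : ℂ), ‖k z‖ < 1 ↔ 0 < z.im := by
  set D : Set ℂ := {z | 0 < z.im} ∩ ball 0 1
  have hDo : IsOpen D := (isOpen_lt continuous_const continuous_im).inter isOpen_ball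
  have hfrontier : (0 : ℂ) ∈ frontier D ∩ ball 0 1 := by
    rw [frontier_inter_open_inter isOpen_ball, frontier_setOfPred_lt_im]
    simp
  have hne : D.Nonempty := closure_nonempty_iff.1 ⟨0, frontier_subset_closure hfrontier.1⟩
  obtain ⟨k, hkint, -, hkfr⟩ := exists_homeomorph_image_interior_closure_frontier_eq_unitBall
    ((convex_halfSpace_im_gt 0).inter (convex_ball 0 1)) (hDo.interior_eq.symm ▸ hne)
    (isBounded_ball.subset inter_subset_right)
  refine ⟨k, mem_sphere_zero_iff_norm.1 (hkfr ▸ mem_image_of_mem k hfrontier.1), ?_⟩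
  filter_upwards [ball_mem_nhds (0 : ℂ) one_pos] with z hz
  rw [← mem_ball_zero_iff, ← hkint, k.injective.mem_set_image, hDo.interior_eq]
  exact and_iff_left hz

theorem FlatAt.exists_conformal_parametrization {A : Set ℂ} {p : ℂ} (hp : p ∈ frontier A)
    (h : FlatAt A p) :
    ∃ Ψ : ℂ → ℂ, IsOpenEmbedding Ψ ∧ DifferentiableOn ℂ Ψ (ball 0 1) ∧
      Ψ 1 = p ∧ ∀ᶠ z in 𝓝 1, Ψ z ∈ A ↔ 1 ≤ ‖z‖ := by
  obtain ⟨Ψ, hΨ, hΨ0, -, hΨA⟩ := h.exists_isOpenEmbedding hp univ_mem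
  obtain ⟨k, hk0, hk⟩ := exists_homeomorph_norm_lt_one_iff_im_pos
  obtain ⟨m, hlt, hle, hdiff⟩ :=
    exists_homeomorph_differentiableOn_comp (hΨ.comp k.symm.isOpenEmbedding)
  have ha : ‖m.symm (k 0)‖ = 1 := by
    refine le_antisymm ((hle _).1 ?_) (not_lt.1 fun hlt1 ↦ ((hlt _).2 hlt1).ne ?_) <;> simp [hk0]
  set a := m.symm (k 0)
  let ρ : ℂ ≃ₜ ℂ := Homeomorph.mulLeft₀ a (norm_ne_zero_iff.1 (ha ▸ one_ne_zero))
  have hnorm (z : ℂ) : ‖a * z‖ = ‖z‖ := by rw [norm_mul, ha, one_mul]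
  have hρ1 : k.symm (m (ρ 1)) = 0 := by simp [ρ, a]
  refine ⟨fun z ↦ Ψ (k.symm (m (ρ z))),
    hΨ.comp (k.symm.isOpenEmbedding.comp (m.isOpenEmbedding.comp ρ.isOpenEmbedding)),
    hdiff.comp (differentiable_id.const_mul a).differentiableOn fun z hz ↦ ?_,
    (congrArg Ψ hρ1).trans hΨ0, ?_⟩
  · exact mem_ball_zero_iff.2 ((hnorm z).trans_lt (mem_ball_zero_iff.1 hz))
  · have hcont : Tendsto (fun z ↦ k.symm (m (ρ z))) (𝓝 1) (𝓝 0) :=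
      Continuous.tendsto' (by fun_prop) _ _ hρ1
    filter_upwards [hcont.eventually hk] with z hz
    rw [k.apply_symm_apply, hlt, show ‖ρ z‖ = ‖z‖ from hnorm z] at hz
    rw [hΨA, ← not_lt, ← hz, not_lt]

theorem FlatAt.exists_conformal_chart {A : Set ℂ} {p : ℂ} (hp : p ∈ frontier A)
    (h : FlatAt A p) :
    ∃ e : OpenPartialHomeomorph ℂ ℂ, p ∈ e.source ∧ e p = 0 ∧ e.IsImage A {z | z.im ≤ 0} ∧
      DifferentiableOn ℂ e (e.source \ A) := by
  obtain ⟨Ψ, hΨ, hdiff, hΨ1, hΨA⟩ := h.exists_conformal_parametrization hp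
  let P := ((Homeomorph.mulLeft₀ I I_ne_zero).toOpenPartialHomeomorph.trans
    expOpenPartialHomeomorph).trans (hΨ.toOpenPartialHomeomorph Ψ)
  have hnorm (z : ℂ) : 1 ≤ ‖exp (I * z)‖ ↔ z.im ≤ 0 := by simp [norm_exp]
  have h0 : (0 : ℂ) ∈ P.source := by
    simpa [P, expOpenPartialHomeomorph] using Real.pi_pos
  have hcont : Tendsto (fun z ↦ exp (I * z)) (𝓝 0) (𝓝 1) :=
    Continuous.tendsto' (by fun_prop) _ _ (by simp)
  obtain ⟨s, hs, hso, h0s⟩ := _root_.eventually_nhds_iff.1 (hcont.eventually hΨA)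
  let e := (P.restrOpen s hso).symm
  have hP : ⇑P = Ψ ∘ fun z ↦ exp (I * z) := rfl
  have hP0 : P 0 = p := by simp [hP, hΨ1]
  have heA : e.IsImage A {z | z.im ≤ 0} :=
    OpenPartialHomeomorph.IsImage.symm fun z hz ↦ (hs z hz.2).trans (hnorm z)
  have himage : e.source ∩ e ⁻¹' {z | 0 < z.im} = e.source \ A := by
    ext w
    refine and_congr_right fun hw ↦ ?_
    rw [← heA hw]
    exact (not_le (a := (e w).im)).symm
  have hpos : IsOpen {z : ℂ | 0 < z.im} := isOpen_lt continuous_const continuous_im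
  refine ⟨e, ?_, ?_, heA, ?_⟩
  · exact hP0 ▸ (P.restrOpen s hso).map_source ⟨h0, h0s⟩
  · exact hP0 ▸ (P.restrOpen s hso).left_inv ⟨h0, h0s⟩
  · rw [← himage]
    refine differentiableOn_symm_of_differentiableOn ((P.restrOpen s hso).restrOpen _ hpos)
      (hdiff.comp (g := Ψ) (f := fun z ↦ exp (I * z)) (by fun_prop) fun z hz ↦ ?_)
    rw [mem_ball_zero_iff, ← not_le, hnorm, not_le]
    exact hz.2

section FrontierPiece

variable {X : Type*} [TopologicalSpace X] {A W : Set X}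

theorem preperfect_union {C D : Set X} (hC : Preperfect C) (hD : Preperfect D) :
    Preperfect (C ∪ D) := by
  rintro x (hx | hx)
  · exact (hC x hx).mono (principal_mono.2 subset_union_left)
  · exact (hD x hx).mono (principal_mono.2 subset_union_right)

theorem FlatAt.exists_arc [T1Space X] {x : X} (hx : x ∈ frontier A) (h : FlatAt A x)
    (hW : W ∈ 𝓝 x) :
    ∃ J, IsCompact J ∧ Preperfect J ∧ J ⊆ frontier A ∩ W ∧ x ∉ closure (frontier A \ J) ∧
      (J ∩ closure (frontier A \ J)).Finite := by
  obtain ⟨Ψ, hΨ, rfl, hrange, hΨA⟩ := h.exists_isOpenEmbedding hx hW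
  have hfr (z : ℂ) : Ψ z ∈ frontier A ↔ z.im = 0 := by
    rw [← mem_preimage, hΨ.isOpenMap.preimage_frontier_eq_frontier_preimage hΨ.continuous,
      show Ψ ⁻¹' A = {z | z.im ≤ 0} from Set.ext hΨA, frontier_setOfPred_im_le]
    rfl
  let γ : ℝ → X := fun t ↦ Ψ t
  have hγ : Continuous γ := hΨ.continuous.comp continuous_ofReal
  have hγinj : Function.Injective γ := hΨ.injective.comp ofReal_injective
  have hnotMem {t : ℝ} (ht : t ∈ Ioo (-1) 1) : γ t ∉ closure (frontier A \ γ '' Icc (-1) 1) := by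
    have hopen : IsOpen (Ψ '' (re ⁻¹' Ioo (-1) 1)) :=
      hΨ.isOpenMap _ (isOpen_Ioo.preimage continuous_re)
    refine fun hcl ↦ ?_
    obtain ⟨_, ⟨z, hz, rfl⟩, hzA, hzJ⟩ := mem_closure_iff.1 hcl _ hopen ⟨t, ht, rfl⟩
    exact hzJ ⟨z.re, Ioo_subset_Icc_self hz, congrArg Ψ (Complex.ext rfl ((hfr z).1 hzA).symm)⟩
  refine ⟨γ '' Icc (-1) 1, isCompact_Icc.image hγ, ?_, ?_, ?_, ?_⟩
  · refine (isPreconnected_Icc.image γ hγ.continuousOn).preperfect_of_nontrivial ?_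
    have hne : (Icc (-1 : ℝ) 1).Nontrivial :=
      ⟨-1, by norm_num, 1, by norm_num, by norm_num⟩
    exact hne.image hγinj
  · rintro _ ⟨t, -, rfl⟩
    exact ⟨(hfr t).2 (ofReal_im t), hrange (mem_range_self _)⟩
  · exact hnotMem (t := 0) (by norm_num)
  · refine (toFinite {γ (-1), γ 1}).subset ?_
    rintro _ ⟨⟨t, ht, rfl⟩, hcl⟩
    by_contra hne
    have hne' : t ≠ -1 ∧ t ≠ 1 := ⟨fun h ↦ hne (.inl (h ▸ rfl)), fun h ↦ hne (.inr (h ▸ rfl))⟩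
    exact hnotMem ⟨ht.1.lt_of_ne' hne'.1, ht.2.lt_of_ne hne'.2⟩ hcl

theorem exists_isCompact_frontier_piece [T1Space X] {K : Set X} (hK : IsCompact K)
    (hKA : K ⊆ frontier A) (hA : ∀ x ∈ K, FlatAt A x) (hW : W ∈ 𝓝ˢ K) :
    ∃ I, IsCompact I ∧ Preperfect I ∧ I ⊆ frontier A ∩ W ∧
      Disjoint K (closure (frontier A \ I)) ∧ (I ∩ closure (frontier A \ I)).Finite := by
  refine hK.induction_on (p := fun s ↦ ∃ I, IsCompact I ∧ Preperfect I ∧ I ⊆ frontier A ∩ W ∧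
    Disjoint s (closure (frontier A \ I)) ∧ (I ∩ closure (frontier A \ I)).Finite) ?_ ?_ ?_ ?_
  · exact ⟨∅, isCompact_empty, fun _ ↦ False.elim, empty_subset _, empty_disjoint _, by simp⟩
  · rintro s t hst ⟨I, hI, hpI, hIW, hdisj, hfin⟩
    exact ⟨I, hI, hpI, hIW, hdisj.mono_left hst, hfin⟩
  · rintro s t ⟨I, hI, hpI, hIW, hsI, hfI⟩ ⟨J, hJ, hpJ, hJW, htJ, hfJ⟩
    have hleI : closure (frontier A \ (I ∪ J)) ⊆ closure (frontier A \ I) :=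
      closure_mono (sdiff_subset_sdiff_right subset_union_left)
    have hleJ : closure (frontier A \ (I ∪ J)) ⊆ closure (frontier A \ J) :=
      closure_mono (sdiff_subset_sdiff_right subset_union_right)
    refine ⟨I ∪ J, hI.union hJ, preperfect_union hpI hpJ, union_subset hIW hJW,
      disjoint_union_left.2 ⟨hsI.mono_right hleI, htJ.mono_right hleJ⟩, ?_⟩
    rw [union_inter_distrib_right]
    exact (hfI.subset (inter_subset_inter_right _ hleI)).union
      (hfJ.subset (inter_subset_inter_right _ hleJ))
  · intro x hx
    obtain ⟨J, hJ, hpJ, hJW, hxJ, hfin⟩ :=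
      (hA x hx).exists_arc (hKA hx) (mem_nhdsSet_iff_forall.1 hW x hx)
    exact ⟨(closure (frontier A \ J))ᶜ,
      mem_nhdsWithin_of_mem_nhds (isClosed_closure.compl_mem_nhds hxJ),
      J, hJ, hpJ, hJW, disjoint_compl_left, hfin⟩

end FrontierPiece

/-! ### Functions dividing the frontier -/

theorem eventually_mem_or_eventually_notMem {X ι : Type*} [TopologicalSpace X] {l : Filter X}
    {p : ι → Prop} {s : ι → Set X} (hl : l.HasBasis p s) (hs : ∀ i, p i → IsPreconnected (s i))
    {S : Set X} (h : ∀ᶠ x in l, x ∉ frontier S) : (∀ᶠ x in l, x ∈ S) ∨ ∀ᶠ x in l, x ∉ S := by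
  obtain ⟨i, hi, hsub⟩ := hl.eventually_iff.1 h
  have hcover : s i ⊆ interior S ∪ (closure S)ᶜ := fun x hx ↦ by
    by_contra hx'
    rw [mem_union, not_or, notMem_compl_iff] at hx'
    exact hsub hx ⟨hx'.2, hx'.1⟩
  refine ((hs i hi).subset_or_subset isOpen_interior isClosed_closure.isOpen_compl
    (disjoint_compl_right.mono_left (interior_subset.trans subset_closure)) hcover).imp ?_ ?_
  · exact fun hS ↦ mem_of_superset (hl.mem_of_mem hi) (hS.trans interior_subset)
  · exact fun hS ↦ mem_of_superset (hl.mem_of_mem hi) fun x hx hxS ↦ hS hx (subset_closure hxS)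

theorem exists_sign_eventually_mem_iff {S : Set ℝ} (h0 : 0 ∈ S) (hacc : AccPt 0 (𝓟 S))
    (hcl : 0 ∈ closure Sᶜ) (hfr : ∀ᶠ t in 𝓝[≠] 0, t ∉ frontier S) :
    ∃ σ : ℝ, (σ = 1 ∨ σ = -1) ∧ ∀ᶠ t in 𝓝 0, t ∈ S ↔ σ * t ≤ 0 := by
  have hacc' : ∃ᶠ t in 𝓝[≠] 0, t ∈ S := accPt_iff_frequently_nhdsNE.1 hacc
  have hcl' : ∃ᶠ t in 𝓝 0, t ∉ S := mem_closure_iff_frequently.1 hcl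
  have hsplit {P : ℝ → Prop} (hl : ∀ᶠ t in 𝓝[<] 0, P t) (hr : ∀ᶠ t in 𝓝[>] 0, P t) (h : P 0) :
      ∀ᶠ t in 𝓝 0, P t := by
    rw [← nhdsNE_sup_pure, ← nhdsLT_sup_nhdsGT]
    exact eventually_sup.2 ⟨eventually_sup.2 ⟨hl, hr⟩, h⟩
  rw [← nhdsLT_sup_nhdsGT] at hfr hacc'
  rw [eventually_sup] at hfr
  rcases eventually_mem_or_eventually_notMem (nhdsLT_basis 0) (fun _ _ ↦ isPreconnected_Ioo) hfr.1
    with hl | hl <;>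
  rcases eventually_mem_or_eventually_notMem (nhdsGT_basis 0) (fun _ _ ↦ isPreconnected_Ioo) hfr.2
    with hr | hr
  · exact (hcl' ((hsplit hl hr h0).mono fun t ht ↦ not_not.2 ht)).elim
  · refine ⟨1, .inl rfl, hsplit ?_ ?_ (by simpa)⟩
    · filter_upwards [hl, self_mem_nhdsWithin] with t ht (hneg : t < 0)
      simpa [ht] using hneg.le
    · filter_upwards [hr, self_mem_nhdsWithin] with t ht (hpos : 0 < t)
      simpa [ht] using hpos
  · refine ⟨-1, .inr rfl, hsplit ?_ ?_ (by simpa)⟩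
    · filter_upwards [hl, self_mem_nhdsWithin] with t ht (hneg : t < 0)
      simpa [ht] using hneg
    · filter_upwards [hr, self_mem_nhdsWithin] with t ht (hpos : 0 < t)
      simpa [ht] using hpos.le
  · exact (hacc' (eventually_sup.2 ⟨hl, hr⟩)).elim

/-- The homeomorphism of the plane straightening the corner `{z | min z.re z.im ≤ 0}` to the lower
half-plane. -/
noncomputable def cornerHomeomorph : ℂ ≃ₜ ℂ where
  toFun z := ((z.im - z.re : ℝ) : ℂ) + (min z.re z.im : ℝ) * I
  invFun w := ((w.im + max (-w.re) 0 : ℝ) : ℂ) + (w.im + max w.re 0 : ℝ) * I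
  left_inv z := by
    rcases le_total z.re z.im with h | h <;> apply Complex.ext <;> simp [h]
  right_inv w := by
    rcases le_total w.re 0 with h | h <;> apply Complex.ext <;> simp [h]
  continuous_toFun := by fun_prop
  continuous_invFun := by fun_prop

theorem flatAt_im_nonpos_or_mul_re_nonpos {σ : ℝ} (hσ : σ = 1 ∨ σ = -1) :
    FlatAt {z : ℂ | z.im ≤ 0 ∨ σ * z.re ≤ 0} 0 := by
  have hcorner : FlatAt {z : ℂ | z.im ≤ 0 ∨ z.re ≤ 0} 0 :=
    ⟨cornerHomeomorph.toOpenPartialHomeomorph, mem_univ _, fun z _ ↦ by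
      simp [cornerHomeomorph, or_comm]⟩
  rcases hσ with rfl | rfl
  · simpa using hcorner
  · let r : ℂ ≃ₜ ℂ := conjCLE.toHomeomorph.trans (Homeomorph.neg ℂ)
    have hr : FlatAt {z : ℂ | z.im ≤ 0 ∨ z.re ≤ 0} (r 0) := by simpa [r] using hcorner
    simpa [r] using hr.preimage r.isOpenEmbedding

theorem contDiffAt_re_and_fderiv_ne_zero {U : Set ℂ} {f : ℂ → ℂ} {z : ℂ} (hU : IsOpen U)
    (hf : DifferentiableOn ℂ f U) (hinj : InjOn f U) (hz : z ∈ U) :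
    ContDiffAt ℝ 2 (fun w ↦ (f w).re) z ∧ fderiv ℝ (fun w ↦ (f w).re) z ≠ 0 := by
  have hfz : ContDiffAt ℂ 2 f z := (hf.contDiffOn hU).contDiffAt (hU.mem_nhds hz)
  refine ⟨reCLM.contDiff.contDiffAt.comp z (hfz.restrict_scalars ℝ), fun h0 ↦ ?_⟩
  have hne : deriv f z ≠ 0 := deriv_ne_zero_of_injOn hU hf hinj hz
  have hfderiv := (hfz.differentiableAt two_ne_zero).hasDerivAt.hasFDerivAt.restrictScalars ℝ
  have hre := (reCLM.hasFDerivAt (x := f z)).comp z hfderiv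
  have happly := congrArg (fun L : ℂ →L[ℝ] ℝ ↦ L (deriv f z)⁻¹) (hre.fderiv.symm.trans h0)
  simp [hne] at happly

/-- Near `w` the sign of `X` tells the piece `I` of the frontier of `A` from the rest of the
frontier: `X` is negative on `I` and positive off it, it is a `C²` submersion off `A`, and where
`I` meets the rest of the frontier adding `{X ≤ 0}` to `A` gives a locally flat set. -/
structure IsDividingAt (A I : Set ℂ) (X : ℂ → ℝ) (w : ℂ) : Prop where
  continuousAt : ContinuousAt X w
  contDiffAt : w ∉ A → ContDiffAt ℝ 2 X w
  fderiv_ne_zero : w ∉ A → fderiv ℝ X w ≠ 0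
  neg : w ∈ I \ closure (frontier A \ I) → X w < 0
  pos : w ∈ frontier A \ I → 0 < X w
  flatAt : w ∈ I ∩ closure (frontier A \ I) → FlatAt (A ∪ {y | X y ≤ 0}) w

section Dividing

variable {A I : Set ℂ}

theorem IsDividingAt.congr {X Y : ℂ → ℝ} {w : ℂ} (h : IsDividingAt A I X w) (hXY : X =ᶠ[𝓝 w] Y) :
    IsDividingAt A I Y w where
  continuousAt := h.continuousAt.congr hXY
  contDiffAt hw := (h.contDiffAt hw).congr_of_eventuallyEq hXY.symm
  fderiv_ne_zero hw := by rw [← hXY.fderiv_eq]; exact h.fderiv_ne_zero hw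
  neg hw := hXY.eq_of_nhds ▸ h.neg hw
  pos hw := hXY.eq_of_nhds ▸ h.pos hw
  flatAt hw := (h.flatAt hw).congr (hXY.mono fun y hy ↦ by simp [hy])

theorem eventually_notMem_frontier_preimage {X : Type*} [TopologicalSpace X] [T1Space X]
    {I Z : Set X} {γ : ℝ → X} (hI : IsClosed I) (hfin : (I ∩ closure (Z \ I)).Finite)
    (hγ : ∀ᶠ t in 𝓝 0, ContinuousAt γ t) (hγZ : ∀ᶠ t in 𝓝 0, γ t ∈ Z)
    (hγne : ∀ᶠ t in 𝓝[≠] 0, γ t ≠ γ 0) : ∀ᶠ t in 𝓝[≠] 0, t ∉ frontier (γ ⁻¹' I) := by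
  have hfin' : IsClosed ((I ∩ closure (Z \ I)) \ {γ 0}) := hfin.sdiff.isClosed
  have hoff : ∀ᶠ t in 𝓝 0, γ t ∉ (I ∩ closure (Z \ I)) \ {γ 0} :=
    hγ.self_of_nhds.eventually (hfin'.isOpen_compl.mem_nhds (by simp))
  filter_upwards [hγne, nhdsWithin_le_nhds hoff, nhdsWithin_le_nhds hγ,
    nhdsWithin_le_nhds hγZ.eventually_nhds] with t hne hoff hcont hZ hfr
  by_cases hcl : γ t ∈ closure (Z \ I)
  · have htI : γ t ∉ I := fun htI ↦ hoff ⟨⟨htI, hcl⟩, hne⟩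
    refine (mem_closure_iff_frequently.1 (frontier_subset_closure hfr)) ?_
    exact hcont.eventually (hI.isOpen_compl.mem_nhds htI)
  · refine hfr.2 (mem_interior_iff_mem_nhds.2 ?_)
    filter_upwards [hZ, hcont.eventually (isClosed_closure.isOpen_compl.mem_nhds hcl)]
      with t' ht'Z ht'cl
    by_contra ht'I
    exact ht'cl (subset_closure ⟨ht'Z, ht'I⟩)

theorem exists_sign_eventually_mem_iff_of_chart {e : OpenPartialHomeomorph ℂ ℂ} {p : ℂ}
    (hpe : p ∈ e.source) (hep : e p = 0) (he : e.IsImage A {z | z.im ≤ 0})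
    (hI : IsClosed I) (hIp : Preperfect I) (hIA : I ⊆ frontier A)
    (hfin : (I ∩ closure (frontier A \ I)).Finite) (hp : p ∈ I ∩ closure (frontier A \ I)) :
    ∃ σ : ℝ, (σ = 1 ∨ σ = -1) ∧
      ∀ᶠ w in 𝓝 p, w ∈ frontier A → (w ∈ I ↔ σ * (e w).re ≤ 0) := by
  set γ : ℝ → ℂ := fun t ↦ e.symm t
  have hγ0 : γ 0 = p := by simpa [γ, hep] using e.left_inv hpe
  have htarget : ∀ᶠ t : ℝ in 𝓝 0, (t : ℂ) ∈ e.target :=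
    continuous_ofReal.continuousAt.eventually
      (e.open_target.mem_nhds (by simpa [hep] using e.map_source hpe))
  have hre : Tendsto (fun w ↦ (e w).re) (𝓝 p) (𝓝 0) := by
    simpa [hep, Function.comp_def] using
      (continuous_re.tendsto _).comp (e.continuousAt hpe).tendsto
  have hγre : ∀ᶠ w in 𝓝 p, w ∈ frontier A → γ (e w).re = w := by
    filter_upwards [e.open_source.mem_nhds hpe] with w hw hwA
    have him : (((e w).re : ℝ) : ℂ) = e w :=
      Complex.ext rfl ((mem_frontier_iff_im_eq_zero he hw).1 hwA).symm
    simp only [γ, him, e.left_inv hw]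
  have hfr : ∀ᶠ t in 𝓝[≠] 0, t ∉ frontier (γ ⁻¹' I) := by
    refine eventually_notMem_frontier_preimage hI hfin ?_ ?_ ?_
    · filter_upwards [htarget] with t ht
      exact (e.continuousAt_symm ht).comp continuous_ofReal.continuousAt
    · filter_upwards [htarget] with t ht
      rw [mem_frontier_iff_im_eq_zero he (e.map_target ht), e.right_inv ht, ofReal_im]
    · filter_upwards [nhdsWithin_le_nhds htarget, self_mem_nhdsWithin] with t ht hne heq
      have := congrArg e (heq.trans hγ0)
      exact hne (by simpa [γ, e.right_inv ht, hep] using this)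
  have hacc : AccPt 0 (𝓟 (γ ⁻¹' I)) := by
    refine accPt_iff_frequently.2 (hre.frequently ?_)
    refine ((accPt_iff_frequently.1 (hIp p hp.1)).and_eventually hγre).mono ?_
    rintro w ⟨⟨hne, hwI⟩, hw⟩
    refine ⟨fun h0 ↦ hne ?_, ?_⟩
    · rw [← hw (hIA hwI), h0, hγ0]
    · rwa [mem_preimage, hw (hIA hwI)]
  have hcl : 0 ∈ closure (γ ⁻¹' I)ᶜ := by
    refine mem_closure_iff_frequently.2 (hre.frequently ?_)
    refine ((mem_closure_iff_frequently.1 hp.2).and_eventually hγre).mono ?_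
    rintro w ⟨⟨hwA, hwI⟩, hw⟩ hmem
    exact hwI (hw hwA ▸ hmem)
  obtain ⟨σ, hσ, hmem⟩ := exists_sign_eventually_mem_iff (S := γ ⁻¹' I)
    (by rw [mem_preimage, hγ0]; exact hp.1) hacc hcl hfr
  refine ⟨σ, hσ, ?_⟩
  filter_upwards [hγre, hre.eventually hmem] with w hw hwS hwA
  rw [← hwS, mem_preimage, hw hwA]

theorem exists_eventually_isDividingAt (hA : HasFlatFrontier A)
    (hI : IsClosed I) (hIp : Preperfect I) (hIA : I ⊆ frontier A)
    (hfin : (I ∩ closure (frontier A \ I)).Finite) {p : ℂ}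
    (hp : p ∈ I ∩ closure (frontier A \ I)) :
    ∃ X, ∀ᶠ w in 𝓝 p, IsDividingAt A I X w := by
  obtain ⟨e, hpe, hep, he, hdiff⟩ := (hA.flatAt p (hIA hp.1)).exists_conformal_chart (hIA hp.1)
  obtain ⟨σ, hσ, hmem⟩ :=
    exists_sign_eventually_mem_iff_of_chart hpe hep he hI hIp hIA hfin hp
  have hσ0 : σ ≠ 0 := by rcases hσ with rfl | rfl <;> norm_num
  have hX (w : ℂ) (hw : w ∈ e.source \ A) := contDiffAt_re_and_fderiv_ne_zero
    (f := fun w ↦ (σ : ℂ) * e w) (e.open_source.sdiff hA.isClosed) (hdiff.const_mul _)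
    ((mul_right_injective₀ (ofReal_ne_zero.2 hσ0)).comp_injOn (e.injOn.mono sdiff_subset)) hw
  have honly : ∀ᶠ w in 𝓝 p, w ∈ I ∩ closure (frontier A \ I) → w = p := by
    have := (hfin.sdiff (t := {p})).isClosed.isOpen_compl.mem_nhds (x := p) (by simp)
    filter_upwards [this] with w hw hwT
    by_contra hne
    exact hw ⟨hwT, hne⟩
  have hzero {w : ℂ} (hwe : w ∈ e.source) (hwA : w ∈ frontier A) (hre : (e w).re = 0) : w = p :=
    e.injOn hwe hpe ((Complex.ext hre ((mem_frontier_iff_im_eq_zero he hwe).1 hwA)).trans hep.symm)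
  have hflat : FlatAt (A ∪ {y | ((σ : ℂ) * e y).re ≤ 0}) p := by
    have himage : e.IsImage (A ∪ {y | ((σ : ℂ) * e y).re ≤ 0}) {z | z.im ≤ 0 ∨ σ * z.re ≤ 0} :=
      fun w hw ↦ by simpa using or_congr_left (he hw)
    exact (hep.symm ▸ flatAt_im_nonpos_or_mul_re_nonpos hσ : FlatAt _ (e p)).of_isImage himage hpe
  refine ⟨fun w ↦ ((σ : ℂ) * e w).re, ?_⟩
  filter_upwards [hmem, honly, e.open_source.mem_nhds hpe] with w hwI hwp hwe
  refine ⟨?_, fun hwA ↦ (hX w ⟨hwe, hwA⟩).1, fun hwA ↦ (hX w ⟨hwe, hwA⟩).2, fun hw ↦ ?_,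
    fun hw ↦ ?_, fun hw ↦ hwp hw ▸ hflat⟩
  · exact continuous_re.continuousAt.comp (continuousAt_const.mul (e.continuousAt hwe))
  · have hwA := hIA hw.1
    rw [re_ofReal_mul]
    refine ((hwI hwA).1 hw.1).lt_of_ne fun h0 ↦ hw.2 ?_
    rw [hzero hwe hwA ((mul_eq_zero.1 h0).resolve_left hσ0)]
    exact hp.2
  · rw [re_ofReal_mul]
    exact not_le.1 fun h ↦ hw.2 ((hwI hw.1).2 h)

theorem exists_forall_eventuallyEq_of_finite {X β : Type*} [TopologicalSpace X] [T2Space X]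
    {T : Set X} (hT : T.Finite) (f : X → X → β) : ∃ g : X → β, ∀ p ∈ T, g =ᶠ[𝓝 p] f p := by
  classical
  obtain ⟨U, hU, hdisj⟩ := hT.t2_separation
  refine ⟨fun w ↦ if h : ∃ p ∈ T, w ∈ U p then f h.choose w else f w w, fun p hp ↦ ?_⟩
  filter_upwards [(hU p).2.mem_nhds (hU p).1] with w hw
  have h : ∃ p ∈ T, w ∈ U p := ⟨p, hp, hw⟩
  have hchoose : h.choose = p :=
    hdisj.elim_set h.choose_spec.1 hp w h.choose_spec.2 hw
  rw [dif_pos h, hchoose]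

theorem exists_eventually_nhdsSet_isDividingAt (hA : HasFlatFrontier A)
    (hI : IsClosed I) (hIp : Preperfect I) (hIA : I ⊆ frontier A)
    (hfin : (I ∩ closure (frontier A \ I)).Finite) :
    ∃ X, ∀ᶠ w in 𝓝ˢ (I ∩ closure (frontier A \ I)), IsDividingAt A I X w := by
  have hlocal (p : ℂ) : ∃ X, p ∈ I ∩ closure (frontier A \ I) →
      ∀ᶠ w in 𝓝 p, IsDividingAt A I X w := by
    by_cases hp : p ∈ I ∩ closure (frontier A \ I)
    · exact (exists_eventually_isDividingAt hA hI hIp hIA hfin hp).imp fun _ h _ ↦ h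
    · exact ⟨0, fun h ↦ (hp h).elim⟩
  choose f hf using hlocal
  obtain ⟨X, hX⟩ := exists_forall_eventuallyEq_of_finite hfin f
  refine ⟨X, eventually_nhdsSet_iff_forall.2 fun p hp ↦ ?_⟩
  filter_upwards [hf p hp, (hX p hp).eventuallyEq_nhds] with w hw heq
  exact hw.congr heq.symm

end Dividing

/-! ### Perturbation to a regular zero set -/

section Perturbation

variable {E : Type*} [NormedAddCommGroup E] [NormedSpace ℝ E]

theorem hasFDerivAt_mul_affine {ρ : E → ℝ} {x : E} (hρ : DifferentiableAt ℝ ρ x)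
    (L : E →L[ℝ] ℝ) (b : ℝ) :
    HasFDerivAt (fun y ↦ ρ y * (L y + b)) (ρ x • L + (L x + b) • fderiv ℝ ρ x) x :=
  hρ.hasFDerivAt.mul (L.hasFDerivAt.add_const b)

theorem eventually_forall_abs_mul_affine_lt {ρ : E → ℝ} (hρ : Continuous ρ) {K : Set E}
    (hK : IsCompact K) {ε : ℝ} (hε : 0 < ε) :
    ∀ᶠ q : (E →L[ℝ] ℝ) × ℝ in 𝓝 0, ∀ x ∈ K, |ρ x * (q.1 x + q.2)| < ε := by
  refine hK.eventually_forall_of_forall_eventually fun x _ ↦ ?_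
  have hcont : Continuous fun z : ((E →L[ℝ] ℝ) × ℝ) × E ↦ |ρ z.2 * (z.1.1 z.2 + z.1.2)| := by
    fun_prop
  exact hcont.continuousAt.eventually_lt_const (by simpa using hε)

theorem eventually_forall_fderiv_add_mul_affine_ne_zero {u ρ : E → ℝ} (hρ : ContDiff ℝ 2 ρ)
    {K : Set E} (hK : IsCompact K) (hu : ∀ x ∈ K, ContDiffAt ℝ 2 u x)
    (hreg : ∀ x ∈ K, u x = 0 → fderiv ℝ u x ≠ 0) :
    ∀ᶠ q : (E →L[ℝ] ℝ) × ℝ in 𝓝 0, ∀ x ∈ K, u x + ρ x * (q.1 x + q.2) = 0 →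
      fderiv ℝ u x + (ρ x • q.1 + (q.1 x + q.2) • fderiv ℝ ρ x) ≠ 0 := by
  refine hK.eventually_forall_of_forall_eventually fun x hx ↦ ?_
  have hu0 : ContinuousAt u x := (hu x hx).continuousAt
  have hu1 : ContinuousAt (fderiv ℝ u) x :=
    ((hu x hx).fderiv_right (m := 1) (by norm_num)).continuousAt
  have hρ1 : Continuous (fderiv ℝ ρ) := hρ.continuous_fderiv (by norm_num)
  have hρ0 := hρ.continuous
  have hval : ContinuousAt
      (fun z : ((E →L[ℝ] ℝ) × ℝ) × E ↦ u z.2 + ρ z.2 * (z.1.1 z.2 + z.1.2)) (0, x) :=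
    (hu0.comp' continuousAt_snd).add (by fun_prop)
  have hder : ContinuousAt (fun z : ((E →L[ℝ] ℝ) × ℝ) × E ↦
      fderiv ℝ u z.2 + (ρ z.2 • z.1.1 + (z.1.1 z.2 + z.1.2) • fderiv ℝ ρ z.2)) (0, x) :=
    (hu1.comp' continuousAt_snd).add (by fun_prop)
  by_cases h0 : u x = 0
  · exact (hder.eventually_ne (by simpa using hreg x hx h0)).mono fun z hz _ ↦ hz
  · exact (hval.eventually_ne (by simpa using h0)).mono fun z hz h ↦ (hz h).elim

variable [FiniteDimensional ℝ E]

theorem exists_contDiff_eventually_eq_one_tsupport_subset {s u : Set E} (hs : IsClosed s)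
    (hu : IsOpen u) (hsu : s ⊆ u) :
    ∃ f : E → ℝ, ContDiff ℝ 2 f ∧ (∀ x, f x ∈ Icc 0 1) ∧ (∀ᶠ x in 𝓝ˢ s, f x = 1) ∧
      tsupport f ⊆ u := by
  obtain ⟨v, hv, hsv, hvu⟩ := normal_exists_closure_subset hs hu hsu
  obtain ⟨f, hf1, hf0, hf⟩ := exists_contMDiffMap_one_nhds_of_subset_interior (n := 2)
    (modelWithCornersSelf ℝ E) hs (hsv.trans (interior_maximal subset_closure hv))
  refine ⟨f, contMDiff_iff_contDiff.1 f.contMDiff, hf, hf1, Subset.trans ?_ hvu⟩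
  exact closure_minimal (Function.support_subset_iff'.2 hf0) isClosed_closure

-- If `-Du w = L` and `u w + L w + b = 0`, then `b = -u w + Du w w`. So the bad pairs `(L, b)` form
-- the image of a `C¹` map from `Ω` into a space of dimension `dim E + 1`.
theorem dense_forall_fderiv_add_ne_zero {Ω : Set E} {u : E → ℝ}
    (hu : ∀ x ∈ Ω, ContDiffAt ℝ 2 u x) :
    Dense {q : (E →L[ℝ] ℝ) × ℝ | ∀ x ∈ Ω, u x + (q.1 x + q.2) = 0 → fderiv ℝ u x + q.1 ≠ 0} := by
  set Φ : E → (E →L[ℝ] ℝ) × ℝ := fun x ↦ (-fderiv ℝ u x, -u x + fderiv ℝ u x x)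
  have hΦ (x : E) (hx : x ∈ Ω) : ContDiffAt ℝ 1 Φ x := by
    have hfderiv : ContDiffAt ℝ 1 (fderiv ℝ u) x := (hu x hx).fderiv_right (by norm_num)
    exact hfderiv.neg.prodMk
      (((hu x hx).of_le (by norm_num)).neg.add (hfderiv.clm_apply contDiffAt_id))
  have hfinrank : Module.finrank ℝ ((E →L[ℝ] ℝ) × ℝ) = Module.finrank ℝ E + 1 := by
    rw [Module.finrank_prod, ← LinearMap.toContinuousLinearMap.finrank_eq,
      Module.finrank_linearMap, Module.finrank_self, mul_one]
  have hdim : dimH (Φ '' Ω) < Module.finrank ℝ ((E →L[ℝ] ℝ) × ℝ) :=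
    calc dimH (Φ '' Ω) ≤ dimH Ω := dimH_image_le_of_locally_lipschitzOn fun x hx ↦ by
          obtain ⟨C, t, ht, hlip⟩ := (hΦ x hx).exists_lipschitzOnWith
          exact ⟨C, t, mem_nhdsWithin_of_mem_nhds ht, hlip⟩
      _ ≤ dimH (univ : Set E) := dimH_mono (subset_univ Ω)
      _ = Module.finrank ℝ E := Real.dimH_univ_eq_finrank E
      _ < Module.finrank ℝ ((E →L[ℝ] ℝ) × ℝ) := by
          rw [hfinrank]; exact_mod_cast Nat.lt_succ_self _
  refine (dense_compl_of_dimH_lt_finrank hdim).mono ?_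
  rintro ⟨L, b⟩ hq x hx hzero hfderiv
  have hL : L = -fderiv ℝ u x := eq_neg_of_add_eq_zero_right hfderiv
  refine hq ⟨x, hx, Prod.ext hL.symm ?_⟩
  have hLx : L x = -fderiv ℝ u x x := by rw [hL, neg_apply]
  simp only [Φ]
  linarith

theorem exists_perturbation_fderiv_ne_zero {Ω C : Set E} {u : E → ℝ} (hΩ : IsOpen Ω)
    (hu : ∀ x ∈ Ω, ContDiffAt ℝ 2 u x) (hC : IsCompact C) (hCΩ : C ⊆ Ω)
    (hcrit : ∀ x ∈ Ω, u x = 0 → fderiv ℝ u x = 0 → x ∈ C) {ε : ℝ} (hε : 0 < ε) :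
    ∃ h : E → ℝ, ContDiff ℝ 2 h ∧ tsupport h ⊆ Ω ∧ (∀ x, |h x| < ε) ∧
      ∀ x ∈ Ω, u x + h x = 0 → fderiv ℝ (u + h) x ≠ 0 := by
  obtain ⟨K, hK, hCK, hKΩ⟩ := exists_compact_between hC hΩ hCΩ
  obtain ⟨ρ, hρ, -, hρ1, hρK⟩ :=
    exists_contDiff_eventually_eq_one_tsupport_subset hC.isClosed isOpen_interior hCK
  set R := tsupport ρ \ {x | ∀ᶠ y in 𝓝 x, ρ y = 1}
  have hρΩ : tsupport ρ ⊆ Ω := (hρK.trans interior_subset).trans hKΩ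
  have hsupp : IsCompact (tsupport ρ) :=
    hK.of_isClosed_subset (isClosed_tsupport ρ) (hρK.trans interior_subset)
  have hnotC {x : E} (hx : ¬∀ᶠ y in 𝓝 x, ρ y = 1) : x ∉ C :=
    fun hxC ↦ hx (eventually_nhdsSet_iff_forall.1 hρ1 x hxC)
  have hsmall := eventually_forall_abs_mul_affine_lt hρ.continuous hsupp hε
  have hregular := eventually_forall_fderiv_add_mul_affine_ne_zero hρ (K := R)
    (hsupp.diff isOpen_setOfPred_eventually_nhds) (fun x hx ↦ hu x (hρΩ hx.1))
    fun x hx h0 h1 ↦ hnotC hx.2 (hcrit x (hρΩ hx.1) h0 h1)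
  obtain ⟨⟨L, b⟩, hgeneric, hq, hqR⟩ :=
    (dense_forall_fderiv_add_ne_zero hu).inter_nhds_nonempty (hsmall.and hregular)
  refine ⟨fun y ↦ ρ y * (L y + b), hρ.mul (L.contDiff.add contDiff_const),
    (closure_mono (Function.support_mul_subset_left _ _)).trans hρΩ, fun x ↦ ?_,
    fun x hx (h0 : u x + ρ x * (L x + b) = 0) ↦ ?_⟩
  · by_cases hxρ : x ∈ tsupport ρ
    · exact hq x hxρ
    · simpa [image_eq_zero_of_notMem_tsupport hxρ] using hε
  have hux : HasFDerivAt u (fderiv ℝ u x) x :=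
    ((hu x hx).differentiableAt two_ne_zero).hasFDerivAt
  rw [(hux.add (hasFDerivAt_mul_affine (hρ.differentiable two_ne_zero x) L b)).fderiv]
  by_cases hx1 : ∀ᶠ y in 𝓝 x, ρ y = 1
  · have hρ' : fderiv ℝ ρ x = 0 := (EventuallyEq.fderiv_eq hx1).trans (fderiv_const_apply 1)
    rw [hx1.self_of_nhds, one_mul] at h0
    simpa [hx1.self_of_nhds, hρ'] using hgeneric x hx h0
  by_cases hxρ : x ∈ tsupport ρ
  · exact hqR x ⟨hxρ, hx1⟩ h0
  · have hρ' : fderiv ℝ ρ x = 0 := by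
      rw [(notMem_tsupport_iff_eventuallyEq.1 hxρ).fderiv_eq]; exact fderiv_const_apply 0
    have hρ0 := image_eq_zero_of_notMem_tsupport hxρ
    simp only [hρ0, hρ', zero_mul, add_zero, zero_smul, smul_zero] at h0 ⊢
    exact fun h1 ↦ hnotC hx1 (hcrit x hx h0 h1)

end Perturbation

theorem exists_openPartialHomeomorph_im_eq {v : ℂ → ℝ} {x : ℂ} (hv : ContDiffAt ℝ 2 v x)
    (hd : fderiv ℝ v x ≠ 0) :
    ∃ e : OpenPartialHomeomorph ℂ ℂ, x ∈ e.source ∧ ∀ y, (e y).im = v y := by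
  have hstrict := hv.hasStrictFDerivAt two_ne_zero
  have hsurj : (fderiv ℝ v x).range = ⊤ :=
    LinearMap.range_eq_top.2 (LinearMap.surjective fun h ↦
      hd (ContinuousLinearMap.coe_injective h))
  have hker : Module.finrank ℝ (fderiv ℝ v x).ker = Module.finrank ℝ ℝ := by
    have hsum := (fderiv ℝ v x).toLinearMap.finrank_range_add_finrank_ker
    rw [hsurj, finrank_top, finrank_real_complex, Module.finrank_self] at hsum
    rw [Module.finrank_self]
    omega
  let κ : ℝ × (fderiv ℝ v x).ker ≃ₜ ℂ := (Homeomorph.prodComm _ _).trans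
    (((ContinuousLinearEquiv.ofFinrankEq hker).toHomeomorph.prodCongr (.refl ℝ)).trans
      equivRealProdCLM.symm.toHomeomorph)
  exact ⟨(hstrict.implicitToOpenPartialHomeomorph v _ hsurj).transHomeomorph κ,
    hstrict.mem_implicitToOpenPartialHomeomorph_source hsurj, fun y ↦ by simp [κ]⟩

theorem flatAt_le_zero {v : ℂ → ℝ} {x : ℂ} (hv : ContDiffAt ℝ 2 v x) (hd : fderiv ℝ v x ≠ 0) :
    FlatAt {y | v y ≤ 0} x := by
  obtain ⟨e, hx, he⟩ := exists_openPartialHomeomorph_im_eq hv hd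
  exact ⟨e, hx, fun y _ ↦ by simp [he]⟩

/-! ### Enlarging sets with flat frontier -/

/-- The zero set of `u` is a possibly singular curve in the complement of `A`, separating `B` from
the complement of `U` and entering `A` where the piece `I` of its frontier meets the rest. -/
structure IsDividing (A I B U : Set ℂ) (u : ℂ → ℝ) : Prop where
  continuous : Continuous u
  contDiffAt : ∀ x ∉ A, ContDiffAt ℝ 2 u x
  isDividingAt : ∀ᶠ x in 𝓝ˢ (I ∩ closure (frontier A \ I)), IsDividingAt A I u x
  neg : ∀ x ∈ I \ closure (frontier A \ I), u x < 0
  pos : ∀ x ∈ frontier A \ I, 0 < u x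
  eq_neg_one : ∀ x ∈ B, u x = -1
  eq_one : ∀ x ∉ U, u x = 1

theorem exists_contDiff_eq_neg_one_eq_one {E : Type*} [NormedAddCommGroup E] [NormedSpace ℝ E]
    [FiniteDimensional ℝ E] {P Q : Set E} (hP : IsClosed P) (hQ : IsClosed Q)
    (hPQ : Disjoint P Q) :
    ∃ d : E → ℝ, ContDiff ℝ 2 d ∧ (∀ x ∈ P, d x = -1) ∧ ∀ x ∈ Q, d x = 1 := by
  obtain ⟨g, hgQ, hgP, -⟩ := exists_contMDiffMap_zero_one_of_isClosed (n := 2)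
    (modelWithCornersSelf ℝ E) hQ hP hPQ.symm
  refine ⟨fun x ↦ 1 - 2 * g x,
    contDiff_const.sub (contDiff_const.mul (contMDiff_iff_contDiff.1 g.contMDiff)),
    fun x hx ↦ ?_, fun x hx ↦ ?_⟩
  · norm_num [hgP hx]
  · simp [hgQ hx]

theorem mul_add_one_sub_mul_neg {t a b : ℝ} (ht : t ∈ Icc 0 1) (ha : t ≠ 0 → a < 0)
    (hb : t ≠ 1 → b < 0) : t * a + (1 - t) * b < 0 := by
  by_cases h0 : t = 0
  · simpa [h0] using hb
  by_cases h1 : t = 1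
  · simpa [h1] using ha
  exact add_neg (mul_neg_of_pos_of_neg (ht.1.lt_of_ne' h0) (ha h0))
    (mul_neg_of_pos_of_neg (sub_pos.2 (ht.2.lt_of_ne h1)) (hb h1))

section Planar

variable {A I B U : Set ℂ} {u : ℂ → ℝ}

theorem exists_isDividing_of_bump {X χ d : ℂ → ℝ} {V : Set ℂ}
    (hX : ∀ x ∈ V, IsDividingAt A I X x) (hVB : Disjoint V B) (hVU : V ⊆ U)
    (hχ : ContDiff ℝ 2 χ) (hχ01 : ∀ x, χ x ∈ Icc 0 1)
    (hχ1 : ∀ᶠ x in 𝓝ˢ (I ∩ closure (frontier A \ I)), χ x = 1) (hχV : tsupport χ ⊆ V)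
    (hd : ContDiff ℝ 2 d) (hdneg : ∀ x ∈ I ∪ B, χ x ≠ 1 → d x = -1)
    (hdpos : ∀ x ∈ closure (frontier A \ I) ∪ Uᶜ, χ x ≠ 1 → d x = 1) :
    IsDividing A I B U fun x ↦ χ x * X x + (1 - χ x) * d x := by
  have hχ0 {x : ℂ} (hx : x ∉ V) : χ x = 0 := image_eq_zero_of_notMem_tsupport fun h ↦ hx (hχV h)
  have hV {x : ℂ} (hx : χ x ≠ 0) : x ∈ V := not_imp_comm.1 hχ0 hx
  have heq {x : ℂ} (hx : x ∉ V) :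
      (fun y ↦ χ y * X y + (1 - χ y) * d y) =ᶠ[𝓝 x] d := by
    filter_upwards [notMem_tsupport_iff_eventuallyEq.1 fun h ↦ hx (hχV h)] with y hy
    simp [show χ y = 0 from hy]
  refine ⟨continuous_iff_continuousAt.2 fun x ↦ ?_, fun x hxA ↦ ?_, ?_, fun x hx ↦ ?_,
    fun x hx ↦ ?_, fun x hx ↦ ?_, fun x hx ↦ ?_⟩
  · by_cases hxV : x ∈ V
    · exact (hχ.continuous.continuousAt.mul (hX x hxV).continuousAt).add
        (continuous_const.sub hχ.continuous |>.mul hd.continuous).continuousAt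
    · exact hd.continuous.continuousAt.congr (heq hxV).symm
  · by_cases hxV : x ∈ V
    · exact (hχ.contDiffAt.mul ((hX x hxV).contDiffAt hxA)).add
        ((contDiff_const.sub hχ).mul hd).contDiffAt
    · exact hd.contDiffAt.congr_of_eventuallyEq (heq hxV)
  · refine eventually_nhdsSet_iff_forall.2 fun p hp ↦ ?_
    filter_upwards [(eventually_nhdsSet_iff_forall.1 hχ1 p hp).eventually_nhds] with x hx
    refine (hX x (hV (by simp [hx.self_of_nhds]))).congr ?_
    filter_upwards [hx] with y hy
    simp [hy]
  · exact mul_add_one_sub_mul_neg (hχ01 x) (fun h ↦ (hX x (hV h)).neg hx)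
      fun h ↦ by simp [hdneg x (.inl hx.1) h]
  · have h := mul_add_one_sub_mul_neg (a := -X x) (b := -d x) (hχ01 x)
      (fun h ↦ neg_neg_of_pos ((hX x (hV h)).pos hx))
      fun h ↦ by simp [hdpos x (.inl (subset_closure hx)) h]
    linarith
  · have h0 := hχ0 (hVB.notMem_of_mem_right hx)
    simp [h0, hdneg x (.inr hx)]
  · have h0 := hχ0 fun h ↦ hx (hVU h)
    simp [h0, hdpos x (.inr hx)]

theorem exists_isDividing (hA : HasFlatFrontier A) (hB : IsCompact B) (hU : IsOpen U)
    (hBU : B ⊆ U) : ∃ I u, IsDividing A I B U u := by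
  have hUK : U ∈ 𝓝ˢ (frontier A ∩ B) := hU.mem_nhdsSet.2 (inter_subset_right.trans hBU)
  obtain ⟨I, hI, hIp, hIU, hBI, hfin⟩ := exists_isCompact_frontier_piece
    (hB.inter_left isClosed_frontier) inter_subset_left (fun x hx ↦ hA.flatAt x hx.1) hUK
  have hclosure : closure (frontier A \ I) ⊆ frontier A :=
    closure_minimal sdiff_subset isClosed_frontier
  have hdisjB : Disjoint B (closure (frontier A \ I)) :=
    disjoint_left.2 fun x hxB hx ↦ disjoint_left.1 hBI ⟨hclosure hx, hxB⟩ hx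
  obtain ⟨X, hX⟩ := exists_eventually_nhdsSet_isDividingAt hA hI.isClosed hIp
    (hIU.trans inter_subset_left) hfin
  set T := I ∩ closure (frontier A \ I)
  set V := {x | ∀ᶠ y in 𝓝 x, IsDividingAt A I X y} ∩ (U \ B)
  have hVo : IsOpen V := isOpen_setOfPred_eventually_nhds.inter (hU.sdiff hB.isClosed)
  have hTV : T ⊆ V := fun x hx ↦ ⟨eventually_nhdsSet_iff_forall.1 hX x hx, (hIU hx.1).2,
    fun hxB ↦ disjoint_left.1 hdisjB hxB hx.2⟩
  obtain ⟨χ, hχ, hχ01, hχ1, hχV⟩ :=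
    exists_contDiff_eventually_eq_one_tsupport_subset hfin.isClosed hVo hTV
  set N := {x | ∀ᶠ y in 𝓝 x, χ y = 1}
  have hNo : IsOpen N := isOpen_setOfPred_eventually_nhds
  have hTN : T ⊆ N := fun x hx ↦ eventually_nhdsSet_iff_forall.1 hχ1 x hx
  have hN {x : ℂ} (hx : χ x ≠ 1) : x ∉ N := fun h ↦ hx h.self_of_nhds
  have hdisj : Disjoint ((I ∪ B) \ N) ((closure (frontier A \ I) ∪ Uᶜ) \ N) := by
    refine disjoint_left.2 ?_
    rintro x ⟨hxI | hxB, hxN⟩ ⟨hx | hxU, -⟩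
    · exact hxN (hTN ⟨hxI, hx⟩)
    · exact hxU (hIU hxI).2
    · exact disjoint_left.1 hdisjB hxB hx
    · exact hxU (hBU hxB)
  obtain ⟨d, hd, hdneg, hdpos⟩ := exists_contDiff_eq_neg_one_eq_one
    ((hI.isClosed.union hB.isClosed).sdiff hNo)
    ((isClosed_closure.union hU.isClosed_compl).sdiff hNo) hdisj
  exact ⟨I, _, exists_isDividing_of_bump (fun x hx ↦ hx.1.self_of_nhds)
    (disjoint_left.2 fun x hx ↦ hx.2.2) (fun x hx ↦ hx.2.1) hχ hχ01 hχ1 hχV hd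
    (fun x hx hxχ ↦ hdneg x ⟨hx, hN hxχ⟩) fun x hx hxχ ↦ hdpos x ⟨hx, hN hxχ⟩⟩

theorem IsDividing.mem_of_eq_zero (hu : IsDividing A I B U u) {x : ℂ} (hx : x ∈ frontier A)
    (h0 : u x = 0) : x ∈ I ∩ closure (frontier A \ I) := by
  have hxI : x ∈ I := by
    by_contra h
    exact (hu.pos x ⟨hx, h⟩).ne' h0
  refine ⟨hxI, ?_⟩
  by_contra h
  exact (hu.neg x ⟨hxI, h⟩).ne h0

theorem IsDividing.exists_regular (hu : IsDividing A I B U u) (hA : IsClosed A) {K : Set ℂ}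
    (hK : IsCompact K) (hUK : U ⊆ K) :
    ∃ v : ℂ → ℝ, Continuous v ∧ (∀ x ∈ A, v =ᶠ[𝓝 x] u) ∧ (∀ x ∈ B, v x < 0) ∧
      (∀ x ∉ K, 0 < v x) ∧ ∀ x ∉ A, v x = 0 → ContDiffAt ℝ 2 v x ∧ fderiv ℝ v x ≠ 0 := by
  set N := {x | ∀ᶠ y in 𝓝 x, IsDividingAt A I u y}
  set C := u ⁻¹' {0} ∩ (interior A ∪ N)ᶜ
  have hC : IsClosed C := (isClosed_singleton.preimage hu.continuous).inter
    (isOpen_interior.union isOpen_setOfPred_eventually_nhds).isClosed_compl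
  have hCK : C ⊆ K := fun x hx ↦ hUK <| by
    by_contra hxU
    have h0 : u x = 0 := hx.1
    rw [hu.eq_one x hxU] at h0
    exact one_ne_zero h0
  have hCA : C ⊆ Aᶜ := fun x ⟨h0, hx⟩ hxA ↦ hx <| or_iff_not_imp_left.2 fun hxi ↦
    eventually_nhdsSet_iff_forall.1 hu.isDividingAt x
      (hu.mem_of_eq_zero (hA.frontier_eq ▸ ⟨hxA, hxi⟩) h0)
  have hcrit (x : ℂ) (hxA : x ∈ Aᶜ) (h0 : u x = 0) (h1 : fderiv ℝ u x = 0) : x ∈ C :=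
    ⟨h0, fun hx ↦ hx.elim (fun hxi ↦ hxA (interior_subset hxi))
      fun hxN ↦ hxN.self_of_nhds.fderiv_ne_zero hxA h1⟩
  obtain ⟨h, hh, hhA, hlt, hreg⟩ := exists_perturbation_fderiv_ne_zero hA.isOpen_compl
    hu.contDiffAt (hK.of_isClosed_subset hC hCK) hCA hcrit one_pos
  refine ⟨u + h, hu.continuous.add hh.continuous, fun x hxA ↦ ?_, fun x hx ↦ ?_, fun x hx ↦ ?_,
    fun x hxA h0 ↦ ⟨(hu.contDiffAt x hxA).add hh.contDiffAt, hreg x hxA h0⟩⟩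
  · filter_upwards [notMem_tsupport_iff_eventuallyEq.1 fun hx ↦ hhA hx hxA] with y hy
    simp [show h y = 0 from hy]
  · rw [Pi.add_apply, hu.eq_neg_one x hx]
    linarith [(abs_lt.1 (hlt x)).2]
  · rw [Pi.add_apply, hu.eq_one x fun hxU ↦ hx (hUK hxU)]
    linarith [(abs_lt.1 (hlt x)).1]

theorem IsDividing.hasFlatFrontier_union (hu : IsDividing A I B U u) (hA : HasFlatFrontier A)
    {v : ℂ → ℝ} (hv : Continuous v) (hvu : ∀ x ∈ A, v =ᶠ[𝓝 x] u)
    (hreg : ∀ x ∉ A, v x = 0 → ContDiffAt ℝ 2 v x ∧ fderiv ℝ v x ≠ 0) :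
    HasFlatFrontier (A ∪ {x | v x ≤ 0}) := by
  have hclosed : IsClosed (A ∪ {x | v x ≤ 0}) :=
    hA.isClosed.union (isClosed_le hv continuous_const)
  refine ⟨hclosed, fun x hx ↦ ?_⟩
  have hxint : x ∉ interior (A ∪ {x | v x ≤ 0}) := hx.2
  have hv0 : 0 ≤ v x := not_lt.1 fun hneg ↦ hxint <| mem_interior_iff_mem_nhds.2 <|
    mem_of_superset ((isOpen_lt hv continuous_const).mem_nhds hneg)
      fun y (hy : v y < 0) ↦ .inr hy.le
  rcases hv0.eq_or_lt with hv0 | hvpos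
  · by_cases hxA : x ∈ A
    · have hxZ : x ∈ frontier A :=
        hA.isClosed.frontier_eq ▸ ⟨hxA, fun h ↦ hxint (interior_mono subset_union_left h)⟩
      have hxT := hu.mem_of_eq_zero hxZ ((hvu x hxA).eq_of_nhds.symm.trans hv0.symm)
      have hflat := (eventually_nhdsSet_iff_forall.1 hu.isDividingAt x hxT).self_of_nhds.flatAt hxT
      exact hflat.congr ((hvu x hxA).mono fun y hy ↦ by simp [hy])
    · refine (flatAt_le_zero (hreg x hxA hv0.symm).1 (hreg x hxA hv0.symm).2).congr ?_
      filter_upwards [hA.isClosed.isOpen_compl.mem_nhds hxA] with y hy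
      exact (or_iff_right hy).symm
  · refine hA.flatAt_of_eventually ?_ hx
    filter_upwards [hv.continuousAt.eventually_const_lt hvpos] with y hy
    exact (or_iff_left (not_le.2 hy)).symm

theorem HasFlatFrontier.exists_superset (hA : HasFlatFrontier A) {K : Set ℂ} (hB : IsCompact B)
    (hK : IsCompact K) (hBK : B ⊆ interior K) :
    ∃ A', HasFlatFrontier A' ∧ A ⊆ A' ∧ A' ⊆ A ∪ K ∧ B ⊆ interior A' := by
  obtain ⟨I, u, hu⟩ := exists_isDividing hA hB isOpen_interior hBK
  obtain ⟨v, hv, hvu, hvB, hvK, hreg⟩ := hu.exists_regular hA.isClosed hK interior_subset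
  refine ⟨A ∪ {x | v x ≤ 0}, hu.hasFlatFrontier_union hA hv hvu hreg, subset_union_left,
    union_subset_union_right A fun x hx ↦ ?_, fun x hx ↦ ?_⟩
  · by_contra hxK
    exact (hvK x hxK).not_ge hx
  · exact mem_interior_iff_mem_nhds.2 <| mem_of_superset
      ((isOpen_lt hv continuous_const).mem_nhds (hvB x hx)) fun y (hy : v y < 0) ↦ .inr hy.le

end Planar

section Neighbourhood

variable {X : Type*} [TopologicalSpace X]

theorem HasFlatFrontier.exists_superset_image [T2Space X] {N : Set X} (hN : HasFlatFrontier N)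
    (hNc : IsCompact N) {φ : ℂ → X} (hφ : IsOpenEmbedding φ) {B : Set ℂ} (hB : IsCompact B) :
    ∃ N', HasFlatFrontier N' ∧ IsCompact N' ∧ N ⊆ N' ∧ φ '' B ⊆ interior N' := by
  obtain ⟨K, hK, hBK⟩ := exists_compact_superset hB
  obtain ⟨A', hA', hAA', hA'K, hBA'⟩ := (hN.preimage hφ).exists_superset hB hK hBK
  have hNK : N ∪ φ '' A' = N ∪ φ '' (A' ∩ K) := by
    refine Subset.antisymm (union_subset subset_union_left ?_)
      (union_subset_union_right N (image_mono inter_subset_left))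
    rintro _ ⟨z, hz, rfl⟩
    exact (hA'K hz).imp id fun hzK ↦ ⟨z, ⟨hz, hzK⟩, rfl⟩
  have hcompact : IsCompact (N ∪ φ '' A') :=
    hNK ▸ hNc.union ((hK.inter_left hA'.isClosed).image hφ.continuous)
  have hpreimage : φ ⁻¹' (N ∪ φ '' A') = A' := by
    rw [preimage_union, hφ.injective.preimage_image, union_eq_right.2 hAA']
  refine ⟨N ∪ φ '' A', ⟨hcompact.isClosed, fun x hx ↦ ?_⟩, hcompact, subset_union_left, ?_⟩
  · by_cases hxφ : x ∈ range φ
    · obtain ⟨z, rfl⟩ := hxφ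
      refine FlatAt.of_preimage hφ (hpreimage.symm ▸ hA'.flatAt z ?_)
      rw [← hpreimage, ← hφ.isOpenMap.preimage_frontier_eq_frontier_preimage hφ.continuous]
      exact hx
    · refine hN.flatAt_of_eventually ?_ hx
      have hxK : x ∉ φ '' K := fun h ↦ hxφ (image_subset_range φ K h)
      filter_upwards [(hK.image hφ.continuous).isClosed.isOpen_compl.mem_nhds hxK] with y hy
      rw [hNK]
      exact (or_iff_left fun h ↦ hy (image_mono inter_subset_right h)).symm
  · refine (image_mono hBA').trans (interior_maximal ?_ (hφ.isOpenMap _ isOpen_interior))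
    exact (image_mono interior_subset).trans subset_union_right

/-- Every point has an open neighbourhood homeomorphic to an open subset of the plane `ℂ`. -/
def LocallyPlanar (X : Type*) [TopologicalSpace X] : Prop :=
  ∀ x : X, ∃ e : OpenPartialHomeomorph X ℂ, x ∈ e.source

theorem LocallyPlanar.exists_isOpenEmbedding (hX : LocallyPlanar X) {x : X} {W : Set X}
    (hW : W ∈ 𝓝 x) : ∃ Ψ : ℂ → X, IsOpenEmbedding Ψ ∧ Ψ 0 = x ∧ range Ψ ⊆ W := by
  obtain ⟨e, hxe⟩ := hX x
  obtain ⟨-, -, Ψ, hΨ, hΨ0, hΨW, -⟩ := exists_isOpenEmbedding_eq_univBall e hxe hW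
  exact ⟨Ψ, hΨ, hΨ0, hΨW.trans inter_subset_right⟩

theorem LocallyPlanar.exists_hasFlatFrontier [T2Space X] (hX : LocallyPlanar X) {K : Set X}
    (hK : IsCompact K) : ∃ N, HasFlatFrontier N ∧ IsCompact N ∧ K ⊆ interior N := by
  suffices ∀ N, HasFlatFrontier N → IsCompact N →
      ∃ N', HasFlatFrontier N' ∧ IsCompact N' ∧ N ⊆ N' ∧ K ⊆ interior N' by
    obtain ⟨N, hN, hNc, -, hKN⟩ := this ∅ ⟨isClosed_empty, by simp⟩ isCompact_empty
    exact ⟨N, hN, hNc, hKN⟩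
  refine hK.induction_on (fun N hN hNc ↦ ⟨N, hN, hNc, Subset.rfl, empty_subset _⟩)
    (fun s t hst ht N hN hNc ↦ ?_) (fun s t hs ht N hN hNc ↦ ?_) fun x _ ↦ ?_
  · obtain ⟨N', hN', hNc', hNN', htN'⟩ := ht N hN hNc
    exact ⟨N', hN', hNc', hNN', hst.trans htN'⟩
  · obtain ⟨N₁, hN₁, hNc₁, hNN₁, hsN₁⟩ := hs N hN hNc
    obtain ⟨N₂, hN₂, hNc₂, hNN₂, htN₂⟩ := ht N₁ hN₁ hNc₁
    exact ⟨N₂, hN₂, hNc₂, hNN₁.trans hNN₂, union_subset (hsN₁.trans (interior_mono hNN₂)) htN₂⟩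
  · obtain ⟨φ, hφ, rfl, -⟩ := hX.exists_isOpenEmbedding (univ_mem (f := 𝓝 x))
    exact ⟨φ '' closedBall 0 1, mem_nhdsWithin_of_mem_nhds
      (hφ.isOpenMap.image_mem_nhds (closedBall_mem_nhds 0 one_pos)),
      fun N hN hNc ↦ hN.exists_superset_image hNc hφ (isCompact_closedBall 0 1)⟩

end Neighbourhood

/-! ### Doubling -/

/-- The double of a space `Y` along the zero set of a function `g ≥ 0`, realized as the set of
pairs `(y, t)` with `|t| = g y`: the two copies of `Y` are the two signs of `t`. -/
abbrev Double {Y : Type*} (g : Y → ℝ) : Type _ :=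
  {p : Y × ℝ // |p.2| = g p.1}

namespace Double

section Basic

variable {Y : Type*} {g h : Y → ℝ}

/-- The function on `Y × ℝ` equal to `h` over the nonnegative reals and to `-h` over the negative
reals. -/
noncomputable def signed (h : Y → ℝ) (p : Y × ℝ) : ℝ :=
  if 0 ≤ p.2 then h p.1 else -h p.1

theorem abs_signed (hh : ∀ y, 0 ≤ h y) (p : Y × ℝ) : |signed h p| = h p.1 := by
  unfold signed
  split_ifs <;> simp only [abs_neg, abs_of_nonneg (hh _)]

theorem signed_signed (hh : ∀ y, 0 ≤ h y) (hgh : ∀ y, h y = 0 → g y = 0) {p : Y × ℝ}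
    (hp : |p.2| = g p.1) : signed g (p.1, signed h p) = p.2 := by
  unfold signed
  rcases le_or_gt 0 p.2 with ht | ht
  · rw [if_pos ht, if_pos (hh _), ← hp, abs_of_nonneg ht]
  · have hpos : 0 < h p.1 :=
      (hh _).lt_of_ne' fun h0 ↦ ht.ne (abs_eq_zero.1 (hp.trans (hgh _ h0)))
    rw [if_neg ht.not_ge, if_neg (neg_neg_of_pos hpos).not_ge, ← hp, abs_of_neg ht, neg_neg]

/-- The upper sheet of the double. -/
def upper (hg : ∀ y, 0 ≤ g y) (y : Y) : Double g :=
  ⟨(y, g y), abs_of_nonneg (hg y)⟩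

theorem range_upper_comp {Z : Type*} (hg : ∀ y, 0 ≤ g y) {e : Z → Y} (he : ∀ z, 0 < g (e z)) :
    range (upper hg ∘ e) = {p | p.1.1 ∈ range e ∧ 0 < p.1.2} := by
  ext ⟨⟨y, t⟩, hp⟩
  replace hp : |t| = g y := hp
  constructor
  · rintro ⟨z, hz⟩
    obtain ⟨rfl, rfl⟩ := Prod.ext_iff.1 (congrArg Subtype.val hz)
    exact ⟨⟨z, rfl⟩, he z⟩
  · rintro ⟨⟨z, rfl⟩, ht⟩
    exact ⟨z, Subtype.ext (Prod.ext rfl (hp.symm.trans (abs_of_pos ht)))⟩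

/-- The map of doubles induced by a map of spaces. -/
def map {Z : Type*} (e : Z → Y) (p : Double (g ∘ e)) : Double g :=
  ⟨(e p.1.1, p.1.2), p.2⟩

theorem range_map {Z : Type*} (e : Z → Y) :
    range (map (g := g) e) = {p | p.1.1 ∈ range e} := by
  ext ⟨⟨y, t⟩, hp⟩
  constructor
  · rintro ⟨p, hp⟩
    exact ⟨p.1.1, congrArg (fun q ↦ q.1.1) hp⟩
  · rintro ⟨z, rfl⟩
    exact ⟨⟨(z, t), hp⟩, rfl⟩

variable [TopologicalSpace Y]

theorem continuous_signed (hhc : Continuous h) (hgh : ∀ y, g y = 0 → h y = 0) :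
    Continuous fun p : Double g ↦ signed h p := by
  refine Continuous.if_le (by fun_prop) (by fun_prop) (by fun_prop) (by fun_prop) fun p hp ↦ ?_
  rw [hgh p.1.1 (by rw [← p.2, ← hp, abs_zero]), neg_zero]

/-- Up to homeomorphism, the double of `Y` depends only on the zero set of the function. -/
noncomputable def homeomorphOfEqZeroIff (hg : ∀ y, 0 ≤ g y) (hgc : Continuous g)
    (hh : ∀ y, 0 ≤ h y) (hhc : Continuous h) (hgh : ∀ y, g y = 0 ↔ h y = 0) :
    Double g ≃ₜ Double h where
  toFun p := ⟨(p.1.1, signed h p), abs_signed hh p⟩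
  invFun p := ⟨(p.1.1, signed g p), abs_signed hg p⟩
  left_inv p := Subtype.ext (Prod.ext rfl (signed_signed hh (fun y ↦ (hgh y).2) p.2))
  right_inv p := Subtype.ext (Prod.ext rfl (signed_signed hg (fun y ↦ (hgh y).1) p.2))
  continuous_toFun := by
    have := continuous_signed (g := g) hhc fun y ↦ (hgh y).1
    fun_prop
  continuous_invFun := by
    have := continuous_signed (g := h) hgc fun y ↦ (hgh y).2
    fun_prop

/-- The involution of the double exchanging the two sheets. -/
def flip (g : Y → ℝ) : Double g ≃ₜ Double g where
  toFun p := ⟨(p.1.1, -p.1.2), by simpa using p.2⟩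
  invFun p := ⟨(p.1.1, -p.1.2), by simpa using p.2⟩
  left_inv p := by simp
  right_inv p := by simp

theorem compactSpace [CompactSpace Y] (hg : Continuous g) : CompactSpace (Double g) := by
  refine isCompact_iff_compactSpace.1 <| ((isCompact_range (continuous_id.prodMk hg)).union
    (isCompact_range (continuous_id.prodMk hg.neg))).of_isClosed_subset
    (isClosed_eq (by fun_prop) (by fun_prop)) ?_
  rintro ⟨y, t⟩ (hp : |t| = g y)
  exact (eq_or_eq_neg_of_abs_eq hp).imp (fun ht ↦ ⟨y, by simp [ht]⟩) fun ht ↦ ⟨y, by simp [ht]⟩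

theorem isEmbedding_upper (hg : ∀ y, 0 ≤ g y) (hgc : Continuous g) : IsEmbedding (upper hg) :=
  .of_comp (by unfold upper; fun_prop) (continuous_fst.comp continuous_subtype_val) .id

theorem isOpenEmbedding_upper_comp {Z : Type*} [TopologicalSpace Z] (hg : ∀ y, 0 ≤ g y)
    (hgc : Continuous g) {e : Z → Y} (he : IsOpenEmbedding e) (hpos : ∀ z, 0 < g (e z)) :
    IsOpenEmbedding (upper hg ∘ e) := by
  refine ⟨(isEmbedding_upper hg hgc).comp he.isEmbedding, ?_⟩
  rw [range_upper_comp hg hpos]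
  exact (he.isOpen_range.preimage (continuous_fst.comp continuous_subtype_val)).inter
    (isOpen_lt continuous_const (continuous_snd.comp continuous_subtype_val))

theorem isOpenEmbedding_map {Z : Type*} [TopologicalSpace Z] {e : Z → Y}
    (he : IsOpenEmbedding e) : IsOpenEmbedding (map (g := g) e) := by
  refine ⟨.of_comp ?_ continuous_subtype_val ((he.isEmbedding.prodMap .id).comp .subtypeVal), ?_⟩
  · have := he.continuous
    unfold map
    fun_prop
  · rw [range_map]
    exact he.isOpen_range.preimage (continuous_fst.comp continuous_subtype_val)

end Basic

/-- Unfolding the double of the lower half-plane `{z | im z ≤ 0}` along its boundary, by reading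
the second coordinate as an imaginary part. -/
noncomputable def homeomorphComplex :
    Double (fun z : {z : ℂ | z.im ≤ 0} ↦ -z.1.im) ≃ₜ ℂ where
  toFun p := ⟨p.1.1.1.re, p.1.2⟩
  invFun z := ⟨(⟨⟨z.re, -|z.im|⟩, by simp⟩, z.im), by simp⟩
  left_inv p := Subtype.ext <| Prod.ext (Subtype.ext (Complex.ext rfl (by simp [p.2]))) rfl
  right_inv z := rfl
  continuous_toFun := by
    refine Complex.equivRealProdCLM.symm.continuous.comp (f := fun p ↦ (_, _)) ?_
    fun_prop
  continuous_invFun := by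
    have : Continuous fun z : ℂ ↦ (⟨z.re, -|z.im|⟩ : ℂ) :=
      Complex.equivRealProdCLM.symm.continuous.comp (f := fun z : ℂ ↦ (z.re, -|z.im|)) (by fun_prop)
    fun_prop

end Double

theorem LocallyPlanar.secondCountableTopology_of_isCompact {X : Type*} [TopologicalSpace X]
    (hX : LocallyPlanar X) {N : Set X} (hN : IsCompact N) : SecondCountableTopology N := by
  choose Ψ hΨ hΨ0 _ using fun x ↦ hX.exists_isOpenEmbedding (univ_mem (f := 𝓝 x))
  obtain ⟨t, -, ht⟩ := hN.elim_nhds_subcover (fun x ↦ range (Ψ x))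
    fun x _ ↦ (hΨ x).isOpen_range.mem_nhds ⟨0, hΨ0 x⟩
  have (x : t) : SecondCountableTopology ((↑) ⁻¹' range (Ψ x) : Set N) := by
    have := (hΨ x).isEmbedding.toHomeomorph.symm.secondCountableTopology
    exact (IsEmbedding.subtypeVal.restrictPreimage (range (Ψ x))).secondCountableTopology
  refine TopologicalSpace.secondCountableTopology_of_countable_cover
    (U := fun x : t ↦ ((↑) ⁻¹' range (Ψ x) : Set N))
    (fun x ↦ (hΨ x).isOpen_range.preimage continuous_subtype_val) ?_
  refine eq_univ_of_forall fun x ↦ ?_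
  obtain ⟨y, hy, hxy⟩ := mem_iUnion₂.1 (ht x.2)
  exact mem_iUnion.2 ⟨⟨y, hy⟩, hxy⟩

theorem exists_continuous_eq_zero_iff {Y : Type*} [TopologicalSpace Y] [T2Space Y]
    [CompactSpace Y] [SecondCountableTopology Y] {Z : Set Y} (hZ : IsClosed Z) :
    ∃ g : Y → ℝ, Continuous g ∧ (∀ y, 0 ≤ g y) ∧ ∀ y, g y = 0 ↔ y ∈ Z := by
  obtain ⟨f, hfZ, -, -, hf⟩ := exists_continuous_one_zero_of_isCompact_of_isGδ hZ.isCompact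
    hZ.isGδ isClosed_empty (disjoint_empty Z)
  refine ⟨fun y ↦ 1 - f y, by fun_prop, fun y ↦ sub_nonneg.2 (hf y).2, fun y ↦ ?_⟩
  rw [hfZ, sub_eq_zero, eq_comm]
  rfl

theorem isOpenEmbedding_codRestrict {X Y : Type*} [TopologicalSpace X] [TopologicalSpace Y]
    {f : X → Y} (hf : IsOpenEmbedding f) {s : Set Y} (hs : ∀ x, f x ∈ s) :
    IsOpenEmbedding (s.codRestrict f hs) := by
  refine ⟨hf.isEmbedding.codRestrict s hs, ?_⟩
  convert hf.isOpen_range.preimage (continuous_subtype_val (p := (· ∈ s)))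
  ext y
  simp

section Charts

variable {X : Type*} [TopologicalSpace X] {N : Set X} {g : N → ℝ}

theorem LocallyPlanar.exists_isOpenEmbedding_double_of_pos (hX : LocallyPlanar X)
    (hN : IsClosed N) (hg : ∀ x, 0 ≤ g x) (hgc : Continuous g)
    (hgN : ∀ x, g x = 0 ↔ ↑x ∈ frontier N) (p : Double g) (hp : 0 < p.1.2) :
    ∃ φ : ℂ → Double g, IsOpenEmbedding φ ∧ p ∈ range φ := by
  have hpN : (p.1.1 : X) ∈ interior N := by
    by_contra h
    have h0 := (hgN p.1.1).2 (hN.frontier_eq ▸ ⟨p.1.1.2, h⟩)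
    exact hp.ne' (abs_eq_zero.1 (p.2.trans h0))
  obtain ⟨Ψ, hΨ, hΨ0, hΨN⟩ := hX.exists_isOpenEmbedding (isOpen_interior.mem_nhds hpN)
  have hΨN' (z : ℂ) : Ψ z ∈ interior N := hΨN (mem_range_self z)
  set e := N.codRestrict Ψ fun z ↦ interior_subset (hΨN' z)
  have he : IsOpenEmbedding e := isOpenEmbedding_codRestrict hΨ _
  have hpos (z : ℂ) : 0 < g (e z) :=
    (hg _).lt_of_ne' fun h0 ↦ ((hgN _).1 h0).2 (hΨN' z)
  refine ⟨_, Double.isOpenEmbedding_upper_comp hg hgc he hpos, ?_⟩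
  rw [Double.range_upper_comp hg hpos]
  exact ⟨⟨0, Subtype.ext hΨ0⟩, hp⟩

theorem HasFlatFrontier.exists_isOpenEmbedding_double_of_eq_zero (hN : HasFlatFrontier N)
    (hg : ∀ x, 0 ≤ g x) (hgc : Continuous g) (hgN : ∀ x, g x = 0 ↔ ↑x ∈ frontier N)
    (p : Double g) (hp : p.1.2 = 0) :
    ∃ φ : ℂ → Double g, IsOpenEmbedding φ ∧ p ∈ range φ := by
  have hpN : (p.1.1 : X) ∈ frontier N := (hgN _).1 (by rw [← p.2, hp, abs_zero])
  obtain ⟨Ψ, hΨ, hΨ0, -, hΨN⟩ := (hN.flatAt _ hpN).exists_isOpenEmbedding hpN univ_mem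
  have hpre : Ψ ⁻¹' N = {z | z.im ≤ 0} := ext hΨN
  set e := N.restrictPreimage Ψ ∘ Homeomorph.setCongr hpre.symm
  have he : IsOpenEmbedding e :=
    (hΨ.restrictPreimage N).comp (Homeomorph.setCongr hpre.symm).isOpenEmbedding
  have hge (z : {z : ℂ | z.im ≤ 0}) : -z.1.im = 0 ↔ (g ∘ e) z = 0 := by
    have hfrontier := hΨ.isOpenMap.preimage_frontier_eq_frontier_preimage hΨ.continuous N
    rw [hpre, frontier_setOfPred_im_le] at hfrontier
    rw [neg_eq_zero, Function.comp_apply, hgN]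
    exact (Set.ext_iff.1 hfrontier z).symm
  set unfold := (Double.homeomorphOfEqZeroIff (fun z ↦ neg_nonneg.2 z.2) (by fun_prop)
    (fun z ↦ hg (e z)) (hgc.comp he.continuous) hge).symm.trans Double.homeomorphComplex
  refine ⟨_, (Double.isOpenEmbedding_map he).comp unfold.symm.isOpenEmbedding, ?_⟩
  rw [unfold.symm.surjective.range_comp, Double.range_map]
  exact ⟨⟨0, le_refl (0 : ℝ)⟩, Subtype.ext hΨ0⟩

theorem LocallyPlanar.double (hX : LocallyPlanar X) (hN : HasFlatFrontier N)
    (hg : ∀ x, 0 ≤ g x) (hgc : Continuous g) (hgN : ∀ x, g x = 0 ↔ ↑x ∈ frontier N) :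
    LocallyPlanar (Double g) := by
  intro p
  obtain ⟨φ, hφ, z, rfl⟩ : ∃ φ : ℂ → Double g, IsOpenEmbedding φ ∧ p ∈ range φ := by
    rcases lt_trichotomy p.1.2 0 with hp | hp | hp
    · obtain ⟨φ, hφ, z, hz⟩ := hX.exists_isOpenEmbedding_double_of_pos hN.isClosed hg hgc hgN
        (Double.flip g p) (neg_pos.2 hp)
      exact ⟨_, (Double.flip g).symm.isOpenEmbedding.comp hφ, z,
        (Double.flip g).symm_apply_eq.2 hz⟩
    · exact hN.exists_isOpenEmbedding_double_of_eq_zero hg hgc hgN p hp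
    · exact hX.exists_isOpenEmbedding_double_of_pos hN.isClosed hg hgc hgN p hp
  exact ⟨(hφ.toOpenPartialHomeomorph φ).symm, by simp⟩

end Charts

section Surface

variable {X : Type*} [TopologicalSpace X]

theorem IsSurface.locallyPlanar (hX : IsSurface X) : LocallyPlanar X := by
  intro x
  obtain ⟨U, V, hU, hxU, hV, ⟨h⟩⟩ := hX.2.2.2 x
  have : Nonempty U := ⟨⟨x, hxU⟩⟩
  have hφ : IsOpenEmbedding fun y : U ↦ (h y : EuclideanSpace ℝ (Fin 2)) :=
    hV.isOpenEmbedding_subtypeVal.comp h.isOpenEmbedding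
  refine ⟨((hU.isOpenEmbedding_subtypeVal.toOpenPartialHomeomorph _).symm.trans
    (hφ.toOpenPartialHomeomorph _)).transHomeomorph
    orthonormalBasisOneI.repr.toHomeomorph.symm, ?_⟩
  simp [hxU]

theorem LocallyPlanar.isSurface [Nonempty X] [T2Space X] [CompactSpace X]
    (hX : LocallyPlanar X) : IsSurface X := by
  have := hX.secondCountableTopology_of_isCompact isCompact_univ
  refine ⟨inferInstance, inferInstance, (Homeomorph.Set.univ X).symm.secondCountableTopology,
    fun x ↦ ?_⟩
  obtain ⟨e, hxe⟩ := hX x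
  set e' := e.transHomeomorph orthonormalBasisOneI.repr.toHomeomorph
  exact ⟨e'.source, e'.target, e'.open_source, hxe, e'.open_target, ⟨e'.toHomeomorphSourceTarget⟩⟩

end Surface

universe u v

theorem embeds_into_compact_surface_of_embeds_into_surface_general
    {K : Type u} [TopologicalSpace K] [CompactSpace K]
    {F : Type v} [TopologicalSpace F] [Nonempty F] [T2Space F] (hF : LocallyPlanar F)
    {f : K → F} (hf : IsEmbedding f) :
    ∃ (S : Type v) (_ : TopologicalSpace S), IsSurface S ∧ CompactSpace S ∧
      ∃ g : K → S, IsEmbedding g := by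
  obtain ⟨x₀⟩ := ‹Nonempty F›
  obtain ⟨N, hN, hNc, hKN⟩ :=
    hF.exists_hasFlatFrontier ((isCompact_range hf.continuous).insert x₀)
  obtain ⟨hx₀, hfN⟩ := insert_subset_iff.1 (hKN.trans interior_subset)
  have : CompactSpace N := isCompact_iff_compactSpace.1 hNc
  have := hF.secondCountableTopology_of_isCompact hNc
  obtain ⟨g, hgc, hg, hgN⟩ := exists_continuous_eq_zero_iff
    (isClosed_frontier.preimage (continuous_subtype_val (p := (· ∈ N))))
  have : CompactSpace (Double g) := Double.compactSpace hgc
  have : Nonempty (Double g) := ⟨Double.upper hg ⟨x₀, hx₀⟩⟩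
  exact ⟨Double g, inferInstance, (hF.double hN hg hgc hgN).isSurface, inferInstance, _,
    (Double.isEmbedding_upper hg hgc).comp
      (hf.codRestrict N fun k ↦ hfN (mem_range_self k))⟩

/-- If a compact space embeds into a surface, then it embeds into some compact
surface. -/
theorem embeds_into_compact_surface_of_embeds_into_surface
    (K : Type) [TopologicalSpace K] [CompactSpace K]
    (F : Type) [TopologicalSpace F] (hF : IsSurface F)
    (f : K → F) (hf : IsEmbedding f) :
    ∃ (S : Type) (_ : TopologicalSpace S), IsSurface S ∧ CompactSpace S ∧
      ∃ g : K → S, IsEmbedding g := by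
  have ⟨_, _, _, _⟩ := hF
  exact embeds_into_compact_surface_of_embeds_into_surface_general hF.locallyPlanar hf
end

section
/- Every connected component of a finite-fold covering space of a solenoid is homeomorphic to that solenoid: if Θ is the solenoid of type (w₁, w₂, …) with each wₙ > 1, π : X → Θ is a covering map, and every fiber of π has exactly r elements for some positive integer r, then each connected component of X is homeomorphic to Θ. -/
open Topology

/-- The solenoid of type `(w 0, w 1, …)` (denoted `(w₁, w₂, …)` in the paper),
as a subgroup of the product of countably many circles:
`{(x₀, x₁, …) : xₙ₋₁ = xₙ ^ wₙ for all n ≥ 1}`. -/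
noncomputable def solenoidSubgroup (w : ℕ → ℕ) : Subgroup (ℕ → Circle) where
  carrier := {x | ∀ n, x n = x (n + 1) ^ w n}
  one_mem' := by intro n; simp
  mul_mem' := by intro a b ha hb n; simp only [Pi.mul_apply, ha n, hb n, mul_pow]
  inv_mem' := by intro a ha n; simp only [Pi.inv_apply, ha n, inv_pow]

/-- The solenoid as a topological space, with the subspace topology from the
product topology. -/
noncomputable abbrev Solenoid (w : ℕ → ℕ) : Type :=
  ↥(solenoidSubgroup w)

/-!
The solenoid `Θ` is the closure of a dense line `ℓ : ℝ → Θ`, whose `n`-th coordinate is periodic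
with period `Tₙ = w₀ ⋯ wₙ₋₁`, so `ℓ t` is close to `1` exactly when `t` is close to a multiple of
some `Tₙ` with `n` large. Given `x : X`, lift `t ↦ π x * ℓ t` to a path `γ` from `x`. As `X` is
compact and `π` is injective on an entourage `E₀`, whether `γ (k Tₙ)` is close to `x` is, for large
`n`, a question of membership of `k` in a subgroup `d ℤ` with `d ≠ 0` independent of `n`. Thus `γ`
induces on `ℝ` the same uniformity as `t ↦ ℓ (t / d)`, and completing `ℝ` in two ways yields a
closed embedding `h : Θ → X` with `h (ℓ (t / d)) = γ t`. By density `π (h y) = π x * y ^ d`, which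
is open in `y`; so `h` is open and its range is the component of `x`.
-/

open Filter Function Set Uniformity

section Covering

variable {E B : Type*} [TopologicalSpace E] [TopologicalSpace B] {f : E → B}

theorem t2Space_of_isSeparatedMap [T2Space B] (hf : Continuous f) (hs : IsSeparatedMap f) :
    T2Space E := by
  refine ⟨fun x y hxy ↦ ?_⟩
  by_cases hfxy : f x = f y
  · exact hs x y hfxy hxy
  · exact separated_by_continuous hf hfxy

theorem isProperMap_of_isCoveringMap (hf : IsCoveringMap f) (hfin : ∀ b, Finite (f ⁻¹' {b})) :
    IsProperMap f := by
  refine isProperMap_iff_ultrafilter.mpr ⟨hf.continuous, fun {F b} hFb ↦ ?_⟩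
  obtain ⟨_, U, hbU, hU, -, H, -⟩ := hf b
  obtain ⟨e₀, he₀⟩ := F.nonempty_of_mem (hFb (hU.mem_nhds hbU))
  have : Nonempty (f ⁻¹' {b}) := ⟨(H ⟨e₀, he₀⟩).2⟩
  let t := (hf b).toTrivialization
  have hbt : b ∈ t.baseSet := (hf b).mem_toTrivialization_baseSet
  -- The ultrafilter picks out a single sheet `i`, and converges along the section through it.
  obtain ⟨i, hi⟩ := (F.map fun e ↦ (t e).2).eq_pure_of_finite
  have hF_section : ∀ᶠ e in F, t.toOpenPartialHomeomorph.symm (f e, i) = e := by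
    have hF_sheet : ∀ᶠ e in F, (t e).2 = i := by
      have : {i} ∈ F.map fun e ↦ (t e).2 := hi ▸ Ultrafilter.mem_pure.mpr rfl
      exact this
    filter_upwards [hF_sheet, hFb (t.open_baseSet.mem_nhds hbt)] with e hei he
    rw [← hei, t.symm_apply_mk_proj (t.mem_source.mpr he)]
  have h_section : Tendsto (fun b' ↦ t.toOpenPartialHomeomorph.symm (b', i)) (𝓝 b)
      (𝓝 (t.toOpenPartialHomeomorph.symm (b, i))) :=
    (t.toOpenPartialHomeomorph.symm.continuousAt (t.mem_target.mpr hbt)).tendsto.comp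
      (by fun_prop : Continuous fun b' ↦ (b', i)).continuousAt
  exact ⟨t.toOpenPartialHomeomorph.symm (b, i), t.proj_symm_apply' hbt,
    tendsto_id'.mp ((h_section.comp hFb).congr' hF_section)⟩

theorem isOpenMap_of_isOpenMap_comp {D : Type*} [TopologicalSpace D] {h : D → E}
    (hf : IsLocallyInjective f) (hf' : Continuous f) (hh : Continuous h)
    (hfh : IsOpenMap (f ∘ h)) : IsOpenMap h := by
  refine IsOpenMap.of_nhds_le fun d ↦ ?_
  obtain ⟨V, hV, hdV, hinj⟩ := hf (h d)
  intro s hs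
  filter_upwards [hV.mem_nhds hdV, hf'.continuousAt (hfh.image_mem_nhds
    (inter_mem hs (hh.continuousAt (hV.mem_nhds hdV))))] with e heV ⟨d', ⟨hd's, hd'V⟩, hd'e⟩
  exact hinj hd'V heV hd'e ▸ hd's

theorem connectedComponent_eq_range {D : Type*} [TopologicalSpace D] [PreconnectedSpace D]
    {h : D → E} (hh : Continuous h) (hr : IsClopen (range h)) (d : D) :
    connectedComponent (h d) = range h :=
  Subset.antisymm (hr.connectedComponent_subset (mem_range_self d))
    ((isPreconnected_range hh).subset_connectedComponent (mem_range_self d))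

end Covering

section UniformSpace

variable {X Y Z : Type*} [UniformSpace X] [UniformSpace Y] [UniformSpace Z]

/-- A closed entourage `E₀` of `X` on which the uniformity of `X` is induced by `f : X → Y`. It is
the uniform counterpart of an evenly covered neighbourhood; closedness makes membership in `E₀` a
closed condition along paths. -/
structure IsInducingScale (f : X → Y)
    (E₀ : Set (X × X)) : Prop where
  mem_uniformity : E₀ ∈ 𝓤 X
  isClosed : IsClosed E₀
  comap_inf_le : comap (Prod.map f f) (𝓤 Y) ⊓ 𝓟 E₀ ≤ 𝓤 X

theorem exists_isInducingScale [CompactSpace X] [T2Space Y] [CompactSpace Y]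
    {f : X → Y} (hf : Continuous f) (hinj : IsLocallyInjective f) :
    ∃ E₀, IsInducingScale f E₀ := by
  have hinj_unif : {p : X × X | f p.1 = f p.2 → p.1 = p.2} ∈ 𝓤 X := by
    rw [← nhdsSet_diagonal_eq_uniformity, mem_nhdsSet_iff_forall]
    rintro ⟨x, x'⟩ (rfl : x = x')
    obtain ⟨U, hU, hxU, hinjU⟩ := hinj x
    filter_upwards [(hU.prod hU).mem_nhds ⟨hxU, hxU⟩] with p hp using hinjU hp.1 hp.2
  obtain ⟨E₀, ⟨hE₀, hE₀c⟩, hE₀inj⟩ := uniformity_hasBasis_closed.mem_iff.mp hinj_unif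
  refine ⟨E₀, hE₀, hE₀c, fun E hE ↦ ?_⟩
  -- The pairs of `E₀` far from the diagonal have a compact image missing the diagonal.
  have hK : IsCompact (Prod.map f f '' (E₀ \ interior E)) :=
    (hE₀c.sdiff isOpen_interior).isCompact.image (hf.prodMap hf)
  have hKc : (Prod.map f f '' (E₀ \ interior E))ᶜ ∈ 𝓤 Y := by
    rw [← nhdsSet_diagonal_eq_uniformity, hK.isClosed.isOpen_compl.mem_nhdsSet]
    rintro ⟨y, y'⟩ (rfl : y = y') ⟨p, ⟨hpE₀, hpE⟩, hpy⟩
    have hp : p.1 = p.2 := hE₀inj hpE₀ ((Prod.ext_iff.mp hpy).1.trans (Prod.ext_iff.mp hpy).2.symm)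
    exact hpE (mem_uniformity_of_eq (interior_mem_uniformity hE) hp)
  filter_upwards [inter_mem_inf (preimage_mem_comap hKc) (mem_principal_self E₀)] with p hp
  by_contra hpE
  exact hp.1 ⟨p, ⟨hp.2, fun h ↦ hpE (interior_subset h)⟩, rfl⟩

theorem exists_ne_mem_uniformity_of_totallyBounded {ι : Type*} [Infinite ι] {u : ι → X}
    (hu : TotallyBounded (range u)) {E : Set (X × X)} (hE : E ∈ 𝓤 X) :
    ∃ i j, i ≠ j ∧ (u i, u j) ∈ E := by
  obtain ⟨V, hV, hVsymm, hVE⟩ := comp_symm_mem_uniformity_sets hE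
  obtain ⟨S, hS, huS⟩ := hu V hV
  have hcenter (i : ι) : ∃ c : S, (u i, c.1) ∈ V := by
    obtain ⟨c, hc, hic⟩ := mem_iUnion₂.mp (huS (mem_range_self i))
    exact ⟨⟨c, hc⟩, hic⟩
  choose c hc using hcenter
  have := hS.to_subtype
  obtain ⟨i, j, hij, hcij⟩ := Finite.exists_ne_map_eq_of_infinite c
  exact ⟨i, j, hij, hVE ⟨c i, hc i, hVsymm.symm _ _ (hcij ▸ hc j)⟩⟩

theorem exists_isClosedEmbedding_extend [CompleteSpace Y] [CompleteSpace Z] [T0Space Y]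
    [T0Space Z] {α : Type*} {f : α → Y} {g : α → Z} (hf : DenseRange f)
    (hfg : comap (Prod.map g g) (𝓤 Z) = comap (Prod.map f f) (𝓤 Y)) :
    ∃ h : Y → Z, IsClosedEmbedding h ∧ ∀ a, h (f a) = g a := by
  let _ : UniformSpace α := UniformSpace.comap f inferInstance
  have hfi : IsUniformInducing f := ⟨rfl⟩
  have hgi : IsUniformInducing g := ⟨hfg⟩
  have hfd : IsDenseInducing f := hfi.isDenseInducing hf
  have hext := hfd.isUniformInducing_extend hfi hgi
  exact ⟨hfd.extend g, hext.isUniformEmbedding.isClosedEmbedding,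
    hfd.extend_eq hgi.uniformContinuous.continuous⟩

end UniformSpace

section Lift

variable {T G X : Type*} [AddCommGroup T] [CommGroup G] [UniformSpace G] [IsUniformGroup G]
  [UniformSpace X] {φ : AddChar T G} {π : X → G} {γ : T → X} {E₀ E : Set (X × X)}

theorem IsInducingScale.eventually_mem_of_map_eq_map_mul (hE₀ : IsInducingScale π E₀)
    (hE : E ∈ 𝓤 X) : ∀ᶠ g in 𝓝 (1 : G), ∀ p ∈ E₀, π p.2 = π p.1 * g → p ∈ E := by
  have h := hE₀.comap_inf_le hE
  rw [mem_inf_principal, uniformity_eq_comap_nhds_one, comap_comap, mem_comap] at h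
  obtain ⟨V, hV, hVE⟩ := h
  filter_upwards [hV] with g hg p hp hpg
  exact hVE (show π p.2 / π p.1 ∈ V by rwa [hpg, mul_div_cancel_left]) hp

section Connected

variable [TopologicalSpace T] [ContinuousAdd T] [PreconnectedSpace T]

theorem IsInducingScale.eventually_forall_mem_of_mem (hE₀ : IsInducingScale π E₀)
    (hγ : Continuous γ) (hπγ : ∀ s t, π (γ (s + t)) = π (γ s) * φ t) (hE : E ∈ 𝓤 X) :
    ∀ᶠ t in comap φ (𝓝 1), ∀ s₀, (γ s₀, γ (s₀ + t)) ∈ E₀ → ∀ s, (γ s, γ (s + t)) ∈ E := by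
  have h_near := hE₀.eventually_mem_of_map_eq_map_mul
    (inter_mem hE (interior_mem_uniformity hE₀.mem_uniformity))
  filter_upwards [preimage_mem_comap h_near] with t ht s₀ hs₀
  have h_mem (s : T) (hs : (γ s, γ (s + t)) ∈ E₀) : (γ s, γ (s + t)) ∈ E ∩ interior E₀ :=
    ht _ hs (hπγ s t)
  have hγt : Continuous fun s ↦ (γ s, γ (s + t)) := by fun_prop
  -- For such `t`, membership in `E₀` forces membership in its interior.
  have h_clopen : IsClopen ((fun s ↦ (γ s, γ (s + t))) ⁻¹' E₀) := by
    refine ⟨hE₀.isClosed.preimage hγt, ?_⟩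
    have h_interior : (fun s ↦ (γ s, γ (s + t))) ⁻¹' E₀ =
        (fun s ↦ (γ s, γ (s + t))) ⁻¹' interior E₀ :=
      Subset.antisymm (fun s hs ↦ (h_mem s hs).2) (preimage_mono interior_subset)
    exact h_interior ▸ isOpen_interior.preimage hγt
  have h_univ := h_clopen.eq_univ ⟨s₀, hs₀⟩
  exact fun s ↦ (h_mem s (eq_univ_iff_forall.mp h_univ s)).1

theorem IsInducingScale.eventually_nhds_zero_forall_mem (hE₀ : IsInducingScale π E₀)
    (hφ : Continuous φ) (hγ : Continuous γ) (hπγ : ∀ s t, π (γ (s + t)) = π (γ s) * φ t)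
    (hE : E ∈ 𝓤 X) : ∀ᶠ t in 𝓝 (0 : T), ∀ s, (γ s, γ (s + t)) ∈ E := by
  have hφ₀ : Tendsto φ (𝓝 0) (𝓝 1) := φ.map_zero_eq_one ▸ hφ.tendsto 0
  filter_upwards [hγ.continuousAt.eventually (mem_nhds_left (γ 0) hE₀.mem_uniformity),
    hφ₀.le_comap (hE₀.eventually_forall_mem_of_mem hγ hπγ hE)] with t ht₀ ht
  exact ht 0 (by rwa [zero_add])

theorem IsInducingScale.comap_uniformity_eq_comap_sub (hE₀ : IsInducingScale π E₀)
    (hπ : UniformContinuous π) (hγ : Continuous γ) (hπγ : ∀ s t, π (γ (s + t)) = π (γ s) * φ t) :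
    comap (Prod.map γ γ) (𝓤 X) =
      comap (fun p ↦ p.2 - p.1) (comap φ (𝓝 1) ⊓ 𝓟 {t | (γ 0, γ t) ∈ E₀}) := by
  have h_tendsto : Tendsto (fun p : T × T ↦ p.2 - p.1) (comap (Prod.map γ γ) (𝓤 X))
      (comap φ (𝓝 1)) := by
    have hφ_sub (s t : T) : φ (t - s) = π (γ t) / π (γ s) := by
      rw [eq_div_iff_mul_eq'', ← hπγ, add_sub_cancel]
    have h := Tendsto.comp hπ (tendsto_comap (f := Prod.map γ γ))
    rw [uniformity_eq_comap_nhds_one G, tendsto_comap_iff] at h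
    exact tendsto_comap_iff.mpr (h.congr fun p ↦ (hφ_sub p.1 p.2).symm)
  refine le_antisymm (Tendsto.le_comap (tendsto_inf.mpr ⟨h_tendsto, tendsto_principal.mpr ?_⟩)) ?_
  · filter_upwards [preimage_mem_comap hE₀.mem_uniformity, h_tendsto.eventually
      (hE₀.eventually_forall_mem_of_mem hγ hπγ hE₀.mem_uniformity)] with p hp h_persist
    have := h_persist p.1 (by rwa [add_sub_cancel]) 0
    rwa [zero_add] at this
  · rintro _ ⟨E, hE, hEs⟩
    refine mem_of_superset (preimage_mem_comap (t := {t | ∀ s, (γ s, γ (s + t)) ∈ E})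
      (mem_inf_principal.mpr ?_)) fun p hp ↦ hEs ?_
    · filter_upwards [hE₀.eventually_forall_mem_of_mem hγ hπγ hE] with t ht htE₀
      exact ht 0 (by rwa [zero_add])
    · have := hp p.1
      rwa [add_sub_cancel] at this

end Connected

theorem exists_addSubgroup_mem_iff {R : SetRel X X} (hR : R ∈ 𝓤 X) [R.IsSymm]
    (hRE₀ : R.comp R ⊆ E₀) {H : AddSubgroup T}
    (hH : ∀ t ∈ H, (γ 0, γ t) ∈ E₀ → ∀ s, (γ s, γ (s + t)) ∈ R) :
    ∃ A : AddSubgroup T, ∀ t, t ∈ A ↔ t ∈ H ∧ (γ 0, γ t) ∈ E₀ := by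
  refine ⟨{
    carrier := {t | t ∈ H ∧ (γ 0, γ t) ∈ E₀}
    zero_mem' := ⟨H.zero_mem, hRE₀ ⟨γ 0, refl_mem_uniformity hR, refl_mem_uniformity hR⟩⟩
    add_mem' := fun {a b} ⟨ha, haE₀⟩ ⟨hb, hbE₀⟩ ↦ ⟨H.add_mem ha hb, hRE₀ ⟨γ a, ?_, hH b hb hbE₀ a⟩⟩
    neg_mem' := fun {a} ⟨ha, haE₀⟩ ↦ ⟨H.neg_mem ha,
      hRE₀ ⟨γ (-a), R.symm ?_, refl_mem_uniformity hR⟩⟩ }, fun _ ↦ Iff.rfl⟩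
  · simpa only [zero_add] using hH a ha haE₀ 0
  · simpa only [neg_add_cancel] using hH a ha haE₀ (-a)

end Lift

theorem exists_forall_zsmul_mem_iff_dvd {M : Type*} [AddCommGroup M] (A : AddSubgroup M)
    {T : ℕ → M} (hT : ∀ n, T (n + 1) ∈ AddSubgroup.zmultiples (T n)) {n₀ : ℕ} {j : ℤ}
    (hj : j ≠ 0) (hjA : j • T n₀ ∈ A) :
    ∃ n₁ ≥ n₀, ∃ d : ℕ, d ≠ 0 ∧ ∀ n ≥ n₁, ∀ k : ℤ, k • T n ∈ A ↔ (d : ℤ) ∣ k := by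
  let I (n : ℕ) : Submodule ℤ ℤ := AddSubgroup.toIntSubmodule (A.comap (zmultiplesHom M (T n)))
  have hI : Monotone I := monotone_nat_of_le_succ fun n k hk ↦ by
    obtain ⟨c, hc : c • T n = T (n + 1)⟩ := hT n
    change k • T (n + 1) ∈ A
    rw [← hc, smul_comm]
    exact A.zsmul_mem hk c
  obtain ⟨m, hm⟩ := monotone_stabilizes_iff_noetherian.mpr inferInstance ⟨I, hI⟩
  obtain ⟨g, hg⟩ := (IsPrincipalIdealRing.principal (I (max n₀ m))).principal
  have h_mem (n : ℕ) (hn : max n₀ m ≤ n) (k : ℤ) : k • T n ∈ A ↔ (g.natAbs : ℤ) ∣ k := by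
    have hIn : I n = I (max n₀ m) :=
      (hm n ((le_max_right _ _).trans hn)).symm.trans (hm _ (le_max_right _ _))
    rw [Int.natAbs_dvd, ← Ideal.mem_span_singleton]
    exact SetLike.ext_iff.mp (hIn.trans hg) k
  refine ⟨max n₀ m, le_max_left _ _, g.natAbs, fun hg₀ ↦ hj ?_, h_mem⟩
  have hj_mem := (h_mem _ le_rfl j).mp (hI (le_max_left n₀ m) hjA)
  rwa [hg₀, Nat.cast_zero, zero_dvd_iff] at hj_mem

theorem eventually_comap_toCircle_iff {T : ℝ} (hT : T ≠ 0) {p : ℝ → Prop} :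
    (∀ᶠ t in comap (fun t : ℝ ↦ AddCircle.toCircle (t : AddCircle T)) (𝓝 1), p t) ↔
      ∀ᶠ ε in 𝓝 (0 : ℝ), ∀ k : ℤ, p (k • T + ε) := by
  have h_comap : comap (fun t : ℝ ↦ AddCircle.toCircle (t : AddCircle T)) (𝓝 1) =
      comap ((↑) : ℝ → AddCircle T) (map (↑) (𝓝 (0 : ℝ))) := by
    rw [← QuotientAddGroup.nhds_eq, QuotientAddGroup.mk_zero,
      (AddCircle.homeomorphCircle hT).isInducing.nhds_eq_comap, comap_comap,
      AddCircle.homeomorphCircle_apply, AddCircle.toCircle_zero]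
    congr 1 with t
    rw [comp_apply, AddCircle.homeomorphCircle_apply]
  rw [h_comap, eventually_comap, eventually_map]
  refine eventually_congr (.of_forall fun ε ↦ ⟨fun h k ↦ h _ ?_, fun h t ht ↦ ?_⟩)
  · rw [AddCircle.coe_add, AddCircle.coe_eq_zero_iff T |>.mpr ⟨k, rfl⟩, zero_add]
  · obtain ⟨k, hk⟩ := AddCircle.coe_eq_zero_iff T |>.mp
      (show ((t - ε : ℝ) : AddCircle T) = 0 by rw [AddCircle.coe_sub, ht, sub_self])
    simpa only [hk, sub_add_cancel] using h k

namespace Solenoid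

variable {w : ℕ → ℕ}

instance : CompactSpace (Solenoid w) := by
  have h_closed : IsClosed {x : ℕ → Circle | ∀ n, x n = x (n + 1) ^ w n} := by
    rw [ofPred_forall]
    exact isClosed_iInter fun n ↦ isClosed_eq (by fun_prop) (by fun_prop)
  exact isCompact_iff_compactSpace.mp h_closed.isCompact

theorem antitone_comap_nhds (y : Solenoid w) :
    Antitone fun n ↦ comap (fun z : Solenoid w ↦ z.1 n) (𝓝 (y.1 n)) := by
  refine antitone_nat_of_succ_le fun n ↦ Tendsto.le_comap ?_
  simp only [show ∀ z : Solenoid w, z.1 n = z.1 (n + 1) ^ w n from fun z ↦ z.2 n]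
  exact tendsto_comap.pow (w n)

theorem nhds_eq_iInf_comap (y : Solenoid w) :
    𝓝 y = ⨅ n, comap (fun z : Solenoid w ↦ z.1 n) (𝓝 (y.1 n)) := by
  rw [nhds_subtype_eq_comap, nhds_pi, Filter.pi, comap_iInf]
  simp only [comap_comap]
  rfl

/-- The period of the `n`-th coordinate of `line w`; its zeroth coordinate has period `1`. -/
noncomputable def period (w : ℕ → ℕ) (n : ℕ) : ℝ := ∏ i ∈ Finset.range n, (w i : ℝ)

theorem period_succ (n : ℕ) : period w (n + 1) = w n • period w n := by
  rw [period, Finset.prod_range_succ, nsmul_eq_mul, mul_comm, period]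

theorem period_mem_zmultiples {m n : ℕ} (hmn : m ≤ n) :
    period w n ∈ AddSubgroup.zmultiples (period w m) := by
  induction n, hmn using Nat.le_induction with
  | base => exact AddSubgroup.mem_zmultiples _
  | succ n _ ih => exact period_succ (w := w) n ▸ nsmul_mem ih (w n)

variable (w) in
/-- The path `γ` has degree `d` over `line w`: among the multiples of a sufficiently late period,
those at which `γ` is `E₀`-close to `γ 0` are the multiples of `d` times that period. -/
def IsReturnDegree {X : Type*} (E₀ : Set (X × X)) (γ : ℝ → X) (d : ℕ) : Prop :=
  ∃ n₀, ∀ n ≥ n₀, ∀ k : ℤ, (γ 0, γ (k • period w n)) ∈ E₀ ↔ (d : ℤ) ∣ k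

variable [∀ n, NeZero (w n)]

theorem period_ne_zero (n : ℕ) : period w n ≠ 0 :=
  Finset.prod_ne_zero_iff.mpr fun i _ ↦ Nat.cast_ne_zero.mpr (NeZero.ne (w i))

variable (w) in
/-- The dense one-parameter subgroup of the solenoid. -/
noncomputable def line : AddChar ℝ (Solenoid w) where
  toFun t := ⟨fun n ↦ AddCircle.toCircle (t : AddCircle (period w n)), fun n ↦ by
    have hT := period_ne_zero (w := w) n
    have hw : (w n : ℝ) ≠ 0 := Nat.cast_ne_zero.mpr (NeZero.ne _)
    simp only [AddCircle.toCircle_apply_mk, ← Circle.exp_nsmul, period_succ, nsmul_eq_mul]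
    congr 1
    field_simp⟩
  map_zero_eq_one' := by ext; simp
  map_add_eq_mul' s t := by ext; simp [AddCircle.toCircle_add]

theorem line_apply (t : ℝ) (n : ℕ) :
    (line w t).1 n = AddCircle.toCircle (t : AddCircle (period w n)) := rfl

theorem continuous_line : Continuous (line w) :=
  (continuous_pi fun _ ↦ AddCircle.continuous_toCircle.comp
    (AddCircle.continuous_mk' _)).subtype_mk _

theorem denseRange_line : DenseRange (line w) := by
  refine fun y ↦ mem_closure_iff_nhds.mpr fun U hU ↦ ?_
  rw [nhds_eq_iInf_comap, mem_iInf_of_directed (antitone_comap_nhds y).directed_ge] at hU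
  obtain ⟨n, V, hV, hVU⟩ := hU
  have h_surj := (AddCircle.homeomorphCircle (period_ne_zero (w := w) n)).surjective
  obtain ⟨t, ht⟩ := (h_surj.comp QuotientAddGroup.mk_surjective) (y.1 n)
  rw [comp_apply, AddCircle.homeomorphCircle_apply] at ht
  refine ⟨line w t, hVU ?_, mem_range_self t⟩
  rw [mem_preimage, line_apply, ht]
  exact mem_of_mem_nhds hV

instance : ConnectedSpace (Solenoid w) where
  isPreconnected_univ := by
    rw [← denseRange_line.closure_range]
    exact (isPreconnected_range continuous_line).closure
  toNonempty := ⟨1⟩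

theorem eventually_comap_line_iff {p : ℝ → Prop} (n₀ : ℕ) :
    (∀ᶠ t in comap (line w) (𝓝 1), p t) ↔
      ∃ n ≥ n₀, ∀ᶠ ε in 𝓝 (0 : ℝ), ∀ k : ℤ, p (k • period w n + ε) := by
  have h_anti : Antitone fun n ↦ comap (fun t ↦ (line w t).1 n) (𝓝 1) := fun _ _ hmn ↦ by
    simpa only [comap_comap, comp_def] using!
      comap_mono (m := line w) (antitone_comap_nhds (1 : Solenoid w) hmn)
  have h_iInf : comap (line w) (𝓝 1) = ⨅ n, comap (fun t ↦ (line w t).1 n) (𝓝 1) := by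
    rw [nhds_eq_iInf_comap, comap_iInf]
    simp only [comap_comap]
    rfl
  simp only [h_iInf, ← eventually_comap_toCircle_iff (period_ne_zero _), ← line_apply]
  change {t | p t} ∈ _ ↔ _
  rw [mem_iInf_of_directed h_anti.directed_ge]
  exact ⟨fun ⟨n, hn⟩ ↦ ⟨max n n₀, le_max_right _ _, h_anti (le_max_left _ _) hn⟩,
    fun ⟨n, _, hn⟩ ↦ ⟨n, hn⟩⟩

theorem isOpenMap_pow {d : ℕ} (hd : d ≠ 0) : IsOpenMap (powMonoidHom d : Solenoid w →* _) := by
  have h_cont : Continuous (powMonoidHom d : Solenoid w →* _) := continuous_pow d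
  have h_line : range (line w) ⊆ range (powMonoidHom d : Solenoid w →* _) := by
    rintro _ ⟨t, rfl⟩
    refine ⟨line w (t / d), ?_⟩
    rw [powMonoidHom_apply, ← AddChar.map_nsmul_eq_pow, nsmul_eq_mul,
      mul_div_cancel₀ t (Nat.cast_ne_zero.mpr hd)]
  refine MonoidHom.isOpenMap_of_sigmaCompact _ (range_eq_univ.mp ?_) h_cont
  rw [← (isCompact_range h_cont).isClosed.closure_eq]
  exact (denseRange_line.mono h_line).closure_eq

theorem exists_lift_line {X : Type*} [TopologicalSpace X] {π : X → Solenoid w}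
    (hπ : IsCoveringMap π) (x : X) :
    ∃ γ : ℝ → X, Continuous γ ∧ γ 0 = x ∧ ∀ s t, π (γ (s + t)) = π (γ s) * line w t := by
  obtain ⟨γ, ⟨hγ₀, hπγ⟩, -⟩ := hπ.existsUnique_continuousMap_lifts
    ⟨fun t ↦ π x * line w t, continuous_const.mul continuous_line⟩ 0 x
    (by simp only [ContinuousMap.coe_mk, AddChar.map_zero_eq_one, mul_one])
  have h_apply (t : ℝ) : π (γ t) = π x * line w t := congr_fun hπγ t
  refine ⟨γ, γ.continuous, hγ₀, fun s t ↦ ?_⟩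
  rw [h_apply, h_apply, AddChar.map_add_eq_mul, mul_assoc]

section Lift

variable {X : Type*} [UniformSpace X] {π : X → Solenoid w} {γ : ℝ → X} {E₀ : Set (X × X)}

theorem exists_isReturnDegree [CompactSpace X] (hE₀ : IsInducingScale π E₀) (hγ : Continuous γ)
    (hπγ : ∀ s t, π (γ (s + t)) = π (γ s) * line w t) :
    ∃ d, d ≠ 0 ∧ IsReturnDegree w E₀ γ d := by
  obtain ⟨R, hR, hRsymm, hRE₀⟩ := comp_symm_mem_uniformity_sets hE₀.mem_uniformity
  obtain ⟨m, -, hm⟩ := (eventually_comap_line_iff 0).mp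
    (hE₀.eventually_forall_mem_of_mem hγ hπγ hR)
  have h_persist : ∀ t ∈ AddSubgroup.zmultiples (period w m), ∀ s₀, (γ s₀, γ (s₀ + t)) ∈ E₀ →
      ∀ s, (γ s, γ (s + t)) ∈ R := by
    rintro _ ⟨k, rfl⟩
    simpa only [add_zero] using hm.self_of_nhds k
  obtain ⟨A, hA⟩ := exists_addSubgroup_mem_iff hR hRE₀
    fun t ht htE₀ ↦ h_persist t ht 0 (by rwa [zero_add])
  obtain ⟨i, j, hij, hijE₀⟩ := exists_ne_mem_uniformity_of_totallyBounded
    (u := fun k : ℤ ↦ γ (k • period w m))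
    (isCompact_univ.totallyBounded.subset (subset_univ _)) hE₀.mem_uniformity
  have h_return : (j - i) • period w m ∈ A := by
    have h_mul : (j - i) • period w m ∈ AddSubgroup.zmultiples (period w m) := ⟨j - i, rfl⟩
    have := h_persist _ h_mul (i • period w m) (by rwa [← add_smul, add_sub_cancel]) 0
    rw [zero_add] at this
    exact (hA _).mpr ⟨h_mul, hRE₀ (subset_comp_self_of_mem_uniformity hR this)⟩
  obtain ⟨n₀, hn₀, d, hd, hdA⟩ := exists_forall_zsmul_mem_iff_dvd A
    (fun n ↦ period_mem_zmultiples n.le_succ) (sub_ne_zero.mpr hij.symm) h_return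
  refine ⟨d, hd, n₀, fun n hn k ↦ ?_⟩
  rw [← hdA n hn, hA, and_iff_right (zsmul_mem (period_mem_zmultiples (hn₀.trans hn)) k)]

variable {d : ℕ}

theorem IsReturnDegree.eventually_mem (h_deg : IsReturnDegree w E₀ γ d)
    (hE₀ : IsInducingScale π E₀) (hγ : Continuous γ)
    (hπγ : ∀ s t, π (γ (s + t)) = π (γ s) * line w t) :
    ∀ᶠ t in comap (line w) (𝓝 1), (γ 0, γ (d * t)) ∈ E₀ := by
  obtain ⟨n₀, h_deg⟩ := h_deg
  obtain ⟨R, hR, -, hRE₀⟩ := comp_symm_mem_uniformity_sets hE₀.mem_uniformity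
  obtain ⟨n, hn, h_persist⟩ := (eventually_comap_line_iff n₀).mp
    (hE₀.eventually_forall_mem_of_mem hγ hπγ hR)
  have h_small : ∀ᶠ ε in 𝓝 (0 : ℝ), ∀ s, (γ s, γ (s + d * ε)) ∈ R := by
    have h_mul : Tendsto (fun ε : ℝ ↦ d * ε) (𝓝 0) (𝓝 0) := by
      simpa only [mul_zero] using (continuous_const_mul (d : ℝ)).tendsto 0
    exact h_mul.eventually (hE₀.eventually_nhds_zero_forall_mem continuous_line hγ hπγ hR)
  refine (eventually_comap_line_iff n₀).mpr ⟨n, hn, ?_⟩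
  filter_upwards [h_small] with ε hε k
  have h_mult : (γ 0, γ ((d * k) • period w n)) ∈ R := by
    have h_all := h_persist.self_of_nhds (d * k) 0
    simp only [add_zero, zero_add] at h_all
    simpa only [zero_add] using h_all ((h_deg n hn _).mpr (dvd_mul_right _ _)) 0
  refine hRE₀ ⟨_, h_mult, ?_⟩
  convert hε ((d * k) • period w n) using 3
  simp only [zsmul_eq_mul]
  push_cast
  ring

theorem IsReturnDegree.tendsto_div (h_deg : IsReturnDegree w E₀ γ d)
    (hE₀ : IsInducingScale π E₀) (hγ : Continuous γ)
    (hπγ : ∀ s t, π (γ (s + t)) = π (γ s) * line w t) (hd : d ≠ 0) :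
    Tendsto (fun t : ℝ ↦ t / d) (comap (line w) (𝓝 1) ⊓ 𝓟 {t | (γ 0, γ t) ∈ E₀})
      (comap (line w) (𝓝 1)) := by
  have hd' : (d : ℝ) ≠ 0 := Nat.cast_ne_zero.mpr hd
  obtain ⟨n₀, h_deg⟩ := h_deg
  obtain ⟨R, hR, -, hRE₀⟩ := comp_symm_mem_uniformity_sets hE₀.mem_uniformity
  refine tendsto_iff_forall_eventually_mem.mpr fun p hp ↦ ?_
  obtain ⟨n, hn, h_near⟩ := (eventually_comap_line_iff n₀).mp
    ((eventually_mem_set.mpr hp).and (hE₀.eventually_forall_mem_of_mem hγ hπγ hR))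
  have h_small : ∀ᶠ ε in 𝓝 (0 : ℝ), ∀ s, (γ s, γ (s - ε)) ∈ R := by
    have h_neg : Tendsto (fun ε : ℝ ↦ -ε) (𝓝 0) (𝓝 0) := by
      simpa only [neg_zero] using (continuous_neg (G := ℝ)).tendsto 0
    exact h_neg.eventually (hE₀.eventually_nhds_zero_forall_mem continuous_line hγ hπγ hR)
  have h_div : Tendsto (fun ε : ℝ ↦ ε / d) (𝓝 0) (𝓝 0) := by
    simpa only [id, zero_div] using (continuous_id.div_const (d : ℝ)).tendsto 0
  refine mem_inf_principal.mpr ((eventually_comap_line_iff n₀).mpr ⟨n, hn, ?_⟩)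
  filter_upwards [h_near, h_div.eventually h_near, h_small] with ε hε hεd hε_small k hk
  have h_mult : (γ 0, γ (k • period w n)) ∈ E₀ := by
    have h_to := (hε k).2 0 (by rwa [zero_add]) 0
    rw [zero_add] at h_to
    have h_back := hε_small (k • period w n + ε)
    rw [add_sub_cancel_right] at h_back
    exact hRE₀ ⟨_, h_to, h_back⟩
  obtain ⟨l, rfl⟩ := (h_deg n hn k).mp h_mult
  convert (hεd l).1 using 1
  simp only [zsmul_eq_mul]
  push_cast
  field_simp

theorem IsReturnDegree.comap_line_inf_principal_eq (h_deg : IsReturnDegree w E₀ γ d)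
    (hE₀ : IsInducingScale π E₀) (hγ : Continuous γ)
    (hπγ : ∀ s t, π (γ (s + t)) = π (γ s) * line w t) (hd : d ≠ 0) :
    comap (line w) (𝓝 1) ⊓ 𝓟 {t | (γ 0, γ t) ∈ E₀} =
      comap (fun t ↦ line w (t / d)) (𝓝 1) := by
  have hd' : (d : ℝ) ≠ 0 := Nat.cast_ne_zero.mpr hd
  refine le_antisymm ?_ (le_inf (Tendsto.le_comap ?_) (le_principal_iff.mpr ?_))
  · exact (tendsto_comap.comp (h_deg.tendsto_div hE₀ hγ hπγ hd)).le_comap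
  · have h_pow := (tendsto_comap (f := fun t : ℝ ↦ line w (t / d)) (x := 𝓝 1)).pow d
    simpa only [one_pow, ← AddChar.map_nsmul_eq_pow, nsmul_eq_mul, mul_div_cancel₀ _ hd']
      using h_pow
  · have h_mem := h_deg.eventually_mem hE₀ hγ hπγ
    have := preimage_mem_comap (m := fun t : ℝ ↦ t / d) h_mem
    rw [comap_comap] at this
    filter_upwards [this] with t ht
    rwa [mem_preimage, mem_ofPred_eq, mul_div_cancel₀ t hd'] at ht

theorem exists_isClosedEmbedding_of_lift [CompactSpace X] [T2Space X] (hπ : Continuous π)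
    (hinj : IsLocallyInjective π) (hγ : Continuous γ)
    (hπγ : ∀ s t, π (γ (s + t)) = π (γ s) * line w t) :
    ∃ h : Solenoid w → X, IsClosedEmbedding h ∧
      ∃ d : ℕ, d ≠ 0 ∧ ∀ t : ℝ, h (line w (t / d)) = γ t := by
  obtain ⟨E₀, hE₀⟩ := exists_isInducingScale hπ hinj
  obtain ⟨d, hd, h_deg⟩ := exists_isReturnDegree hE₀ hγ hπγ
  have h_dense : DenseRange fun t : ℝ ↦ line w (t / d) :=
    denseRange_line.comp (Equiv.divRight₀ (d : ℝ) (Nat.cast_ne_zero.mpr hd)).surjective.denseRange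
      continuous_line
  have h_unif : comap (Prod.map γ γ) (𝓤 X) =
      comap (Prod.map (fun t : ℝ ↦ line w (t / d)) fun t ↦ line w (t / d)) (𝓤 (Solenoid w)) := by
    rw [hE₀.comap_uniformity_eq_comap_sub (CompactSpace.uniformContinuous_of_continuous hπ) hγ hπγ,
      h_deg.comap_line_inf_principal_eq hE₀ hγ hπγ hd, uniformity_eq_comap_nhds_one (Solenoid w),
      comap_comap, comap_comap]
    congr 1 with p : 1
    simp only [comp_apply, Prod.map_fst, Prod.map_snd, sub_div, AddChar.map_sub_eq_div]
  obtain ⟨h, hh, h_line⟩ := exists_isClosedEmbedding_extend h_dense h_unif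
  exact ⟨h, hh, d, hd, h_line⟩

theorem exists_isClosedEmbedding_isOpenMap [CompactSpace X] [T2Space X] (hπ : Continuous π)
    (hinj : IsLocallyInjective π) (hγ : Continuous γ)
    (hπγ : ∀ s t, π (γ (s + t)) = π (γ s) * line w t) :
    ∃ h : Solenoid w → X, IsClosedEmbedding h ∧ IsOpenMap h ∧ h 1 = γ 0 := by
  obtain ⟨h, hh, d, hd, h_line⟩ := exists_isClosedEmbedding_of_lift hπ hinj hγ hπγ
  have h_pow : π ∘ h = fun y ↦ π (γ 0) * y ^ d := by
    refine denseRange_line.equalizer (hπ.comp hh.continuous) (by fun_prop) (funext fun t ↦ ?_)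
    have hd' : (d : ℝ) ≠ 0 := Nat.cast_ne_zero.mpr hd
    have h_lift := hπγ 0 (d * t)
    rwa [zero_add, ← h_line, mul_div_cancel_left₀ t hd', ← nsmul_eq_mul,
      AddChar.map_nsmul_eq_pow] at h_lift
  have h_open : IsOpenMap (π ∘ h) :=
    h_pow ▸ (isOpenMap_mul_left (π (γ 0))).comp (isOpenMap_pow hd)
  refine ⟨h, hh, isOpenMap_of_isOpenMap_comp hinj hπ hh.continuous h_open, ?_⟩
  simpa only [zero_div, AddChar.map_zero_eq_one] using h_line 0

end Lift

end Solenoid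

theorem component_of_covering_of_solenoid_homeomorphic_general (w : ℕ → ℕ) [∀ n, NeZero (w n)]
    {X : Type*} [TopologicalSpace X] {π : X → Solenoid w} (hπ : IsCoveringMap π)
    (hfin : ∀ y, Finite (π ⁻¹' {y})) (x : X) :
    Nonempty (connectedComponent x ≃ₜ Solenoid w) := by
  have : CompactSpace X :=
    ⟨(isProperMap_of_isCoveringMap hπ hfin).isCompact_preimage isCompact_univ⟩
  have : T2Space X := t2Space_of_isSeparatedMap hπ.continuous hπ.isSeparatedMap
  let _ : UniformSpace X := uniformSpaceOfCompactR1
  obtain ⟨γ, hγ, rfl, hπγ⟩ := Solenoid.exists_lift_line hπ x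
  obtain ⟨h, h_closed, h_open, h_one⟩ := Solenoid.exists_isClosedEmbedding_isOpenMap
    hπ.continuous hπ.isLocalHomeomorph.isLocallyInjective hγ hπγ
  have h_range : connectedComponent (γ 0) = range h := h_one ▸
    connectedComponent_eq_range h_closed.continuous ⟨h_closed.isClosed_range, h_open.isOpen_range⟩ 1
  exact ⟨(Homeomorph.setCongr h_range).trans h_closed.isEmbedding.toHomeomorph.symm⟩

/-- **Every connected component of a finite-fold covering space of a solenoid is
homeomorphic to that solenoid.** -/
theorem component_of_covering_of_solenoid_homeomorphic
    (w : ℕ → ℕ) (hw : ∀ n, 1 < w n)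
    (X : Type*) [TopologicalSpace X] (π : X → Solenoid w)
    (hπ : IsCoveringMap π) (r : ℕ) (hr : 0 < r)
    (hfib : ∀ y : Solenoid w, Nat.card (π ⁻¹' {y}) = r) :
    ∀ x : X, Nonempty (↥(connectedComponent x) ≃ₜ Solenoid w) := by
  have (n : ℕ) : NeZero (w n) := ⟨(hw n).ne_bot⟩
  exact component_of_covering_of_solenoid_homeomorphic_general w hπ
    fun y ↦ Nat.finite_of_card_ne_zero (hfib y ▸ hr.ne')
end
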